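/- arXiv:1901.10790 — 3 statements merged into one kernel-verified Lean document; each statement's English description precedes it below -/
import Mathlib

section
/- Let 0 < λ ≤ 1 and 0 < α ≤ 1, and let N(λ,α,T) denote the number of nontrivial zeros ρ = β + iγ of L(λ,α,·) with 0 < γ < T, counted with multiplicity. Then, as T → ∞, N(λ,α,T) = (T/(2π))·log(T/(2πeαλ)) + O(log T). -/
/-- The Dirichlet series of the Lerch zeta-function, convergent for `1 < re s`. -/
noncomputable def lerchSeries (lam alp : ℝ) (s : ℂ) : ℂ :=
  ∑' m : ℕ, Complex.exp (2 * Real.pi * Complex.I * lam * m) / ((m : ℂ) + alp) ^ s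

/-- `F` is the analytic continuation of the Lerch zeta-function with parameters `lam`, `alp`:
it is complex differentiable away from `1` and agrees with the Dirichlet series on `1 < re s`. -/
def IsLerch (lam alp : ℝ) (F : ℂ → ℂ) : Prop :=
  (∀ s : ℂ, s ≠ 1 → DifferentiableAt ℂ F s) ∧
  ∀ s : ℂ, 1 < s.re → F s = lerchSeries lam alp s

open scoped Classical

/-- The multiplicity (order of vanishing) of `F` at `z` (junk value `0` if `F` is not
analytic at `z` or vanishes to infinite order). -/
noncomputable def zeroOrder (F : ℂ → ℂ) (z : ℂ) : ℕ :=
  if h : AnalyticAt ℂ F z then (analyticOrderAt F z).toNat else 0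

section LZ
open Complex Set Filter Topology

/-- factor out finitely many zeros -/
theorem LZ_factor (U : Set ℂ) (hU : IsOpen U) (f : ℂ → ℂ) (hf : DifferentiableOn ℂ f U)
    (S : Finset ℂ) (hS : ∀ ρ ∈ S, ρ ∈ U ∧ analyticOrderAt f ρ ≠ ⊤) :
    ∃ g : ℂ → ℂ, DifferentiableOn ℂ g U ∧
      (∀ z ∈ U, f z = (∏ ρ ∈ S, (z - ρ) ^ (analyticOrderNatAt f ρ)) * g z) ∧
      ∀ ρ ∈ S, g ρ ≠ 0 := by
  classical
  induction S using Finset.induction_on with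
  | empty => exact ⟨f, hf, by simp, by simp⟩
  | insert a S ha ih =>
    obtain ⟨g, hg, hfg, hgS⟩ := ih (fun ρ hρ => hS ρ (Finset.mem_insert_of_mem hρ))
    obtain ⟨haU, hatop⟩ := hS a (Finset.mem_insert_self _ _)
    have hga : AnalyticAt ℂ g a := hg.analyticAt (hU.mem_nhds haU)
    set P : ℂ → ℂ := fun z => ∏ ρ ∈ S, (z - ρ) ^ (analyticOrderNatAt f ρ) with hP
    have hPd : Differentiable ℂ P := by fun_prop
    have hPa : AnalyticAt ℂ P a := hPd.analyticAt a
    have hPne : P a ≠ 0 := by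
      simp only [hP]
      rw [Finset.prod_ne_zero_iff]
      intro ρ hρ
      apply pow_ne_zero
      rw [sub_ne_zero]
      rintro rfl
      exact ha hρ
    have hev : f =ᶠ[𝓝 a] P * g := by
      filter_upwards [hU.mem_nhds haU] with z hz
      exact hfg z hz
    have hord : analyticOrderAt f a = analyticOrderAt g a := by
      rw [analyticOrderAt_congr hev, analyticOrderAt_mul hPa hga,
        hPa.analyticOrderAt_eq_zero.mpr hPne, zero_add]
    have hordN : analyticOrderNatAt f a = analyticOrderNatAt g a := by
      simp [analyticOrderNatAt, hord]
    rw [hord] at hatop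
    obtain ⟨g1, hg1, hg1ne, hg1ev⟩ := hga.analyticOrderAt_ne_top.mp hatop
    set n := analyticOrderNatAt g a with hn
    let G : ℂ → ℂ := fun z => if z = a then g1 a else g z / (z - a) ^ n
    have hGev : G =ᶠ[𝓝 a] g1 := by
      filter_upwards [hg1ev] with z hz
      by_cases h : z = a
      · simp [G, h]
      · have : z - a ≠ 0 := sub_ne_zero.mpr h
        simp only [G, if_neg h, hz, smul_eq_mul]
        field_simp
    refine ⟨G, ?_, ?_, ?_⟩
    · intro z hz
      by_cases h : z = a
      · subst h
        exact (hg1.differentiableAt.congr_of_eventuallyEq hGev).differentiableWithinAt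
      · have h2 : G =ᶠ[𝓝 z] fun z => g z / (z - a) ^ n := by
          filter_upwards [isOpen_ne.mem_nhds h] with w hw
          simp only [G, if_neg hw]
        have : (z - a) ^ n ≠ 0 := pow_ne_zero _ (sub_ne_zero.mpr h)
        apply DifferentiableAt.differentiableWithinAt
        apply DifferentiableAt.congr_of_eventuallyEq _ h2
        have := hg.differentiableAt (hU.mem_nhds hz)
        fun_prop (disch := assumption)
    · intro z hz
      rw [Finset.prod_insert ha, hordN, hfg z hz]
      by_cases h : z = a
      · subst h
        have h3 := hg1ev.self_of_nhds
        simp only [G, if_true, smul_eq_mul] at h3 ⊢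
        rw [h3]; ring
      · have : z - a ≠ 0 := sub_ne_zero.mpr h
        simp only [G, if_neg h]
        field_simp
    · intro ρ hρ
      rcases Finset.mem_insert.mp hρ with rfl | hρ2
      · simpa [G] using hg1ne
      · have h : ρ ≠ a := by rintro rfl; exact ha hρ2
        simp only [G, if_neg h]
        exact div_ne_zero (hgS ρ hρ2) (pow_ne_zero _ (sub_ne_zero.mpr h))

/-- log derivative of factored function -/
theorem LZ_logDeriv_factor (f g : ℂ → ℂ) (S : Finset ℂ) (n : ℂ → ℕ) (z : ℂ)
    (hfg : ∀ᶠ w in 𝓝 z, f w = (∏ ρ ∈ S, (w - ρ) ^ (n ρ)) * g w)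
    (hz : z ∉ S) (hg : DifferentiableAt ℂ g z) (hgz : g z ≠ 0) :
    logDeriv f z = (∑ ρ ∈ S, (n ρ : ℂ) * (z - ρ)⁻¹) + logDeriv g z := by
  have h1 : ∀ ρ ∈ S, (z - ρ) ^ (n ρ) ≠ 0 := by
    intro ρ hρ
    apply pow_ne_zero
    rw [sub_ne_zero]
    rintro rfl
    exact hz hρ
  have h0 : logDeriv f z = logDeriv (fun w => (∏ ρ ∈ S, (w - ρ) ^ (n ρ)) * g w) z := by
    simp only [logDeriv_apply]
    rw [Filter.EventuallyEq.deriv_eq hfg, hfg.self_of_nhds]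
  rw [h0, logDeriv_mul (f := fun w => ∏ ρ ∈ S, (w - ρ) ^ (n ρ)) (g := g) z
    (Finset.prod_ne_zero_iff.mpr h1) hgz (by fun_prop) hg,
    logDeriv_prod (s := S) (f := fun ρ w => (w - ρ) ^ (n ρ)) (x := z) h1 (by fun_prop)]
  congr 1
  apply Finset.sum_congr rfl
  intro ρ hρ
  rw [logDeriv_fun_pow (by fun_prop)]
  simp [logDeriv_apply]

/-- integral over the boundary of a rectangle -/
noncomputable def LZrect (f : ℂ → ℂ) (a b c d : ℝ) : ℂ :=
  (∫ x : ℝ in a..b, f (x + c * I)) - (∫ x : ℝ in a..b, f (x + d * I)) +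
    I * (∫ y : ℝ in c..d, f (b + y * I)) - I * (∫ y : ℝ in c..d, f (a + y * I))

/-- continuity on the boundary -/
def LZbd (f : ℂ → ℂ) (a b c d : ℝ) : Prop :=
  ContinuousOn (fun x : ℝ => f (x + c * I)) (uIcc a b) ∧
  ContinuousOn (fun x : ℝ => f (x + d * I)) (uIcc a b) ∧
  ContinuousOn (fun y : ℝ => f (b + y * I)) (uIcc c d) ∧
  ContinuousOn (fun y : ℝ => f (a + y * I)) (uIcc c d)

theorem LZrect_add {f g : ℂ → ℂ} {a b c d : ℝ} (hf : LZbd f a b c d) (hg : LZbd g a b c d) :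
    LZrect (fun z => f z + g z) a b c d = LZrect f a b c d + LZrect g a b c d := by
  unfold LZrect
  rw [intervalIntegral.integral_add hf.1.intervalIntegrable hg.1.intervalIntegrable,
    intervalIntegral.integral_add hf.2.1.intervalIntegrable hg.2.1.intervalIntegrable,
    intervalIntegral.integral_add hf.2.2.1.intervalIntegrable hg.2.2.1.intervalIntegrable,
    intervalIntegral.integral_add hf.2.2.2.intervalIntegrable hg.2.2.2.intervalIntegrable]
  ring

theorem LZrect_const_mul {f : ℂ → ℂ} {a b c d : ℝ} (k : ℂ) :
    LZrect (fun z => k * f z) a b c d = k * LZrect f a b c d := by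
  unfold LZrect
  simp only [intervalIntegral.integral_const_mul]
  ring

theorem LZbd_sum {a b c d : ℝ} (S : Finset ℂ) (f : ℂ → ℂ → ℂ)
    (hf : ∀ ρ ∈ S, LZbd (f ρ) a b c d) : LZbd (fun z => ∑ ρ ∈ S, f ρ z) a b c d := by
  refine ⟨?_, ?_, ?_, ?_⟩
  · exact continuousOn_finsetSum S fun ρ hρ => (hf ρ hρ).1
  · exact continuousOn_finsetSum S fun ρ hρ => (hf ρ hρ).2.1
  · exact continuousOn_finsetSum S fun ρ hρ => (hf ρ hρ).2.2.1
  · exact continuousOn_finsetSum S fun ρ hρ => (hf ρ hρ).2.2.2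

theorem LZrect_sum {a b c d : ℝ} (S : Finset ℂ) (f : ℂ → ℂ → ℂ)
    (hf : ∀ ρ ∈ S, LZbd (f ρ) a b c d) :
    LZrect (fun z => ∑ ρ ∈ S, f ρ z) a b c d = ∑ ρ ∈ S, LZrect (f ρ) a b c d := by
  classical
  induction S using Finset.induction_on with
  | empty => simp [LZrect]
  | insert ρ S hρ ih =>
    simp only [Finset.sum_insert hρ]
    rw [LZrect_add (hf ρ (Finset.mem_insert_self _ _))
      (LZbd_sum S f fun r hr => hf r (Finset.mem_insert_of_mem hr)),
      ih fun r hr => hf r (Finset.mem_insert_of_mem hr)]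

/-- FTC along horizontal lines -/
theorem LZ_ftc_h (G g : ℂ → ℂ) (a b y : ℝ)
    (h : ∀ x ∈ uIcc a b, HasDerivAt G (g (x + y * I)) (x + y * I))
    (hc : ContinuousOn (fun x : ℝ => g (x + y * I)) (uIcc a b)) :
    ∫ x : ℝ in a..b, g (x + y * I) = G (b + y * I) - G (a + y * I) := by
  refine intervalIntegral.integral_eq_sub_of_hasDerivAt
    (f := fun x : ℝ => G (x + y * I)) (fun x hx => ?_) hc.intervalIntegrable
  have h1 : HasDerivAt (fun x : ℝ => (x : ℂ) + y * I) 1 x :=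
    (Complex.ofRealCLM.hasDerivAt (x := x)).add_const _
  have h2 := HasDerivAt.comp x (h x hx) h1
  rw [mul_one] at h2
  exact h2

/-- FTC along vertical lines -/
theorem LZ_ftc_v (G g : ℂ → ℂ) (c d x : ℝ)
    (h : ∀ y ∈ uIcc c d, HasDerivAt G (g (x + y * I)) (x + y * I))
    (hc : ContinuousOn (fun y : ℝ => g (x + y * I)) (uIcc c d)) :
    I * ∫ y : ℝ in c..d, g (x + y * I) = G (x + d * I) - G (x + c * I) := by
  rw [← intervalIntegral.integral_const_mul]
  refine intervalIntegral.integral_eq_sub_of_hasDerivAt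
    (f := fun y : ℝ => G (x + y * I)) (fun y hy => ?_)
    (ContinuousOn.intervalIntegrable (continuousOn_const.mul hc))
  have h1 : HasDerivAt (fun y : ℝ => (x : ℂ) + y * I) I y := by
    have := ((Complex.ofRealCLM.hasDerivAt (x := y)).mul_const I).const_add (x : ℂ)
    simpa using this
  have h2 := HasDerivAt.comp y (h y hy) h1
  rw [mul_comm]
  exact h2

theorem LZ_hasDerivAt_log (ρ z : ℂ) (h : z - ρ ∈ slitPlane) :
    HasDerivAt (fun w => Complex.log (w - ρ)) ((z - ρ)⁻¹) z := by
  have := ((hasDerivAt_id z).sub_const ρ).clog h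
  simpa using this

theorem LZ_hasDerivAt_log_neg (ρ z : ℂ) (h : ρ - z ∈ slitPlane) :
    HasDerivAt (fun w => Complex.log (ρ - w)) ((z - ρ)⁻¹) z := by
  have := ((hasDerivAt_id z).const_sub ρ).clog h
  simp only [id] at this
  convert this using 1
  rw [← neg_sub ρ z, inv_neg, neg_div, one_div]

theorem LZ_bd_inv {a b c d : ℝ} {ρ : ℂ} (ha : a < ρ.re) (hb : ρ.re < b) (hc : c < ρ.im)
    (hd : ρ.im < d) : LZbd (fun z => (z - ρ)⁻¹) a b c d := by
  refine ⟨?_, ?_, ?_, ?_⟩ <;> apply ContinuousOn.inv₀ (by fun_prop) <;> intro x _ h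
  · have := congrArg Complex.im h; simp at this; linarith
  · have := congrArg Complex.im h; simp at this; linarith
  · have := congrArg Complex.re h; simp at this; linarith
  · have := congrArg Complex.re h; simp at this; linarith

theorem LZ_log_sub_log_neg_of_pos (z : ℂ) (h : 0 < z.im) :
    Complex.log z - Complex.log (-z) = Real.pi * I := by
  simp only [Complex.log, norm_neg, arg_neg_eq_arg_sub_pi_of_im_pos h]
  push_cast; ring

theorem LZ_log_sub_log_neg_of_neg (z : ℂ) (h : z.im < 0) :
    Complex.log z - Complex.log (-z) = -(Real.pi * I) := by
  simp only [Complex.log, norm_neg, arg_neg_eq_arg_add_pi_of_im_neg h]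
  push_cast; ring

theorem LZrect_inv {a b c d : ℝ} {ρ : ℂ} (ha : a < ρ.re) (hb : ρ.re < b) (hc : c < ρ.im)
    (hd : ρ.im < d) : LZrect (fun z => (z - ρ)⁻¹) a b c d = 2 * Real.pi * I := by
  have hbd := LZ_bd_inv ha hb hc hd
  unfold LZrect
  rw [LZ_ftc_h (fun w => Complex.log (w - ρ)) (fun z => (z - ρ)⁻¹) a b c
      (fun x _ => LZ_hasDerivAt_log _ _ (by
        rw [mem_slitPlane_iff]; right; simp; intro h; linarith)) hbd.1,
    LZ_ftc_h (fun w => Complex.log (w - ρ)) (fun z => (z - ρ)⁻¹) a b d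
      (fun x _ => LZ_hasDerivAt_log _ _ (by
        rw [mem_slitPlane_iff]; right; simp; intro h; linarith)) hbd.2.1,
    LZ_ftc_v (fun w => Complex.log (w - ρ)) (fun z => (z - ρ)⁻¹) c d b
      (fun x _ => LZ_hasDerivAt_log _ _ (by
        rw [mem_slitPlane_iff]; left; simp; linarith)) hbd.2.2.1,
    LZ_ftc_v (fun w => Complex.log (ρ - w)) (fun z => (z - ρ)⁻¹) c d a
      (fun x _ => LZ_hasDerivAt_log_neg _ _ (by
        rw [mem_slitPlane_iff]; left; simp; linarith)) hbd.2.2.2]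
  have h1 := LZ_log_sub_log_neg_of_pos ((a : ℂ) + d * I - ρ) (by simp; linarith)
  have h2 := LZ_log_sub_log_neg_of_neg ((a : ℂ) + c * I - ρ) (by simp; linarith)
  rw [neg_sub] at h1 h2
  linear_combination h1 - h2

/-- argument principle for a rectangle -/
theorem LZ_argument_principle (U : Set ℂ) (hU : IsOpen U) (f : ℂ → ℂ)
    (hf : DifferentiableOn ℂ f U) {a b c d : ℝ} (hab : a ≤ b) (hcd : c ≤ d)
    (hK : Icc a b ×ℂ Icc c d ⊆ U)
    (S : Finset ℂ) (hS : ∀ ρ ∈ S, a < ρ.re ∧ ρ.re < b ∧ c < ρ.im ∧ ρ.im < d)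
    (hord : ∀ ρ ∈ S, analyticOrderAt f ρ ≠ ⊤)
    (hz : ∀ z ∈ Icc a b ×ℂ Icc c d, z ∉ S → f z ≠ 0) :
    LZrect (logDeriv f) a b c d =
      2 * Real.pi * I * (∑ ρ ∈ S, (analyticOrderNatAt f ρ : ℂ)) := by
  obtain ⟨g, hg, hfg, hgS⟩ := LZ_factor U hU f hf S (fun ρ hρ => by
    obtain ⟨h1, h2, h3, h4⟩ := hS ρ hρ
    exact ⟨hK ⟨⟨h1.le, h2.le⟩, ⟨h3.le, h4.le⟩⟩, hord ρ hρ⟩)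
  have hg0 : ∀ z ∈ Icc a b ×ℂ Icc c d, g z ≠ 0 := by
    intro z hzK
    by_cases h : z ∈ S
    · exact hgS z h
    · intro h0
      apply hz z hzK h
      rw [hfg z (hK hzK), h0, mul_zero]
  have hlg : ∀ z ∈ Icc a b ×ℂ Icc c d, DifferentiableAt ℂ (logDeriv g) z := by
    intro z hzK
    have h1 : AnalyticAt ℂ g z := hg.analyticAt (hU.mem_nhds (hK hzK))
    exact (h1.deriv.div h1 (hg0 z hzK)).differentiableAt
  have hcont : ContinuousOn (logDeriv g) (Icc a b ×ℂ Icc c d) :=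
    fun z hzK => (hlg z hzK).continuousAt.continuousWithinAt
  have hmem1 : ∀ x ∈ uIcc a b, ∀ y ∈ uIcc c d, (x : ℂ) + y * I ∈ Icc a b ×ℂ Icc c d := by
    intro x hx y hy
    rw [uIcc_of_le hab] at hx
    rw [uIcc_of_le hcd] at hy
    simpa [mem_reProdIm] using ⟨hx, hy⟩
  have hbdg : LZbd (logDeriv g) a b c d := by
    refine ⟨?_, ?_, ?_, ?_⟩ <;> refine hcont.comp (by fun_prop) (fun x hx => ?_)
    · exact hmem1 x hx c left_mem_uIcc
    · exact hmem1 x hx d right_mem_uIcc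
    · exact hmem1 b right_mem_uIcc x hx
    · exact hmem1 a left_mem_uIcc x hx
  have hzero : LZrect (logDeriv g) a b c d = 0 := by
    have := integral_boundary_rect_eq_zero_of_differentiableOn (logDeriv g) (a + c * I)
      (b + d * I) (by
        simp only [add_re, ofReal_re, mul_re, I_re, mul_zero, ofReal_im, I_im, mul_one, sub_self,
          add_zero, add_im, mul_im, zero_add]
        rw [uIcc_of_le hab, uIcc_of_le hcd]
        exact fun z hzK => (hlg z hzK).differentiableWithinAt)
    simpa [LZrect] using this
  have key : ∀ z ∈ Icc a b ×ℂ Icc c d, z ∉ S → logDeriv f z =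
      (∑ ρ ∈ S, (analyticOrderNatAt f ρ : ℂ) * (z - ρ)⁻¹) + logDeriv g z := by
    intro z hzK hzS
    refine LZ_logDeriv_factor f g S _ z ?_ hzS (hg.differentiableAt (hU.mem_nhds (hK hzK)))
      (hg0 z hzK)
    filter_upwards [hU.mem_nhds (hK hzK)] with w hw using hfg w hw
  have hbds : ∀ ρ ∈ S, LZbd (fun z => (analyticOrderNatAt f ρ : ℂ) * (z - ρ)⁻¹) a b c d := by
    intro ρ hρ
    obtain ⟨h1, h2, h3, h4⟩ := hS ρ hρ
    have := LZ_bd_inv h1 h2 h3 h4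
    exact ⟨continuousOn_const.mul this.1, continuousOn_const.mul this.2.1,
      continuousOn_const.mul this.2.2.1, continuousOn_const.mul this.2.2.2⟩
  have hcongr : LZrect (logDeriv f) a b c d = LZrect (fun z =>
      (∑ ρ ∈ S, (analyticOrderNatAt f ρ : ℂ) * (z - ρ)⁻¹) + logDeriv g z) a b c d := by
    unfold LZrect
    congr 1; congr 1; congr 1
    · apply intervalIntegral.integral_congr
      intro x hx
      refine key _ (hmem1 x hx c left_mem_uIcc) fun h => ?_
      have := (hS _ h).2.2.1; simp at this
    · apply intervalIntegral.integral_congr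
      intro x hx
      refine key _ (hmem1 x hx d right_mem_uIcc) fun h => ?_
      have := (hS _ h).2.2.2; simp at this
    · congr 1
      apply intervalIntegral.integral_congr
      intro x hx
      refine key _ (hmem1 b right_mem_uIcc x hx) fun h => ?_
      have := (hS _ h).2.1; simp at this
    · congr 1
      apply intervalIntegral.integral_congr
      intro x hx
      refine key _ (hmem1 a left_mem_uIcc x hx) fun h => ?_
      have := (hS _ h).1; simp at this
  rw [hcongr, LZrect_add (LZbd_sum S _ hbds) hbdg, hzero, LZrect_sum S _ hbds, add_zero,
    Finset.mul_sum]
  apply Finset.sum_congr rfl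
  intro ρ hρ
  obtain ⟨h1, h2, h3, h4⟩ := hS ρ hρ
  rw [LZrect_const_mul, LZrect_inv h1 h2 h3 h4]
  ring

theorem LZ_finite_zeros (K : Set ℂ) (hK : IsCompact K) (f : ℂ → ℂ)
    (hf : ∀ z ∈ K, AnalyticAt ℂ f z) (hord : ∀ z ∈ K, analyticOrderAt f z ≠ ⊤) :
    {z | z ∈ K ∧ f z = 0}.Finite := by
  by_contra hinf
  obtain ⟨z, hzK, hz⟩ := Set.Infinite.exists_accPt_of_subset_isCompact hinf hK (fun z hz => hz.1)
  rcases (hf z hzK).eventually_eq_zero_or_eventually_ne_zero with h | h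
  · exact hord z hzK (analyticOrderAt_eq_top.mpr h)
  · rw [accPt_iff_frequently_nhdsNE] at hz
    obtain ⟨w, hw, hw2⟩ := (hz.and_eventually h).exists
    exact hw2 hw.2

theorem LZ_abs_arg_sub_le (z w : ℂ) (h : 0 < z.im ∧ 0 < w.im ∨ z.im < 0 ∧ w.im < 0) :
    |z.arg - w.arg| ≤ Real.pi := by
  have h1 := arg_le_pi z
  have h2 := arg_le_pi w
  have h3 := neg_pi_lt_arg z
  have h4 := neg_pi_lt_arg w
  rcases h with ⟨ha, hb⟩ | ⟨ha, hb⟩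
  · have := arg_nonneg_iff.mpr ha.le
    have := arg_nonneg_iff.mpr hb.le
    rw [abs_le]; constructor <;> linarith
  · have := arg_neg_iff.mpr ha
    have := arg_neg_iff.mpr hb
    rw [abs_le]; constructor <;> linarith

theorem LZ_im_integral_inv (ρ : ℂ) (a b y : ℝ) (h : ∀ x ∈ uIcc a b, (x : ℂ) + y * I ≠ ρ) :
    |(∫ x : ℝ in a..b, ((x : ℂ) + y * I - ρ)⁻¹).im| ≤ Real.pi := by
  by_cases hy : y = ρ.im
  · have : ∀ x : ℝ, ((x : ℂ) + y * I - ρ)⁻¹ = (((x - ρ.re)⁻¹ : ℝ) : ℂ) := by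
      intro x
      push_cast
      congr 1
      apply Complex.ext <;> simp [hy]
    simp only [this]
    rw [intervalIntegral.integral_ofReal]
    simp [Real.pi_pos.le]
  · have hne : y - ρ.im ≠ 0 := sub_ne_zero.mpr hy
    have hc : ContinuousOn (fun x : ℝ => ((x : ℂ) + y * I - ρ)⁻¹) (uIcc a b) := by
      apply ContinuousOn.inv₀ (by fun_prop)
      intro x hx
      exact sub_ne_zero.mpr (h x hx)
    rw [LZ_ftc_h (fun w => Complex.log (w - ρ)) (fun z => (z - ρ)⁻¹) a b y
      (fun x _ => LZ_hasDerivAt_log _ _ (by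
        rw [mem_slitPlane_iff]; right; simpa using hne)) hc]
    rw [sub_im, log_im, log_im]
    apply LZ_abs_arg_sub_le
    rcases lt_or_gt_of_ne hne with h | h
    · right; simp; linarith
    · left; simp; linarith

theorem LZ_horizontal (U : Set ℂ) (hU : IsOpen U) (f : ℂ → ℂ) (hf : DifferentiableOn ℂ f U)
    (s₀ : ℂ) (R : ℝ) (hR : 0 < R) (hRU : Metric.closedBall s₀ R ⊆ U) (M : ℝ) (hM : 3 ≤ M)
    (hs₀ : f s₀ ≠ 0) (hbound : ∀ z ∈ Metric.closedBall s₀ R, ‖f z‖ ≤ M * ‖f s₀‖)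
    (a b y : ℝ) (hab : ∀ x ∈ uIcc a b, (x : ℂ) + y * I ∈ Metric.closedBall s₀ (R / 8))
    (hnz : ∀ x ∈ uIcc a b, f ((x : ℂ) + y * I) ≠ 0) :
    |(∫ x : ℝ in a..b, logDeriv f (x + y * I)).im| ≤ 8 * Real.log M := by
  classical
  have hM0 : 0 < M := by linarith
  have hlogM : 1 ≤ Real.log M := by
    rw [Real.le_log_iff_exp_le hM0]
    linarith [Real.exp_one_lt_d9]
  have hAn : AnalyticOnNhd ℂ f (Metric.closedBall s₀ R) := fun z hz =>
    hf.analyticAt (hU.mem_nhds (hRU hz))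
  have hs₀an := hAn s₀ (Metric.mem_closedBall_self hR.le)
  have hordall : ∀ z ∈ Metric.closedBall s₀ R, analyticOrderAt f z ≠ ⊤ := by
    intro z hz
    refine hAn.analyticOrderAt_ne_top_of_isPreconnected
      (convex_closedBall s₀ R).isPreconnected (Metric.mem_closedBall_self hR.le) hz ?_
    rw [hs₀an.analyticOrderAt_eq_zero.mpr hs₀]
    simp
  have hsub4 : Metric.closedBall s₀ (R / 4) ⊆ Metric.closedBall s₀ R :=
    Metric.closedBall_subset_closedBall (by linarith)
  have hfin := LZ_finite_zeros (Metric.closedBall s₀ (R / 4)) (isCompact_closedBall _ _) f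
    (fun z hz => hAn z (hsub4 hz)) (fun z hz => hordall z (hsub4 hz))
  set S : Finset ℂ := hfin.toFinset with hS
  have hmS : ∀ z, z ∈ S ↔ z ∈ Metric.closedBall s₀ (R / 4) ∧ f z = 0 := by
    intro z; simp [hS]
  obtain ⟨g, hg, hfg, hgS⟩ := LZ_factor U hU f hf S (fun ρ hρ => by
    have := (hmS ρ).mp hρ
    exact ⟨hRU (hsub4 this.1), hordall _ (hsub4 this.1)⟩)
  set n : ℂ → ℕ := fun ρ => analyticOrderNatAt f ρ with hn
  set N : ℕ := ∑ ρ ∈ S, n ρ with hN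
  set P : ℂ → ℂ := fun z => ∏ ρ ∈ S, (z - ρ) ^ (n ρ) with hP
  have hfs₀ := hfg s₀ (hRU (Metric.mem_closedBall_self hR.le))
  have hgs₀ : g s₀ ≠ 0 := by
    intro h; apply hs₀; rw [hfs₀, h, mul_zero]
  have hPs₀ : P s₀ ≠ 0 := by
    intro h; apply hs₀; rw [hfs₀]; simp only [hP] at h; rw [h, zero_mul]
  -- bound on the sphere
  have hPcomp : ∀ z ∈ Metric.sphere s₀ R, 3 ^ N * ‖P s₀‖ ≤ ‖P z‖ := by
    intro z hz
    simp only [hP, hN, norm_prod, norm_pow]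
    rw [← Finset.prod_pow_eq_pow_sum, ← Finset.prod_mul_distrib]
    apply Finset.prod_le_prod
    · intro ρ _; positivity
    · intro ρ hρ
      rw [← mul_pow]
      apply pow_le_pow_left₀ (by positivity)
      have h1 := ((hmS ρ).mp hρ).1
      rw [Metric.mem_closedBall, dist_comm, dist_eq_norm] at h1
      have h2 : ‖z - s₀‖ = R := by simpa [dist_eq_norm] using hz
      have h3 : ‖z - s₀‖ ≤ ‖z - ρ‖ + ‖s₀ - ρ‖ := by
        have := norm_sub_le (z - ρ) (s₀ - ρ)
        simpa using this
      linarith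
  have hgsph : ∀ z ∈ Metric.sphere s₀ R, ‖g z‖ ≤ M / 3 ^ N * ‖g s₀‖ := by
    intro z hz
    have hzb := Metric.sphere_subset_closedBall hz
    have h1 := hbound z hzb
    have h2 : f z = P z * g z := hfg z (hRU hzb)
    have h3 : f s₀ = P s₀ * g s₀ := hfs₀
    rw [h2, h3, norm_mul, norm_mul] at h1
    have h4 := hPcomp z hz
    have h5 : 0 < ‖P s₀‖ := norm_pos_iff.mpr hPs₀
    have h6 : (3 : ℝ) ^ N * ‖P s₀‖ * ‖g z‖ ≤ M * (‖P s₀‖ * ‖g s₀‖) :=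
      (mul_le_mul_of_nonneg_right h4 (norm_nonneg _)).trans h1
    have h7 : (0 : ℝ) < 3 ^ N := by positivity
    rw [div_mul_eq_mul_div, le_div_iff₀ h7]
    nlinarith
  have hgball : ∀ z ∈ Metric.closedBall s₀ R, ‖g z‖ ≤ M / 3 ^ N * ‖g s₀‖ := by
    intro z hz
    refine Complex.norm_le_of_forall_mem_frontier_norm_le (U := Metric.ball s₀ R)
      Metric.isBounded_ball ?_ ?_ ?_
    · apply DifferentiableOn.diffContOnCl
      rw [closure_ball _ hR.ne']
      exact hg.mono hRU
    · rw [frontier_ball _ hR.ne']; exact hgsph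
    · rw [closure_ball _ hR.ne']; exact hz
  have h3N : (3 : ℝ) ^ N ≤ M := by
    have := hgball s₀ (Metric.mem_closedBall_self hR.le)
    have h5 : 0 < ‖g s₀‖ := norm_pos_iff.mpr hgs₀
    have h7 : (0 : ℝ) < 3 ^ N := by positivity
    have h8 : 1 ≤ M / 3 ^ N := by
      by_contra hlt
      push Not at hlt
      nlinarith
    rwa [le_div_iff₀ h7, one_mul] at h8
  have hNlog : (N : ℝ) ≤ Real.log M := by
    have h1 : (N : ℝ) * Real.log 3 ≤ Real.log M := by
      rw [← Real.log_pow]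
      exact Real.log_le_log (by positivity) h3N
    have h2 : 1 ≤ Real.log 3 := by
      rw [Real.le_log_iff_exp_le (by norm_num)]
      linarith [Real.exp_one_lt_d9]
    nlinarith [Nat.cast_nonneg (α := ℝ) N]
  have hgball2 : ∀ z ∈ Metric.closedBall s₀ R, ‖g z‖ ≤ M * ‖g s₀‖ := by
    intro z hz
    refine (hgball z hz).trans ?_
    apply mul_le_mul_of_nonneg_right _ (norm_nonneg _)
    exact div_le_self hM0.le (one_le_pow₀ (by norm_num))
  -- nonvanishing of g
  have hgnz : ∀ z ∈ Metric.closedBall s₀ (R / 4), g z ≠ 0 := by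
    intro z hz h0
    by_cases h : z ∈ S
    · exact hgS z h h0
    · apply h
      rw [hmS]
      exact ⟨hz, by rw [hfg z (hRU (hsub4 hz)), h0, mul_zero]⟩
  have hgan : ∀ z ∈ Metric.closedBall s₀ (R / 4), AnalyticAt ℂ g z := fun z hz =>
    hg.analyticAt (hU.mem_nhds (hRU (hsub4 hz)))
  have hlg : ∀ z ∈ Metric.closedBall s₀ (R / 4), DifferentiableAt ℂ (logDeriv g) z := by
    intro z hz
    have h1 := hgan z hz
    exact (h1.deriv.div h1 (hgnz z hz)).differentiableAt
  have hbc : Metric.ball s₀ (R / 4) ⊆ Metric.closedBall s₀ (R / 4) := Metric.ball_subset_closedBall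
  obtain ⟨l0, hl0⟩ := DifferentiableOn.isExactOn_ball (c := s₀) (r := R / 4) (f := logDeriv g)
    (fun z hz => (hlg z (hbc hz)).differentiableWithinAt)
  set l : ℂ → ℂ := fun z => l0 z - l0 s₀ with hl
  have hld : ∀ z ∈ Metric.ball s₀ (R / 4), HasDerivAt l (logDeriv g z) z := fun z hz =>
    (hl0 z hz).sub_const _
  have hs₀4 : s₀ ∈ Metric.ball s₀ (R / 4) := Metric.mem_ball_self (by linarith)
  have hconst : ∀ z ∈ Metric.ball s₀ (R / 4), g z * Complex.exp (-(l z)) = g s₀ := by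
    intro z hz
    have hder : ∀ w ∈ Metric.ball s₀ (R / 4),
        HasDerivAt (fun w => g w * Complex.exp (-(l w))) 0 w := by
      intro w hw
      have h1 := (hgan w (hbc hw)).differentiableAt.hasDerivAt
      have h2 := h1.mul ((hld w hw).neg.cexp)
      have h3 : deriv g w * cexp ((-l) w) + g w * (cexp ((-l) w) * -logDeriv g w) = 0 := by
        rw [logDeriv_apply]
        have := hgnz w (hbc hw)
        field_simp
        ring
      rw [h3] at h2
      exact h2
    have := (convex_ball s₀ (R / 4)).norm_image_sub_le_of_norm_hasDerivWithin_le (C := 0)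
      (fun w hw => (hder w hw).hasDerivWithinAt) (by simp) hs₀4 hz
    rw [zero_mul, norm_le_zero_iff, sub_eq_zero] at this
    rw [this]
    simp [hl]
  have hexp : ∀ z ∈ Metric.ball s₀ (R / 4), Complex.exp (l z) * g s₀ = g z := by
    intro z hz
    rw [← hconst z hz, mul_left_comm, ← Complex.exp_add]
    simp
  have hre : ∀ z ∈ Metric.ball s₀ (R / 4), (l z).re ≤ Real.log M := by
    intro z hz
    have h1 := hgball2 z (hsub4 (hbc hz))
    rw [← hexp z hz, norm_mul, Complex.norm_exp] at h1
    have h5 : 0 < ‖g s₀‖ := norm_pos_iff.mpr hgs₀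
    rw [Real.le_log_iff_exp_le hM0]
    exact le_of_mul_le_mul_right h1 h5
  have hBC : ∀ z ∈ Metric.closedBall s₀ (R / 8), ‖l z‖ ≤ 2 * Real.log M := by
    intro z hz
    rw [Metric.mem_closedBall, dist_eq_norm] at hz
    have h1 := Complex.borelCaratheodory_zero (f := fun w => l (s₀ + w)) (R := R / 4)
      (M := Real.log M) (z := z - s₀) (by linarith) (by
        intro w hw
        have : s₀ + w ∈ Metric.ball s₀ (R / 4) := by simpa using hw
        have h2 := (hld _ this).differentiableAt
        exact (DifferentiableAt.comp w h2 (by fun_prop)).differentiableWithinAt)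
      (by
        intro w hw
        have : s₀ + w ∈ Metric.ball s₀ (R / 4) := by simpa using hw
        exact hre _ this) (by linarith) (by
          rw [mem_ball_zero_iff]; linarith) (by simp [hl])
    simp only [add_sub_cancel] at h1
    refine h1.trans ?_
    rw [div_le_iff₀ (by linarith)]
    nlinarith
  -- assemble
  have h84 : ∀ x ∈ uIcc a b, (x : ℂ) + y * I ∈ Metric.ball s₀ (R / 4) := by
    intro x hx
    exact Metric.closedBall_subset_ball (by linarith) (hab x hx)
  have hnS : ∀ x ∈ uIcc a b, (x : ℂ) + y * I ∉ S := by
    intro x hx h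
    exact hnz x hx ((hmS _).mp h).2
  have key : ∀ x ∈ uIcc a b, logDeriv f (x + y * I) =
      (∑ ρ ∈ S, (n ρ : ℂ) * ((x : ℂ) + y * I - ρ)⁻¹) + logDeriv g (x + y * I) := by
    intro x hx
    have hb := hbc (h84 x hx)
    refine LZ_logDeriv_factor f g S n _ ?_ (hnS x hx)
      (hgan _ hb).differentiableAt (hgnz _ hb)
    filter_upwards [hU.mem_nhds (hRU (hsub4 hb))] with w hw using hfg w hw
  have hcg : ContinuousOn (fun x : ℝ => logDeriv g (x + y * I)) (uIcc a b) := by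
    intro x hx
    have h1 := (hlg _ (hbc (h84 x hx))).continuousAt
    exact (ContinuousAt.comp (f := fun x : ℝ => (x : ℂ) + y * I) h1
      (by fun_prop)).continuousWithinAt
  have hci : ∀ ρ ∈ S, ContinuousOn (fun x : ℝ => (n ρ : ℂ) * ((x : ℂ) + y * I - ρ)⁻¹)
      (uIcc a b) := by
    intro ρ hρ
    apply continuousOn_const.mul
    apply ContinuousOn.inv₀ (by fun_prop)
    intro x hx h
    rw [sub_eq_zero] at h
    exact hnS x hx (h ▸ hρ)
  rw [intervalIntegral.integral_congr key, intervalIntegral.integral_add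
    (continuousOn_finsetSum S hci).intervalIntegrable hcg.intervalIntegrable,
    intervalIntegral.integral_finsetSum (fun ρ hρ => (hci ρ hρ).intervalIntegrable),
    LZ_ftc_h l (logDeriv g) a b y (fun x hx => hld _ (h84 x hx)) hcg, add_im, im_sum]
  have hA : |∑ ρ ∈ S, (∫ x : ℝ in a..b, (n ρ : ℂ) * ((x : ℂ) + y * I - ρ)⁻¹).im|
      ≤ Real.pi * N := by
    rw [hN, Nat.cast_sum, Finset.mul_sum]
    refine (Finset.abs_sum_le_sum_abs _ _).trans (Finset.sum_le_sum fun ρ hρ => ?_)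
    rw [intervalIntegral.integral_const_mul, ← ofReal_natCast, im_ofReal_mul, abs_mul,
      Nat.abs_cast, mul_comm]
    apply mul_le_mul_of_nonneg_right _ (Nat.cast_nonneg _)
    apply LZ_im_integral_inv
    intro x hx h
    exact hnS x hx (h ▸ hρ)
  have hB : |(l (b + y * I) - l (a + y * I)).im| ≤ 4 * Real.log M := by
    refine (abs_im_le_norm _).trans ((norm_sub_le _ _).trans ?_)
    have h1 := hBC _ (hab b right_mem_uIcc)
    have h2 := hBC _ (hab a left_mem_uIcc)
    linarith
  refine (abs_add_le _ _).trans ?_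
  have hpi := Real.pi_lt_d2
  have : Real.pi * N ≤ 4 * Real.log M := by
    have h0 : (0 : ℝ) ≤ N := Nat.cast_nonneg _
    nlinarith
  linarith

noncomputable def LZH (t x : ℝ) : ℝ := x * Real.arctan (t / x) + t / 2 * Real.log (x^2 + t^2)

lemma LZH_deriv (t x : ℝ) (hx : 0 < x) : HasDerivAt (LZH t) (Real.arctan (t / x)) x := by
  have h1 : HasDerivAt (fun x : ℝ => t / x) (-t / x^2) x := by
    have := (hasDerivAt_inv hx.ne').const_mul t
    have h3 : t * -(x ^ 2)⁻¹ = -t/x^2 := by field_simp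
    rw [h3] at this
    exact this
  have h2 := h1.arctan
  have h4 := (hasDerivAt_id x).mul h2
  have hp : x^2 + t^2 ≠ 0 := by positivity
  have h5 : HasDerivAt (fun x : ℝ => x^2 + t^2) (2 * x) x := by
    simpa using ((hasDerivAt_pow 2 x).add_const (t^2))
  have h6 := ((h5.log hp).const_mul (t/2))
  have h7 := h4.add h6
  have h8 : 1 * Real.arctan (t / x) + id x * (1 / (1 + (t / x) ^ 2) * (-t / x ^ 2)) +
    t / 2 * (2 * x / (x ^ 2 + t ^ 2)) = Real.arctan (t/x) := by
    have : 1 + (t/x)^2 ≠ 0 := by positivity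
    have e : 1 + (t/x)^2 = (x^2+t^2)/x^2 := by field_simp
    rw [e]
    simp only [id]
    field_simp
    ring
  rw [h8] at h7
  exact h7

lemma LZH_integral (t a b : ℝ) (ha : 0 < a) (hab : a ≤ b) :
    ∫ x in a..b, Real.arctan (t / x) = LZH t b - LZH t a := by
  have hpos : ∀ x ∈ uIcc a b, 0 < x := by
    intro x hx; rw [uIcc_of_le hab] at hx; exact lt_of_lt_of_le ha hx.1
  refine intervalIntegral.integral_eq_sub_of_hasDerivAt (fun x hx => LZH_deriv t x (hpos x hx)) ?_
  apply ContinuousOn.intervalIntegrable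
  intro x hx
  exact (Real.continuous_arctan.continuousAt.comp
    (continuousAt_const.div continuousAt_id (hpos x hx).ne')).continuousWithinAt

lemma LZ_anti (t a b : ℝ) (ht : 0 ≤ t) (ha : 0 < a) :
    AntitoneOn (fun x : ℝ => Real.arctan (t / x)) (Icc a b) := by
  intro x hx y hy hxy
  apply Real.arctan_mono
  have : 0 < x := lt_of_lt_of_le ha hx.1
  exact div_le_div_of_nonneg_left ht this hxy

lemma LZ_sum_le (t : ℝ) (ht : 0 ≤ t) (n : ℕ) :
    ∑ k ∈ Finset.range n, Real.arctan (t / (k + 2)) ≤ LZH t (n + 1) - LZH t 1 := by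
  have h := AntitoneOn.sum_le_integral (f := fun x : ℝ => Real.arctan (t / x)) (x₀ := 1) (a := n)
    (LZ_anti t 1 _ ht one_pos)
  rw [LZH_integral t 1 (1 + n) one_pos (by linarith [Nat.cast_nonneg (α := ℝ) n])] at h
  rw [add_comm (n:ℝ) 1]
  refine le_trans (le_of_eq ?_) h
  apply Finset.sum_congr rfl
  intro k _
  push_cast
  congr 2
  ring

lemma LZ_le_sum (t : ℝ) (ht : 0 ≤ t) (n : ℕ) :
    LZH t (n + 2) - LZH t 2 ≤ ∑ k ∈ Finset.range n, Real.arctan (t / (k + 2)) := by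
  have h := AntitoneOn.integral_le_sum (f := fun x : ℝ => Real.arctan (t / x)) (x₀ := 2) (a := n)
    (LZ_anti t 2 _ ht two_pos)
  rw [LZH_integral t 2 (2 + n) two_pos (by linarith [Nat.cast_nonneg (α := ℝ) n])] at h
  rw [add_comm (n:ℝ) 2]
  refine le_trans h (le_of_eq ?_)
  apply Finset.sum_congr rfl
  intro k _
  rw [add_comm]

lemma LZH_tendsto (t c : ℝ) (ht : 0 < t) (hc : 0 < c) :
    Tendsto (fun n : ℕ => LZH t (n + c) - t * Real.log n) atTop (𝓝 t) := by
  have h1 : Tendsto (fun n : ℕ => ((n:ℝ) + c)) atTop atTop :=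
    tendsto_atTop_add_const_right _ _ tendsto_natCast_atTop_atTop
  have h2 : Tendsto (fun y : ℝ => y * Real.arctan (t / y)) atTop (𝓝 t) := by
    have hd : HasDerivAt Real.arctan 1 0 := by simpa using Real.hasDerivAt_arctan 0
    have hs := hd.tendsto_slope_zero_right
    have hy : Tendsto (fun y : ℝ => t / y) atTop (𝓝[>] 0) := by
      rw [tendsto_nhdsWithin_iff]
      refine ⟨tendsto_const_nhds.div_atTop tendsto_id, ?_⟩
      filter_upwards [eventually_gt_atTop 0] with y hy
      exact div_pos ht hy
    have := (hs.comp hy).const_mul t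
    simp only [mul_one] at this
    refine this.congr' ?_
    filter_upwards [eventually_gt_atTop 0] with y hy
    simp
    field_simp
  have h3 : Tendsto (fun n : ℕ => t / 2 * Real.log ((1 + c / n)^2 + (t/n)^2)) atTop (𝓝 (t/2 * Real.log 1)) := by
    have a1 : Tendsto (fun n : ℕ => c / (n:ℝ)) atTop (𝓝 0) := tendsto_const_nhds.div_atTop tendsto_natCast_atTop_atTop
    have a2 : Tendsto (fun n : ℕ => t / (n:ℝ)) atTop (𝓝 0) := tendsto_const_nhds.div_atTop tendsto_natCast_atTop_atTop
    have a3 : Tendsto (fun n : ℕ => (1 + c / n)^2 + (t/n)^2) atTop (𝓝 1) := by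
      have := ((a1.const_add 1).pow 2).add (a2.pow 2)
      simpa using this
    exact (a3.log one_ne_zero).const_mul _
  have h4 := (h2.comp h1).add h3
  simp only [Real.log_one, mul_zero, add_zero] at h4
  refine h4.congr' ?_
  filter_upwards [eventually_gt_atTop 0] with n hn
  have hn' : (0:ℝ) < n := by exact_mod_cast hn
  simp only [Function.comp, LZH]
  have e : ((n:ℝ)+c)^2 + t^2 = n^2 * ((1 + c / n)^2 + (t/n)^2) := by field_simp
  rw [e, Real.log_mul (by positivity) (by positivity), Real.log_pow]
  push_cast
  ring

/-- the limit of the phase is within a constant of `t log t - t` -/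
lemma LZ_phase_limit (t D : ℝ) (ht : 1 ≤ t)
    (hD : Tendsto (fun n : ℕ => t * Real.log n - ∑ k ∈ Finset.range (n+1), Real.arctan (t / (k + 2)))
      atTop (𝓝 D)) : |D - (t * Real.log t - t)| ≤ 8 := by
  have ht0 : 0 < t := by linarith
  have hpi := Real.pi_lt_four
  have lo : LZH t 1 - t ≤ D := by
    have h1 := ((LZH_tendsto t 2 ht0 two_pos).const_sub (LZH t 1))
    refine le_of_tendsto_of_tendsto' h1 hD ?_
    intro n
    have := LZ_sum_le t ht0.le (n+1)
    push_cast at this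
    have e : (n:ℝ) + 1 + 1 = n + 2 := by ring
    rw [e] at this
    linarith
  have hi : D ≤ LZH t 2 - t := by
    have h1 := ((LZH_tendsto t 3 ht0 three_pos).const_sub (LZH t 2))
    refine le_of_tendsto_of_tendsto' hD h1 ?_
    intro n
    have := LZ_le_sum t ht0.le (n+1)
    push_cast at this
    have e : (n:ℝ) + 1 + 2 = n + 3 := by ring
    rw [e] at this
    linarith
  have l1 : t * Real.log t ≤ LZH t 1 := by
    unfold LZH
    have : 0 ≤ Real.arctan (t/1) := Real.arctan_nonneg.2 (by simpa using ht0.le)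
    have h2 : Real.log (t^2) ≤ Real.log (1^2+t^2) := Real.log_le_log (by positivity) (by nlinarith)
    rw [Real.log_pow] at h2
    push_cast at h2
    have h5 := mul_le_mul_of_nonneg_left h2 (half_pos ht0).le
    nlinarith
  have l2 : LZH t 2 ≤ t * Real.log t + 6 := by
    unfold LZH
    have : Real.arctan (t/2) < Real.pi/2 := Real.arctan_lt_pi_div_two _
    have e : (2:ℝ)^2+t^2 = t^2 * (1 + 4/t^2) := by field_simp; ring
    have h2 : Real.log (2^2+t^2) = 2 * Real.log t + Real.log (1 + 4/t^2) := by
      rw [e, Real.log_mul (by positivity) (by positivity), Real.log_pow]; push_cast; ring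
    have h3 : Real.log (1 + 4/t^2) ≤ 4/t^2 := by
      have := Real.log_le_sub_one_of_pos (x := 1 + 4/t^2) (by positivity)
      linarith
    have h4 : t/2 * Real.log (1 + 4/t^2) ≤ 2 := by
      calc t/2 * Real.log (1 + 4/t^2) ≤ t/2 * (4/t^2) := by gcongr
        _ = 2/t := by field_simp; ring
        _ ≤ 2 := by rw [div_le_iff₀ ht0]; linarith
    rw [h2]
    nlinarith
  rw [abs_le]; constructor <;> linarith

lemma LZ_arg_arctan (z : ℂ) (hz : 0 < z.re) : z.arg = Real.arctan (z.im / z.re) := by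
  rw [← Complex.tan_arg]
  have h : |z.arg| < Real.pi / 2 := Complex.abs_arg_lt_pi_div_two_iff.2 (Or.inl hz)
  rw [abs_lt] at h
  exact (Real.arctan_tan h.1 h.2).symm

lemma LZ_log_sub_le (z : ℂ) (hz : 0 ≤ z.re) : ‖log (1 + z) - z‖ ≤ ‖z‖ ^ 2 := by
  have hd : ∀ w ∈ segment ℝ (0:ℂ) z,
      HasDerivWithinAt (fun w : ℂ => log (1 + w) - w) (-w / (1 + w)) (segment ℝ (0:ℂ) z) w ∧
        ‖-w / (1 + w)‖ ≤ ‖z‖ := by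
    intro w hw
    rw [segment_eq_image] at hw
    obtain ⟨θ, ⟨h0, h1⟩, rfl⟩ := hw
    simp only [smul_zero, zero_add]
    set w := θ • z with hw
    have hre : 0 ≤ w.re := by
      rw [hw]; simp only [Complex.real_smul, Complex.re_ofReal_mul]; positivity
    have hre1 : 1 ≤ (1 + w).re := by simpa using hre
    have hn1 : 1 ≤ ‖1 + w‖ := le_trans hre1 (Complex.re_le_norm _)
    have hne : 1 + w ≠ 0 := by
      intro h; rw [h] at hn1; simp at hn1; linarith
    refine ⟨?_, ?_⟩
    · have h1 : HasDerivAt (fun w : ℂ => 1 + w) 1 w := (hasDerivAt_id w).const_add 1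
      have h2 := (h1.clog (Or.inl (by linarith))).sub (hasDerivAt_id w)
      have h3 : 1 / (1 + w) - 1 = -w / (1 + w) := by field_simp; ring
      rw [h3] at h2
      exact h2.hasDerivWithinAt
    · rw [norm_div, norm_neg]
      have : ‖w‖ ≤ ‖z‖ := by
        rw [hw, norm_smul, Real.norm_of_nonneg h0]
        nlinarith [norm_nonneg z]
      exact le_trans (div_le_self (norm_nonneg _) hn1) this
  have := Convex.norm_image_sub_le_of_norm_hasDerivWithin_le (s := segment ℝ (0:ℂ) z)
    (fun w hw => (hd w hw).1) (fun w hw => (hd w hw).2) (convex_segment _ _)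
    (left_mem_segment ℝ _ _) (right_mem_segment ℝ _ _)
  simpa [pow_two] using this

noncomputable def LZterm (k : ℕ) (s : ℂ) : ℂ :=
  s * (Real.log (1 + 1 / ((k:ℝ) + 1)) : ℝ) - log (1 + s / ((k:ℂ) + 1))

noncomputable def LZLam (s : ℂ) : ℂ := - log s + ∑' k : ℕ, LZterm k s

lemma LZ_re_div (s : ℂ) (hs : 0 < s.re) (k : ℕ) : 0 < (s / ((k:ℂ)+1)).re := by
  have : (s / ((k:ℂ)+1)) = s / (((k:ℝ)+1 : ℝ) : ℂ) := by push_cast; rfl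
  rw [this, Complex.div_ofReal_re]; positivity

lemma LZterm_le (k : ℕ) (s : ℂ) (hs : 0 < s.re) (R : ℝ) (hR : ‖s‖ ≤ R) :
    ‖LZterm k s‖ ≤ (R + R^2) * (1 / ((k:ℝ)+1)^2) := by
  have hk : (0:ℝ) < (k:ℝ) + 1 := by positivity
  have h1 := LZ_log_sub_le (s / ((k:ℂ)+1)) (LZ_re_div s hs k).le
  have h2 := LZ_log_sub_le (((1 / ((k:ℝ)+1) : ℝ) : ℂ)) (by rw [Complex.ofReal_re]; positivity)
  have e2 : log (1 + ((1 / ((k:ℝ)+1) : ℝ) : ℂ)) = ((Real.log (1 + 1 / ((k:ℝ)+1)) : ℝ) : ℂ) := by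
    rw [Complex.ofReal_log (by positivity)]; push_cast; rfl
  rw [e2] at h2
  have n1 : ‖s / ((k:ℂ)+1)‖ = ‖s‖ / ((k:ℝ)+1) := by
    rw [norm_div]; congr 1
    have : ((k:ℂ)+1) = (((k:ℝ)+1 : ℝ) : ℂ) := by push_cast; rfl
    rw [this, Complex.norm_real, Real.norm_of_nonneg hk.le]
  have n2 : ‖((1 / ((k:ℝ)+1) : ℝ) : ℂ)‖ = 1 / ((k:ℝ)+1) := by
    rw [Complex.norm_real, Real.norm_of_nonneg (by positivity)]
  rw [n1] at h1
  rw [n2] at h2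
  have e : LZterm k s = s * (((Real.log (1 + 1 / ((k:ℝ)+1)) : ℝ) : ℂ) - ((1 / ((k:ℝ)+1) : ℝ) : ℂ))
      - (log (1 + s / ((k:ℂ)+1)) - s / ((k:ℂ)+1)) := by
    unfold LZterm; push_cast; ring
  rw [e]
  refine (norm_sub_le _ _).trans ?_
  rw [norm_mul]
  have hs0 := norm_nonneg s
  calc _ ≤ ‖s‖ * (1 / ((k:ℝ)+1))^2 + (‖s‖ / ((k:ℝ)+1))^2 := by gcongr
    _ = (‖s‖ + ‖s‖^2) * (1 / ((k:ℝ)+1)^2) := by field_simp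
    _ ≤ _ := by gcongr

lemma LZ_summ (C : ℝ) : Summable (fun k : ℕ => C * (1 / ((k:ℝ)+1)^2)) := by
  apply Summable.mul_left
  have := (summable_nat_add_iff 1).2 (Real.summable_one_div_nat_pow.2 one_lt_two)
  simpa using this

lemma LZterm_summable (s : ℂ) (hs : 0 < s.re) : Summable (fun k => LZterm k s) :=
  Summable.of_norm_bounded (LZ_summ _) (fun k => LZterm_le k s hs ‖s‖ le_rfl)

lemma LZterm_diff (k : ℕ) (s : ℂ) (hs : 0 < s.re) : DifferentiableAt ℂ (LZterm k) s := by
  unfold LZterm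
  have : 1 + s / ((k:ℂ)+1) ∈ slitPlane := Or.inl (by
    rw [Complex.add_re, Complex.one_re]; linarith [LZ_re_div s hs k])
  apply DifferentiableAt.sub
  · fun_prop
  · exact DifferentiableAt.clog (by fun_prop) this

lemma LZLam_diff (s : ℂ) (hs : 0 < s.re) : DifferentiableAt ℂ LZLam s := by
  set R := ‖s‖ + 1
  have hU : IsOpen ({z : ℂ | 0 < z.re} ∩ Metric.ball 0 R) :=
    (isOpen_lt continuous_const Complex.continuous_re).inter Metric.isOpen_ball
  have h := differentiableOn_tsum_of_summable_norm (F := LZterm) (LZ_summ (R+R^2))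
    (fun k z hz => (LZterm_diff k z hz.1).differentiableWithinAt) hU
    (fun k z hz => LZterm_le k z hz.1 R (by simpa using (Metric.mem_ball.1 hz.2).le))
  have h2 := h.differentiableAt (x := s) (hU.mem_nhds ⟨hs, by simp [R]⟩)
  exact (DifferentiableAt.clog differentiableAt_id (Or.inl hs)).neg.add h2

lemma LZLam_tendsto (s : ℂ) (hs : 0 < s.re) :
    Tendsto (fun n : ℕ => - log s + ∑ k ∈ Finset.range n, LZterm k s) atTop (𝓝 (LZLam s)) :=
  ((LZterm_summable s hs).hasSum.tendsto_sum_nat).const_add _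

lemma LZLam_partial_exp (s : ℂ) (hs : 0 < s.re) (n : ℕ) :
    cexp (- log s + ∑ k ∈ Finset.range n, LZterm k s) =
      cexp (s * (Real.log (n+1) : ℝ)) * n.factorial / ∏ j ∈ Finset.range (n + 1), (s + j) := by
  have hne : ∀ j : ℕ, s + j ≠ 0 := by
    intro j h
    have := congrArg Complex.re h
    simp at this
    have : (0:ℝ) ≤ j := by positivity
    linarith
  induction n with
  | zero => 
    have := hne 0
    simp only [Nat.cast_zero, add_zero] at this
    simp [Complex.exp_neg, Complex.exp_log this]
  | succ n ih =>
    rw [Finset.sum_range_succ, ← add_assoc, Complex.exp_add, ih]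
    unfold LZterm
    have hk : (0:ℝ) < (n:ℝ) + 1 := by positivity
    have hk' : ((n:ℂ) + 1) ≠ 0 := by exact_mod_cast hk.ne'
    have e0 : 1 + s / ((n:ℂ)+1) = (s + (n+1 : ℕ)) / ((n:ℂ)+1) := by
      push_cast; field_simp; ring
    have h1 : 1 + s / ((n:ℂ)+1) ≠ 0 := by
      rw [e0]; exact div_ne_zero (hne _) hk'
    rw [Complex.exp_sub, Complex.exp_log h1, e0, Finset.prod_range_succ _ (n+1), Nat.factorial_succ]
    have e1 : Real.log (((n+1:ℕ):ℝ) + 1) = Real.log (n+1) + Real.log (1 + 1/((n:ℝ)+1)) := by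
      rw [← Real.log_mul hk.ne' (by positivity)]
      congr 1; push_cast; field_simp
    rw [e1]
    push_cast
    rw [mul_add, Complex.exp_add]
    have h2 := hne (n+1)
    have h3 : ∏ j ∈ Finset.range (n + 1), (s + (j:ℂ)) ≠ 0 := Finset.prod_ne_zero_iff.2 (fun j _ => hne j)
    push_cast at h2
    field_simp

lemma LZLam_exp (s : ℂ) (hs : 0 < s.re) : cexp (LZLam s) = Gamma s := by
  have h1 := (Complex.continuous_exp.tendsto _).comp (LZLam_tendsto s hs)
  have h2 := Complex.GammaSeq_tendsto_Gamma s
  have h3 : Tendsto (fun n : ℕ => cexp (s * ((Real.log (n+1) - Real.log n : ℝ) : ℂ))) atTop (𝓝 1) := by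
    have a := (Complex.continuous_ofReal.tendsto _).comp Real.tendsto_log_nat_add_one_sub_log
    have b := (Complex.continuous_exp.tendsto _).comp (a.const_mul s)
    simpa [Function.comp_def] using b
  have h4 := h2.mul h3
  rw [mul_one] at h4
  refine tendsto_nhds_unique h1 (h4.congr' ?_)
  filter_upwards [eventually_gt_atTop 0] with n hn
  simp only [Function.comp]
  rw [LZLam_partial_exp s hs, Complex.GammaSeq, Complex.cpow_def_of_ne_zero (by exact_mod_cast hn.ne')]
  have : (Complex.log (n:ℂ)) = ((Real.log n : ℝ) : ℂ) := by
    rw [Complex.natCast_log]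
  rw [this]
  have e : s * (Real.log (n+1) : ℝ) = ((Real.log n:ℝ):ℂ) * s + s * ((Real.log (n+1) - Real.log n : ℝ) : ℂ) := by
    push_cast; ring
  rw [e, Complex.exp_add]
  ring

lemma LZLam_im_partial (t : ℝ) (n : ℕ) :
    (- log (2 - t * I) + ∑ k ∈ Finset.range n, LZterm k (2 - t * I)).im =
      - (t * Real.log (n+1) - ∑ k ∈ Finset.range (n+1), Real.arctan (t / (k + 2))) := by
  induction n with
  | zero =>
    simp only [Finset.range_zero, Finset.sum_empty, add_zero, Complex.neg_im, Complex.log_im]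
    rw [LZ_arg_arctan _ (by simp)]
    simp [neg_div, Real.arctan_neg]
  | succ n ih =>
    rw [Finset.sum_range_succ, ← add_assoc, Complex.add_im, ih, Finset.sum_range_succ _ (n+1)]
    unfold LZterm
    have hk : (0:ℝ) < (n:ℝ) + 1 := by positivity
    have e1 : Real.log (((n+1:ℕ):ℝ) + 1) = Real.log (n+1) + Real.log (1 + 1/((n:ℝ)+1)) := by
      rw [← Real.log_mul hk.ne' (by positivity)]
      congr 1; push_cast; field_simp
    rw [e1, Complex.sub_im, Complex.log_im, LZ_arg_arctan]
    · have e2 : (1 + (2 - t * I) / ((n:ℂ)+1)) = (((n+3)/(n+1) : ℝ) : ℂ) + ((-t/(n+1) : ℝ) : ℂ) * I := by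
        have : ((n:ℂ)+1) ≠ 0 := by exact_mod_cast hk.ne'
        push_cast; field_simp; ring
      have e3 : (1 + (2 - t * I) / ((n:ℂ)+1)).im = -t/(n+1) := by rw [e2, Complex.add_im, Complex.im_ofReal_mul, Complex.ofReal_im]; simp only [Complex.I_im]; ring
      have e4 : (1 + (2 - t * I) / ((n:ℂ)+1)).re = (n+3)/(n+1) := by rw [e2, Complex.add_re, Complex.re_ofReal_mul, Complex.ofReal_re]; simp only [Complex.I_re]; ring
      rw [e3, e4]
      have e5 : -t/((n:ℝ)+1) / ((n+3)/(n+1)) = -(t / (n+3)) := by field_simp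
      rw [e5, Real.arctan_neg]
      have e6 : (((n+1:ℕ):ℝ) + 2) = n + 3 := by push_cast; ring
      rw [e6, Complex.im_mul_ofReal]
      simp
      ring
    · rw [Complex.add_re, Complex.one_re]
      linarith [LZ_re_div (2 - t * I) (by simp) n]

/-- Stirling for the argument of `Γ(2 - it)`. -/
lemma LZLam_im (t : ℝ) (ht : 1 ≤ t) : |(LZLam (2 - t * I)).im + (t * Real.log t - t)| ≤ 8 := by
  have h1 := ((Complex.continuous_im.tendsto _).comp (LZLam_tendsto (2 - t * I) (by simp))).neg
  have h2 := h1.sub (Real.tendsto_log_nat_add_one_sub_log.const_mul t)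
  rw [mul_zero, sub_zero] at h2
  have := LZ_phase_limit t (-(LZLam (2 - t * I)).im) ht (h2.congr ?_)
  · rw [← abs_neg]
    convert this using 2
    ring
  · intro n
    simp only [Function.comp]
    rw [LZLam_im_partial]
    ring

/-- polynomial growth of exponent `N` on the strip `A ≤ re s ≤ B` -/
def LZPG (A B : ℝ) (N : ℕ) (f : ℂ → ℂ) : Prop :=
  ∃ C : ℝ, 0 ≤ C ∧ ∀ s : ℂ, A ≤ s.re → s.re ≤ B → ‖f s‖ ≤ C * (‖s‖ + 1) ^ N

lemma LZPG.mono {A B : ℝ} {N M : ℕ} {f : ℂ → ℂ} (h : LZPG A B N f) (hNM : N ≤ M) : LZPG A B M f := by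
  obtain ⟨C, hC, h⟩ := h
  refine ⟨C, hC, fun s h1 h2 => (h s h1 h2).trans ?_⟩
  have : (1:ℝ) ≤ ‖s‖ + 1 := by linarith [norm_nonneg s]
  gcongr

lemma LZPG.add {A B : ℝ} {N : ℕ} {f g : ℂ → ℂ} (hf : LZPG A B N f) (hg : LZPG A B N g) :
    LZPG A B N (fun s => f s + g s) := by
  obtain ⟨C, hC, hf⟩ := hf
  obtain ⟨D, hD, hg⟩ := hg
  refine ⟨C + D, by positivity, fun s h1 h2 => ?_⟩
  rw [add_mul]
  exact (norm_add_le _ _).trans (add_le_add (hf s h1 h2) (hg s h1 h2))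

lemma LZPG.cmul {A B : ℝ} {N : ℕ} {f : ℂ → ℂ} (c : ℂ) (hf : LZPG A B N f) :
    LZPG A B N (fun s => c * f s) := by
  obtain ⟨C, hC, hf⟩ := hf
  refine ⟨‖c‖ * C, by positivity, fun s h1 h2 => ?_⟩
  rw [norm_mul, mul_assoc]
  exact mul_le_mul_of_nonneg_left (hf s h1 h2) (norm_nonneg _)

lemma LZPG.sum {ι : Type*} {A B : ℝ} {N : ℕ} (S : Finset ι) {f : ι → ℂ → ℂ}
    (hf : ∀ i ∈ S, LZPG A B N (f i)) : LZPG A B N (fun s => ∑ i ∈ S, f i s) := by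
  classical
  induction S using Finset.induction_on with
  | empty => exact ⟨0, le_rfl, fun s _ _ => by simp⟩
  | insert a S ha ih =>
    simp only [Finset.sum_insert ha]
    exact (hf a (by simp)).add (ih (fun i hi => hf i (by simp [hi])))

lemma LZPG.sub_one_mul {A B : ℝ} {N : ℕ} {f : ℂ → ℂ} (hf : LZPG A B N f) :
    LZPG A B (N+1) (fun s => (s - 1) * f s) := by
  obtain ⟨C, hC, hf⟩ := hf
  refine ⟨C, hC, fun s h1 h2 => ?_⟩
  rw [norm_mul]
  have h3 : ‖s - 1‖ ≤ ‖s‖ + 1 := by simpa using norm_sub_le s 1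
  calc ‖s-1‖ * ‖f s‖ ≤ (‖s‖ + 1) * (C * (‖s‖ + 1) ^ N) := by
        gcongr
        exact hf s h1 h2
    _ = _ := by ring

lemma LZPG_pow (A B : ℝ) (x : ℝ) (hx : 0 < x) (a : ℝ) :
    LZPG A B 0 (fun s => (x:ℂ) ^ ((a:ℂ) - s)) := by
  refine ⟨x^(a-A) + x^(a-B), by positivity, fun s h1 h2 => ?_⟩
  rw [Complex.norm_cpow_eq_rpow_re_of_pos hx]
  simp only [Complex.sub_re, Complex.ofReal_re, pow_zero, mul_one]
  rcases le_total 1 x with h | h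
  · have : x^(a - s.re) ≤ x^(a-A) := Real.rpow_le_rpow_of_exponent_le h (by linarith)
    have : 0 ≤ x^(a-B) := by positivity
    linarith
  · have : x^(a - s.re) ≤ x^(a-B) := Real.rpow_le_rpow_of_exponent_ge hx h (by linarith)
    have : 0 ≤ x^(a-A) := by positivity
    linarith

lemma LZ_tail (alp x d e E : ℝ) (h0 : 0 < alp) (h1 : alp ≤ 1) (hx : alp ≤ x) (he : d ≤ e)
    (hE : e - d ≤ E) : x ^ (-e) ≤ alp ^ (-E) * x ^ (-d) := by
  have hx0 : 0 < x := lt_of_lt_of_le h0 hx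
  have e1 : x ^ (-e) = x ^ (-(e-d)) * x ^ (-d) := by
    rw [← Real.rpow_add hx0]; congr 1; ring
  rw [e1]
  gcongr
  calc x ^ (-(e-d)) ≤ alp ^ (-(e-d)) := Real.rpow_le_rpow_of_nonpos h0 hx (by linarith)
    _ ≤ alp ^ (-E) := Real.rpow_le_rpow_of_exponent_ge h0 h1 (by linarith)

lemma LZ_summable_rpow (alp d : ℝ) (h0 : 0 < alp) (hd : 1 < d) :
    Summable (fun m : ℕ => ((m:ℝ) + alp) ^ (-d)) := by
  have := (Real.summable_one_div_nat_add_rpow alp d).2 hd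
  refine this.congr (fun m => ?_)
  have : 0 < (m:ℝ) + alp := by positivity
  rw [abs_of_pos this, Real.rpow_neg this.le, one_div]

lemma LZ_series (alp : ℝ) (h0 : 0 < alp) (h1 : alp ≤ 1) (u : ℕ → ℂ → ℂ) (n N : ℕ) (D : ℝ) (hD : 0 ≤ D)
    (hu : ∀ m, Differentiable ℂ (u m))
    (hb : ∀ (m : ℕ) (s : ℂ), 0 ≤ s.re + n → ‖u m s‖ ≤ D * (‖s‖ + 1) ^ N * ((m:ℝ) + alp) ^ (-(s.re + n))) :
    (∀ s : ℂ, 1 - n < s.re → Summable (fun m => u m s)) ∧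
    (∀ s : ℂ, 1 - n < s.re → DifferentiableAt ℂ (fun s => ∑' m, u m s) s) ∧
    ∀ B, LZPG (2 - n) B N (fun s => ∑' m, u m s) := by
  refine ⟨?_, ?_, ?_⟩
  · intro s hs
    refine Summable.of_norm_bounded ((LZ_summable_rpow alp (s.re + n) h0 (by linarith)).mul_left _)
      (fun m => hb m s (by linarith))
  · intro s hs
    set d := (1 + (s.re + n)) / 2 with hd
    have hd1 : 1 < d := by linarith
    set R := ‖s‖ + 1 with hR
    have hU : IsOpen ({z : ℂ | d < z.re + n} ∩ Metric.ball 0 R) :=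
      (isOpen_lt continuous_const (by fun_prop)).inter Metric.isOpen_ball
    have h := differentiableOn_tsum_of_summable_norm (F := u)
      (u := fun m => D * (R + 1)^N * alp ^ (-(R + n)) * ((m:ℝ) + alp) ^ (-d))
      ((LZ_summable_rpow alp d h0 hd1).mul_left _)
      (fun m => (hu m).differentiableOn) hU ?_
    · exact h.differentiableAt (hU.mem_nhds ⟨show d < s.re + n by linarith, by simp [R]⟩)
    · intro m z hz
      have hz1 : d < z.re + n := hz.1
      have hz2 : ‖z‖ < R := by simpa using hz.2
      refine (hb m z (by linarith)).trans ?_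
      have hzr := (Complex.re_le_norm z)
      have h3 := LZ_tail alp ((m:ℝ) + alp) d (z.re + n) (R + n) h0 h1
        (by linarith [Nat.cast_nonneg (α := ℝ) m]) hz1.le (by linarith)
      calc _ ≤ D * (R + 1)^N * (alp ^ (-(R + n)) * ((m:ℝ) + alp) ^ (-d)) := by gcongr
        _ = _ := by ring
  · intro B
    have hs2 := (LZ_summable_rpow alp 2 h0 one_lt_two)
    refine ⟨D * alp ^ (-(B + n)) * ∑' m : ℕ, ((m:ℝ) + alp) ^ (-(2:ℝ)), ?_, ?_⟩
    · have : 0 ≤ ∑' m : ℕ, ((m:ℝ) + alp) ^ (-(2:ℝ)) := tsum_nonneg (fun m => by positivity)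
      positivity
    · intro s hA hB
      have hb' : ∀ m, ‖u m s‖ ≤ D * (‖s‖ + 1) ^ N * alp ^ (-(B + n)) * ((m:ℝ) + alp) ^ (-(2:ℝ)) := by
        intro m
        refine (hb m s (by linarith)).trans ?_
        have h3 := LZ_tail alp ((m:ℝ) + alp) 2 (s.re + n) (B + n) h0 h1
          (by linarith [Nat.cast_nonneg (α := ℝ) m]) (by linarith) (by linarith)
        calc _ ≤ D * (‖s‖ + 1)^N * (alp ^ (-(B + n)) * ((m:ℝ) + alp) ^ (-(2:ℝ))) := by gcongr
          _ = _ := by ring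
      refine (tsum_of_norm_bounded (hs2.mul_left _).hasSum hb').trans ?_
      rw [tsum_mul_left]
      apply le_of_eq; ring

/-- iterated derivatives of `x ^ a` -/
noncomputable def LZP (a : ℂ) (i : ℕ) (x : ℝ) : ℂ := (∏ l ∈ Finset.range i, (a - l)) * (x:ℂ) ^ (a - i)

lemma LZP_deriv (a : ℂ) (i : ℕ) (x : ℝ) (hx : 0 < x) : HasDerivAt (LZP a i) (LZP a (i+1) x) x := by
  have h1 : HasDerivAt (fun z : ℂ => z ^ (a - i)) ((a - i) * (x:ℂ) ^ (a - i - 1)) (x:ℂ) := by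
    have := (hasDerivAt_id (x:ℂ)).cpow_const (c := a - i) (Or.inl (by simpa using hx))
    simpa using this
  have h2 := (h1.comp_ofReal).const_mul (∏ l ∈ Finset.range i, (a - l))
  have h3 : (∏ l ∈ Finset.range i, (a - l)) * ((a - i) * (x:ℂ) ^ (a - i - 1)) = LZP a (i+1) x := by
    unfold LZP
    rw [Finset.prod_range_succ]; push_cast
    rw [mul_assoc, sub_sub]
  rw [h3] at h2
  exact h2

lemma LZP_norm (a : ℂ) (i : ℕ) (x : ℝ) (hx : 0 < x) : ‖LZP a i x‖ ≤ (‖a‖ + i)^i * x ^ (a.re - i) := by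
  unfold LZP
  rw [norm_mul, norm_prod, Complex.norm_cpow_eq_rpow_re_of_pos hx]
  simp only [Complex.sub_re, Complex.natCast_re]
  gcongr
  calc ∏ l ∈ Finset.range i, ‖a - l‖ ≤ ∏ l ∈ Finset.range i, (‖a‖ + i) := by
        apply Finset.prod_le_prod (fun _ _ => norm_nonneg _)
        intro l hl
        refine (norm_sub_le _ _).trans ?_
        simp only [Complex.norm_natCast]
        have : (l:ℝ) ≤ i := by exact_mod_cast (Finset.mem_range.1 hl).le
        linarith
    _ = _ := by simp

lemma LZP_zero (a : ℂ) (x : ℝ) : LZP a 0 x = (x:ℂ)^a := by simp [LZP]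

/-- for `y ≥ x` and non-positive exponent -/
lemma LZP_norm' (a : ℂ) (i : ℕ) (x y : ℝ) (hx : 0 < x) (hxy : x ≤ y) (ha : a.re ≤ i) :
    ‖LZP a i y‖ ≤ (‖a‖ + i)^i * x ^ (a.re - i) := by
  refine (LZP_norm a i y (lt_of_lt_of_le hx hxy)).trans ?_
  have h2 : y ^ (a.re - i) ≤ x ^ (a.re - i) :=
    Real.rpow_le_rpow_of_nonpos hx hxy (by linarith)
  gcongr

lemma LZ_mvt (f f' : ℝ → ℂ) (x h B : ℝ) (hh : 0 ≤ h) (hd : ∀ y, x ≤ y → HasDerivAt f (f' y) y)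
    (hB : ∀ y, x ≤ y → y ≤ x + h → ‖f' y‖ ≤ B) : ‖f (x+h) - f x‖ ≤ B * h := by
  have := Convex.norm_image_sub_le_of_norm_hasDerivWithin_le (s := Icc x (x+h)) (f := f) (f' := f')
    (C := B) (x := x) (y := x + h)
    (fun y hy => (hd y hy.1).hasDerivWithinAt) (fun y hy => hB y hy.1 hy.2) (convex_Icc _ _)
    ⟨le_rfl, by linarith⟩ ⟨by linarith, le_rfl⟩
  simpa [abs_of_nonneg hh] using this

lemma LZ_fd_deriv (P : ℕ → ℝ → ℂ) (hP : ∀ i x, 0 < x → HasDerivAt (P i) (P (i+1) x) x) (n : ℕ) :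
    ∀ i x, 0 < x → HasDerivAt ((fwdDiff (1:ℝ))^[n] (P i)) ((fwdDiff (1:ℝ))^[n] (P (i+1)) x) x := by
  induction n with
  | zero => intro i x hx; simpa using hP i x hx
  | succ n ih =>
    intro i x hx
    simp only [Function.iterate_succ_apply']
    have h1 := (ih i (x+1) (by linarith)).comp_add_const x 1
    exact h1.sub (ih i x hx)

lemma LZ_fd_bound (P : ℕ → ℝ → ℂ) (hP : ∀ i x, 0 < x → HasDerivAt (P i) (P (i+1) x) x) (B : ℝ) (n : ℕ) :
    ∀ i x, 0 < x → (∀ y, x ≤ y → ‖P (i+n) y‖ ≤ B) → ‖(fwdDiff (1:ℝ))^[n] (P i) x‖ ≤ B := by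
  induction n with
  | zero => intro i x hx h; simpa using h x le_rfl
  | succ n ih =>
    intro i x hx h
    rw [Function.iterate_succ_apply']
    have := LZ_mvt ((fwdDiff (1:ℝ))^[n] (P i)) ((fwdDiff (1:ℝ))^[n] (P (i+1))) x 1 B zero_le_one
      (fun y hy => LZ_fd_deriv P hP n i y (by linarith)) (fun y hy _ => ih (i+1) y (by linarith) (fun z hz => by
        have := h z (by linarith)
        rwa [show i + (n+1) = i + 1 + n by ring] at this))
    simpa [fwdDiff] using this

lemma LZ_taylor (P : ℕ → ℝ → ℂ) (hP : ∀ i x, 0 < x → HasDerivAt (P i) (P (i+1) x) x) (B x : ℝ) (hx : 0 < x)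
    (n : ℕ) : ∀ i, (∀ y, x ≤ y → ‖P (i+n) y‖ ≤ B) → ∀ h, 0 ≤ h →
      ‖P i (x + h) - ∑ j ∈ Finset.range n, P (i+j) x * (h:ℂ)^j / (j.factorial : ℂ)‖ ≤ B * h ^ n := by
  induction n with
  | zero => intro i hB h hh; simpa using hB (x+h) (by linarith)
  | succ n ih =>
    intro i hB h hh
    have hB' : ∀ y, x ≤ y → ‖P (i + 1 + n) y‖ ≤ B := by
      intro y hy
      have := hB y hy
      rwa [show i + (n+1) = i + 1 + n by ring] at this
    have hB0 : 0 ≤ B := (norm_nonneg _).trans (hB x le_rfl)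
    have key := LZ_mvt
      (fun y => P i (x + y) - ∑ j ∈ Finset.range (n+1), P (i+j) x * (y:ℂ)^j / (j.factorial : ℂ))
      (fun y => P (i+1) (x + y) - ∑ j ∈ Finset.range n, P (i+1+j) x * (y:ℂ)^j / (j.factorial : ℂ)) 0 h
      (B * h ^ n) hh ?_ ?_
    · simp only [zero_add, add_zero] at key
      have e : P i x - ∑ j ∈ Finset.range (n+1), P (i+j) x * ((0:ℝ):ℂ)^j / (j.factorial : ℂ) = 0 := by
        rw [Finset.sum_range_succ']
        simp
      rw [e, sub_zero] at key
      calc _ ≤ _ := key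
        _ = _ := by ring
    · intro y hy
      have h1 := (hP i (x+y) (by linarith)).comp_const_add x y
      have h2 : HasDerivAt (fun y : ℝ => ∑ j ∈ Finset.range (n+1), P (i+j) x * (y:ℂ)^j / (j.factorial : ℂ))
          (∑ j ∈ Finset.range n, P (i+1+j) x * (y:ℂ)^j / (j.factorial : ℂ)) y := by
        simp only [Finset.sum_range_succ' _ n, pow_zero, mul_one]
        have : ∑ j ∈ Finset.range n, P (i+1+j) x * (y:ℂ)^j / (j.factorial : ℂ) =
          ∑ j ∈ Finset.range n, P (i+(j+1)) x * (((j+1:ℕ):ℂ) * (y:ℂ)^j) / ((j+1).factorial : ℂ) := by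
          apply Finset.sum_congr rfl
          intro j _
          rw [Nat.factorial_succ, show i + 1 + j = i + (j+1) by ring]
          have : ((j+1:ℕ):ℂ) ≠ 0 := by exact_mod_cast Nat.succ_ne_zero j
          have h3 : (j.factorial : ℂ) ≠ 0 := by exact_mod_cast Nat.factorial_ne_zero j
          push_cast at this ⊢
          field_simp
        rw [this]
        refine HasDerivAt.add_const (f := fun y : ℝ => ∑ j ∈ Finset.range n, P (i+(j+1)) x * (y:ℂ)^(j+1) / ((j+1).factorial : ℂ)) _ (HasDerivAt.fun_sum (fun j _ => ?_))
        have h4 : HasDerivAt (fun y : ℝ => (y:ℂ)^(j+1)) (((j+1:ℕ):ℂ) * (y:ℂ)^j) y := by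
          have := (hasDerivAt_pow (j+1) (y:ℂ)).comp_ofReal
          simpa using this
        exact (h4.const_mul _).div_const _
      exact h1.sub h2
    · intro y hy1 hy2
      refine (ih (i+1) hB' y hy1).trans ?_
      gcongr
      linarith

noncomputable def LZE (q : ℂ) (alp : ℝ) (n : ℕ) (s : ℂ) : ℂ :=
  ∑ j ∈ Finset.range n, q^j / (1-q)^(j+1) * (fwdDiff (1:ℝ))^[j] (LZP (-s) 0) alp +
    (q/(1-q))^n * ∑' m : ℕ, q^m * (fwdDiff (1:ℝ))^[n] (LZP (-s) 0) (m + alp)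

lemma LZ_abel_step (q : ℂ) (hq0 : q ≠ 0) (hq1 : q ≠ 1) (alp : ℝ) (g : ℝ → ℂ)
    (hs : Summable (fun m : ℕ => q^m * g (m + alp))) :
    Summable (fun m : ℕ => q^m * (fwdDiff (1:ℝ) g) (m + alp)) ∧
    ∑' m : ℕ, q^m * g (m+alp) = g alp / (1-q) + q / (1-q) * ∑' m : ℕ, q^m * (fwdDiff (1:ℝ) g) (m + alp) := by
  have h1 : Summable (fun m : ℕ => q^(m+1) * g ((m+1:ℕ) + alp)) := (summable_nat_add_iff (f := fun m : ℕ => q^m * g (m + alp)) 1).2 hs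
  have h2 : ∀ m : ℕ, q^m * (fwdDiff (1:ℝ) g) (m + alp) = q⁻¹ * (q^(m+1) * g ((m+1:ℕ) + alp)) - q^m * g (m + alp) := by
    intro m
    simp only [fwdDiff]
    push_cast
    rw [show (m:ℝ) + alp + 1 = m + 1 + alp by ring]
    field_simp
    ring
  have h3 := (h1.mul_left q⁻¹)
  refine ⟨(h3.sub hs).congr (fun m => (h2 m).symm), ?_⟩
  rw [tsum_congr h2, h3.tsum_sub hs, tsum_mul_left, hs.tsum_eq_zero_add]
  have : 1 - q ≠ 0 := sub_ne_zero.2 (Ne.symm hq1)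
  simp only [pow_zero, one_mul, Nat.cast_zero, zero_add]
  field_simp
  ring

lemma LZ_abel (q : ℂ) (hq0 : q ≠ 0) (hq1 : q ≠ 1) (alp : ℝ) (g : ℝ → ℂ)
    (hs : Summable (fun m : ℕ => q^m * g (m + alp))) (n : ℕ) :
    Summable (fun m : ℕ => q^m * ((fwdDiff (1:ℝ))^[n] g) (m + alp)) ∧
    ∑' m : ℕ, q^m * g (m+alp) = ∑ j ∈ Finset.range n, q^j / (1-q)^(j+1) * (fwdDiff (1:ℝ))^[j] g alp +
      (q/(1-q))^n * ∑' m : ℕ, q^m * (fwdDiff (1:ℝ))^[n] g (m + alp) := by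
  induction n with
  | zero => simpa using hs
  | succ n ih =>
    obtain ⟨h1, h2⟩ := ih
    obtain ⟨h3, h4⟩ := LZ_abel_step q hq0 hq1 alp _ h1
    simp only [Function.iterate_succ_apply']
    refine ⟨h3, ?_⟩
    rw [h2, h4, Finset.sum_range_succ]
    generalize ∑' m : ℕ, q^m * fwdDiff 1 ((fwdDiff 1)^[n] g) (m + alp) = Z
    simp only [div_eq_mul_inv, mul_pow, pow_succ, mul_inv, inv_pow]
    ring

lemma LZ_fd_differentiable (x : ℝ) (hx : 0 < x) (n : ℕ) :
    Differentiable ℂ (fun s : ℂ => (fwdDiff (1:ℝ))^[n] (LZP (-s) 0) x) := by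
  simp only [fwdDiff_iter_eq_sum_shift, LZP_zero, zsmul_eq_mul]
  intro s
  apply DifferentiableAt.fun_sum
  intro k _
  apply DifferentiableAt.const_mul
  apply DifferentiableAt.const_cpow (by fun_prop)
  left
  have : 0 < x + k • (1:ℝ) := by simp; positivity
  exact_mod_cast this.ne'

lemma LZ_fd_PG (A B x : ℝ) (hx : 0 < x) (n : ℕ) :
    LZPG A B 0 (fun s : ℂ => (fwdDiff (1:ℝ))^[n] (LZP (-s) 0) x) := by
  simp only [fwdDiff_iter_eq_sum_shift, LZP_zero, zsmul_eq_mul]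
  apply LZPG.sum
  intro k _
  apply LZPG.cmul
  have : 0 < x + k • (1:ℝ) := by simp; positivity
  have := LZPG_pow A B _ this 0
  simpa using this

lemma LZ_fd_norm (x : ℝ) (hx : 0 < x) (n : ℕ) (s : ℂ) (hs : 0 ≤ s.re + n) :
    ‖(fwdDiff (1:ℝ))^[n] (LZP (-s) 0) x‖ ≤ ((n:ℝ)+1)^n * (‖s‖ + 1)^n * x ^ (-(s.re+n)) := by
  refine LZ_fd_bound (LZP (-s)) (fun i x hx => LZP_deriv _ i x hx) _ n 0 x hx ?_
  intro y hy
  rw [zero_add]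
  refine (LZP_norm' (-s) n x y hx hy (by simp; linarith)).trans ?_
  have e : (-s).re - n = -(s.re + n) := by simp; ring
  rw [e, norm_neg, ← mul_pow]
  gcongr
  nlinarith [norm_nonneg s, Nat.cast_nonneg (α := ℝ) n]

lemma LZE_series (q : ℂ) (hq : ‖q‖ ≤ 1) (alp : ℝ) (h0 : 0 < alp) (h1 : alp ≤ 1) (n : ℕ) :
    (∀ s : ℂ, 1 - n < s.re → Summable (fun m : ℕ => q^m * (fwdDiff (1:ℝ))^[n] (LZP (-s) 0) (m + alp))) ∧
    (∀ s : ℂ, 1 - n < s.re → DifferentiableAt ℂ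
      (fun s => ∑' m : ℕ, q^m * (fwdDiff (1:ℝ))^[n] (LZP (-s) 0) (m + alp)) s) ∧
    ∀ B, LZPG (2 - n) B n (fun s => ∑' m : ℕ, q^m * (fwdDiff (1:ℝ))^[n] (LZP (-s) 0) (m + alp)) := by
  refine LZ_series alp h0 h1 (fun m s => q^m * (fwdDiff (1:ℝ))^[n] (LZP (-s) 0) (m + alp)) n n
    (((n:ℝ)+1)^n) (by positivity) ?_ ?_
  · intro m
    exact (LZ_fd_differentiable ((m:ℝ)+alp) (by positivity) n).const_mul _
  · intro m s hs
    rw [norm_mul, norm_pow]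
    have := LZ_fd_norm ((m:ℝ)+alp) (by positivity) n s hs
    have h3 : ‖q‖^m ≤ 1 := pow_le_one₀ (norm_nonneg _) hq
    calc _ ≤ 1 * _ := mul_le_mul_of_nonneg_right h3 (norm_nonneg _)
      _ ≤ _ := by rw [one_mul]; exact this

lemma LZE_diff (q : ℂ) (hq : ‖q‖ ≤ 1) (alp : ℝ) (h0 : 0 < alp) (h1 : alp ≤ 1) (n : ℕ) (s : ℂ)
    (hs : 1 - n < s.re) : DifferentiableAt ℂ (LZE q alp n) s := by
  unfold LZE
  refine DifferentiableAt.add ?_ (((LZE_series q hq alp h0 h1 n).2.1 s hs).const_mul _)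
  apply DifferentiableAt.fun_sum
  intro j _
  exact ((LZ_fd_differentiable alp h0 j) s).const_mul _

lemma LZE_PG (q : ℂ) (hq : ‖q‖ ≤ 1) (alp : ℝ) (h0 : 0 < alp) (h1 : alp ≤ 1) (n : ℕ) (B : ℝ) :
    LZPG (2-n) B n (LZE q alp n) := by
  unfold LZE
  refine LZPG.add (LZPG.sum _ (fun j _ => ?_)) (((LZE_series q hq alp h0 h1 n).2.2 B).cmul _)
  exact ((LZ_fd_PG _ _ alp h0 j).mono (Nat.zero_le n)).cmul _

lemma LZE_eq (q : ℂ) (hq0 : q ≠ 0) (hq1 : q ≠ 1) (alp : ℝ) (n : ℕ) (s : ℂ)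
    (hs : Summable (fun m : ℕ => q^m * (((m + alp : ℝ)) : ℂ) ^ (-s))) :
    LZE q alp n s = ∑' m : ℕ, q^m * (((m + alp : ℝ)) : ℂ) ^ (-s) := by
  have := (LZ_abel q hq0 hq1 alp (LZP (-s) 0) (by simpa only [LZP_zero] using hs) n).2
  simp only [LZP_zero] at this
  rw [this]
  rfl

lemma LZ_summable_series (q : ℂ) (hq : ‖q‖ ≤ 1) (alp : ℝ) (h0 : 0 < alp) (s : ℂ) (hs : 1 < s.re) :
    Summable (fun m : ℕ => q^m * (((m + alp : ℝ)) : ℂ) ^ (-s)) := by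
  refine Summable.of_norm_bounded (LZ_summable_rpow alp s.re h0 hs) (fun m => ?_)
  rw [norm_mul, norm_pow, Complex.norm_cpow_eq_rpow_re_of_pos (by positivity), Complex.neg_re]
  have h3 : ‖q‖^m ≤ 1 := pow_le_one₀ (norm_nonneg _) hq
  calc _ ≤ 1 * _ := mul_le_mul_of_nonneg_right h3 (by positivity)
    _ = _ := one_mul _

/-! the case `q = 1` -/

lemma LZ_weights (N : ℕ) : ∃ w : ℕ → ℂ, ∀ p : Polynomial ℂ, p.degree < N →
    ∑ j ∈ Finset.range N, w j * p.eval (j:ℂ) = p.derivative.eval 0 := by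
  refine ⟨fun j => (Lagrange.basis (Finset.range N) (fun j : ℕ => (j:ℂ)) j).derivative.eval 0, ?_⟩
  intro p hp
  have h := Lagrange.eq_interpolate (s := Finset.range N) (v := fun j : ℕ => (j:ℂ)) (f := p)
    (fun a _ b _ hab => Nat.cast_injective hab) (by simpa using hp)
  rw [Lagrange.interpolate_apply] at h
  conv_rhs => rw [h]
  rw [Polynomial.derivative_sum, Polynomial.eval_finsetSum]
  apply Finset.sum_congr rfl
  intro j _
  simp [mul_comm]

lemma LZ_weights_bound (N : ℕ) (hN : 2 ≤ N) (w : ℕ → ℂ) (hw : ∀ p : Polynomial ℂ, p.degree < N →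
    ∑ j ∈ Finset.range N, w j * p.eval (j:ℂ) = p.derivative.eval 0)
    (P : ℕ → ℝ → ℂ) (hP : ∀ i x, 0 < x → HasDerivAt (P i) (P (i+1) x) x) (B x : ℝ) (hx : 0 < x)
    (hB : ∀ y, x ≤ y → ‖P N y‖ ≤ B) :
    ‖∑ j ∈ Finset.range N, w j * P 0 (x + j) - P 1 x‖ ≤ (∑ j ∈ Finset.range N, ‖w j‖ * (j:ℝ)^N) * B := by
  set p : Polynomial ℂ := ∑ j ∈ Finset.range N, Polynomial.C (P j x / (j.factorial:ℂ)) * Polynomial.X^j with hp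
  have hdeg : p.degree < N := by
    refine (Polynomial.degree_sum_le _ _).trans_lt ?_
    rw [Finset.sup_lt_iff (by exact_mod_cast WithBot.bot_lt_coe N)]
    intro j hj
    refine (Polynomial.degree_C_mul_X_pow_le _ _).trans_lt ?_
    exact_mod_cast Finset.mem_range.1 hj
  have hw1 := hw p hdeg
  have hd : p.derivative.eval 0 = P 1 x := by
    have : p.derivative.eval 0 = p.coeff 1 := by
      rw [← Polynomial.coeff_zero_eq_eval_zero, Polynomial.coeff_derivative]; simp
    rw [this, hp, Polynomial.finsetSum_coeff]
    simp only [Polynomial.coeff_C_mul, Polynomial.coeff_X_pow]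
    rw [Finset.sum_eq_single 1]
    · simp
    · intro b _ hb; simp [Ne.symm hb]
    · intro h; simp at h; omega
  rw [← hd, ← hw1, ← Finset.sum_sub_distrib, Finset.sum_mul]
  refine (norm_sum_le _ _).trans (Finset.sum_le_sum (fun j _ => ?_))
  rw [← mul_sub, norm_mul, mul_assoc]
  gcongr
  have := LZ_taylor P hP B x hx N 0 (by simpa using hB) j (Nat.cast_nonneg j)
  have e : p.eval (j:ℂ) = ∑ k ∈ Finset.range N, P (0+k) x * ((j:ℝ):ℂ)^k / (k.factorial : ℂ) := by
    rw [hp, Polynomial.eval_finsetSum]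
    apply Finset.sum_congr rfl
    intro k _
    simp
    ring
  rw [e, mul_comm]
  exact this

noncomputable def LZG (w : ℕ → ℂ) (N : ℕ) (x : ℝ) (s : ℂ) : ℂ :=
  ∑ j ∈ Finset.range N, w j * ∑ i ∈ Finset.range j, ((x + i : ℝ) : ℂ) ^ (1 - s)

lemma LZG_step (w : ℕ → ℂ) (N : ℕ) (hw : ∑ j ∈ Finset.range N, w j = 0) (x : ℝ) (s : ℂ) :
    LZG w N (x+1) s - LZG w N x s = ∑ j ∈ Finset.range N, w j * ((x + j : ℝ) : ℂ)^(1-s) := by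
  unfold LZG
  have h : ∀ j, ∑ i ∈ Finset.range j, ((x + 1 + i : ℝ) : ℂ) ^ (1 - s) =
      ∑ i ∈ Finset.range j, ((x + i : ℝ) : ℂ) ^ (1 - s) + ((x + j : ℝ) : ℂ)^(1-s) - ((x:ℝ):ℂ)^(1-s) := by
    intro j
    have := Finset.sum_range_succ (fun i : ℕ => ((x + i : ℝ) : ℂ) ^ (1 - s)) j
    rw [← this, Finset.sum_range_succ']
    simp only [Nat.cast_zero, add_zero, add_sub_cancel_right]
    apply Finset.sum_congr rfl
    intro i _
    push_cast
    congr 1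
    ring
  simp only [h]
  rw [← Finset.sum_sub_distrib]
  have h2 : ∀ j ∈ Finset.range N, (w j * (∑ i ∈ Finset.range j, ((x + i : ℝ) : ℂ) ^ (1 - s) + ((x + j : ℝ) : ℂ)^(1-s) - ((x:ℝ):ℂ)^(1-s)) - w j * ∑ i ∈ Finset.range j, ((x + i : ℝ) : ℂ) ^ (1 - s)) = w j * ((x + j : ℝ) : ℂ)^(1-s) - w j * ((x:ℝ):ℂ)^(1-s) := by
    intro j _; ring
  rw [Finset.sum_congr rfl h2, Finset.sum_sub_distrib, ← Finset.sum_mul, hw, zero_mul, sub_zero]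

lemma LZG_tendsto (w : ℕ → ℂ) (N : ℕ) (alp : ℝ) (h0 : 0 < alp) (s : ℂ) (hs : 1 < s.re) :
    Tendsto (fun m : ℕ => LZG w N (m + alp) s) atTop (𝓝 0) := by
  have : (0:ℂ) = ∑ j ∈ Finset.range N, w j * ∑ i ∈ Finset.range j, (0:ℂ) := by simp
  rw [this]
  unfold LZG
  refine tendsto_finsetSum _ (fun j _ => Tendsto.const_mul _ (tendsto_finsetSum _ (fun i _ => ?_)))
  rw [tendsto_zero_iff_norm_tendsto_zero]
  have e : ∀ m : ℕ, ‖(((m:ℝ) + alp + i : ℝ) : ℂ)^(1-s)‖ = ((m:ℝ) + alp + i)^(-(s.re - 1)) := by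
    intro m
    rw [Complex.norm_cpow_eq_rpow_re_of_pos (by positivity)]
    congr 1; simp
  simp only [e]
  refine (tendsto_rpow_neg_atTop (by linarith)).comp ?_
  exact tendsto_atTop_add_const_right _ _ (tendsto_atTop_add_const_right _ _ tendsto_natCast_atTop_atTop)

lemma LZ_cont_one (alp : ℝ) (h0 : 0 < alp) (h1 : alp ≤ 1) (n : ℕ) (hn : 1 ≤ n) :
    ∃ H : ℂ → ℂ, (∀ s : ℂ, 1 - n < s.re → DifferentiableAt ℂ H s) ∧
      (∀ s : ℂ, 1 < s.re → H s = (s-1) * ∑' m : ℕ, (((m + alp : ℝ)) : ℂ) ^ (-s)) ∧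
      ∀ B, LZPG (2-n) B (n+1) H := by
  obtain ⟨w, hw⟩ := LZ_weights (n+1)
  have hw0 : ∑ j ∈ Finset.range (n+1), w j = 0 := by
    have := hw 1 (by rw [Polynomial.degree_one]; exact_mod_cast Nat.succ_pos n)
    simpa using this
  set W := ∑ j ∈ Finset.range (n+1), ‖w j‖ * (j:ℝ)^(n+1) with hW
  have hW0 : 0 ≤ W := Finset.sum_nonneg (fun j _ => by positivity)
  set u : ℕ → ℂ → ℂ := fun m s => ∑ j ∈ Finset.range (n+1), w j * (((m:ℝ) + alp + j : ℝ):ℂ)^(1-s)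
    + (s - 1) * (((m + alp : ℝ)) : ℂ) ^ (-s) with hu
  have hdiffpow : ∀ x : ℝ, 0 < x → ∀ a : ℂ, Differentiable ℂ (fun s : ℂ => (x:ℂ)^(a - s)) := by
    intro x hx a s
    apply DifferentiableAt.const_cpow (by fun_prop)
    left; exact_mod_cast hx.ne'
  have key := LZ_series alp h0 h1 u n (n+1) (W * ((n:ℝ)+2)^(n+1)) (by positivity) ?_ ?_
  · have hGd : ∀ s, DifferentiableAt ℂ (LZG w (n+1) alp) s := by
      intro s
      unfold LZG
      refine DifferentiableAt.fun_sum (fun j _ => DifferentiableAt.const_mul (DifferentiableAt.fun_sum (fun i _ => ?_)) _)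
      exact hdiffpow (alp + i) (by positivity) 1 s
    refine ⟨fun s => ∑' m, u m s + LZG w (n+1) alp s, ?_, ?_, ?_⟩
    · intro s hs
      exact (key.2.1 s hs).add (hGd s)
    · intro s hs
      have hsu := key.1 s (by linarith [Nat.cast_nonneg (α := ℝ) n])
      have hz : Summable (fun m : ℕ => (s - 1) * (((m + alp : ℝ)) : ℂ) ^ (-s)) := by
        have := LZ_summable_series 1 (by simp) alp h0 s hs
        simp only [one_pow, one_mul] at this
        exact this.mul_left _
      have hd := hsu.sub hz
      have ht : Tendsto (fun M : ℕ => ∑ m ∈ Finset.range M, (u m s - (s - 1) * (((m + alp : ℝ)) : ℂ) ^ (-s)))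
          atTop (𝓝 (0 - LZG w (n+1) alp s)) := by
        refine ((LZG_tendsto w (n+1) alp h0 s hs).sub_const _).congr ?_
        intro M
        induction M with
        | zero => simp
        | succ M ih =>
          rw [Finset.sum_range_succ, ← ih]
          have := LZG_step w (n+1) hw0 (M+alp) s
          simp only [hu, add_sub_cancel_right]
          rw [← this]
          push_cast
          rw [show (M:ℝ) + 1 + alp = M + alp + 1 by ring]
          ring
      have := tendsto_nhds_unique hd.hasSum.tendsto_sum_nat ht
      rw [hsu.tsum_sub hz, tsum_mul_left] at this
      linear_combination this
    · intro B
      refine (key.2.2 B).add ?_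
      unfold LZG
      refine LZPG.mono (N := 0) (LZPG.sum _ (fun j _ => LZPG.cmul _ (LZPG.sum _ (fun i _ => ?_)))) (Nat.zero_le _)
      simpa using LZPG_pow (2-n) B (alp + i) (by positivity) 1
  · intro m s
    simp only [hu]
    refine DifferentiableAt.add (DifferentiableAt.fun_sum (fun j _ => ?_)) (DifferentiableAt.mul (by fun_prop) ?_)
    · exact ((hdiffpow ((m:ℝ) + alp + j) (by positivity) 1) s).const_mul _
    · simpa using (hdiffpow ((m:ℝ) + alp) (by positivity) 0) s
  · intro m s hs
    have hx : 0 < (m:ℝ) + alp := by positivity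
    have := LZ_weights_bound (n+1) (by omega) w hw (LZP (1-s)) (fun i x hx => LZP_deriv _ i x hx)
      (((n:ℝ)+2)^(n+1) * (‖s‖+1)^(n+1) * ((m:ℝ)+alp)^(-(s.re+n))) ((m:ℝ)+alp) hx ?_
    · simp only [hu]
      have e1 : LZP (1-s) 1 (m+alp) = (1-s) * (((m:ℝ)+alp : ℝ):ℂ)^(-s) := by
        simp [LZP]
      simp only [LZP_zero] at this
      rw [e1] at this
      have e2 : (1-s) * (((m:ℝ)+alp : ℝ):ℂ)^(-s) = -((s-1) * (((m:ℝ)+alp : ℝ):ℂ)^(-s)) := by ring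
      rw [e2, sub_neg_eq_add] at this
      refine this.trans (le_of_eq ?_)
      rw [← hW]; ring
    · intro y hy
      refine (LZP_norm' (1-s) (n+1) _ y hx hy (by simp; linarith)).trans ?_
      have e : (1-s).re - (n+1:ℕ) = -(s.re + n) := by simp; ring
      rw [e, ← mul_pow]
      gcongr
      have h5 : ‖1 - s‖ ≤ 1 + ‖s‖ := by simpa using norm_sub_le 1 s
      push_cast
      nlinarith [norm_nonneg s, Nat.cast_nonneg (α := ℝ) n]

lemma LZ_identity (n : ℕ) (E F : ℂ → ℂ) (hE : ∀ s : ℂ, 1 - n < s.re → 0 < s.im → DifferentiableAt ℂ E s)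
    (hF : ∀ s : ℂ, 1 - n < s.re → 0 < s.im → DifferentiableAt ℂ F s)
    (hEF : ∀ s : ℂ, 1 < s.re → 0 < s.im → E s = F s) (s : ℂ) (hs : 1 - n < s.re) (hs' : 0 < s.im) : E s = F s := by
  set U : Set ℂ := {z | 1 - n < z.re} ∩ {z | 0 < z.im} with hU
  have hUo : IsOpen U := (isOpen_lt continuous_const Complex.continuous_re).inter
    (isOpen_lt continuous_const Complex.continuous_im)
  have hUc : Convex ℝ U := (convex_halfSpace_re_gt _).inter (convex_halfSpace_im_gt _)
  have hE' : AnalyticOnNhd ℂ E U := DifferentiableOn.analyticOnNhd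
    (fun z hz => (hE z hz.1 hz.2).differentiableWithinAt) hUo
  have hF' : AnalyticOnNhd ℂ F U := DifferentiableOn.analyticOnNhd
    (fun z hz => (hF z hz.1 hz.2).differentiableWithinAt) hUo
  have h2 : (2 + I : ℂ) ∈ U := ⟨by show 1 - (n:ℝ) < (2 + I : ℂ).re; simp; linarith [Nat.cast_nonneg (α := ℝ) n], by show 0 < (2 + I : ℂ).im; simp⟩
  refine hE'.eqOn_of_preconnected_of_eventuallyEq hF' hUc.isPreconnected h2 ?_ ⟨hs, hs'⟩
  have hV : IsOpen ({z : ℂ | 1 < z.re} ∩ {z | 0 < z.im}) := (isOpen_lt continuous_const Complex.continuous_re).inter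
    (isOpen_lt continuous_const Complex.continuous_im)
  filter_upwards [hV.mem_nhds (x := 2 + I) ⟨by show 1 < (2 + I : ℂ).re; simp, by show 0 < (2 + I : ℂ).im; simp⟩] with z hz
  exact hEF z hz.1 hz.2

noncomputable def LZq (lam : ℝ) : ℂ := cexp (2 * Real.pi * I * lam)

lemma LZq_norm (lam : ℝ) : ‖LZq lam‖ = 1 := by
  unfold LZq
  rw [show (2 * Real.pi * I * lam : ℂ) = ((2 * Real.pi * lam : ℝ) : ℂ) * I by push_cast; ring]
  exact Complex.norm_exp_ofReal_mul_I _

lemma LZq_ne_zero (lam : ℝ) : LZq lam ≠ 0 := Complex.exp_ne_zero _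

lemma LZq_ne_one (lam : ℝ) (h0 : 0 < lam) (h1 : lam < 1) : LZq lam ≠ 1 := by
  unfold LZq
  intro h
  rw [Complex.exp_eq_one_iff] at h
  obtain ⟨n, hn⟩ := h
  have h2 : (2 * Real.pi * I : ℂ) * lam = (2 * Real.pi * I : ℂ) * n := by rw [hn]; ring
  have h3 := mul_left_cancel₀ Complex.two_pi_I_ne_zero h2
  have h4 : lam = n := by exact_mod_cast h3
  rw [h4] at h0 h1
  have a : (0:ℤ) < n := by exact_mod_cast h0
  have b : n < (1:ℤ) := by exact_mod_cast h1
  omega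

lemma LZ_lerchSeries_eq (lam alp : ℝ) (s : ℂ) :
    lerchSeries lam alp s = ∑' m : ℕ, LZq lam ^ m * (((m + alp : ℝ)) : ℂ) ^ (-s) := by
  unfold lerchSeries
  apply tsum_congr
  intro m
  unfold LZq
  rw [← Complex.exp_nat_mul, Complex.cpow_neg, div_eq_mul_inv]
  push_cast
  congr 2
  ring

lemma LZ_cont (lam alp : ℝ) (hl0 : 0 < lam) (hl1 : lam ≤ 1) (h0 : 0 < alp) (h1 : alp ≤ 1) (n : ℕ) (hn : 1 ≤ n) :
    ∃ H : ℂ → ℂ, (∀ s : ℂ, 1 - n < s.re → DifferentiableAt ℂ H s) ∧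
      (∀ s : ℂ, 1 < s.re → H s = (s-1) * lerchSeries lam alp s) ∧
      ∀ B, LZPG (2-n) B (n+1) H := by
  rcases hl1.eq_or_lt with rfl | hl
  · obtain ⟨H, a, b, c⟩ := LZ_cont_one alp h0 h1 n hn
    refine ⟨H, a, ?_, c⟩
    intro s hs
    rw [b s hs, LZ_lerchSeries_eq]
    have : LZq 1 = 1 := by simp [LZq]
    simp [this]
  · refine ⟨fun s => (s-1) * LZE (LZq lam) alp n s, ?_, ?_, ?_⟩
    · intro s hs
      exact (by fun_prop : DifferentiableAt ℂ (fun s : ℂ => s - 1) s).mul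
        (LZE_diff _ (LZq_norm lam).le alp h0 h1 n s hs)
    · intro s hs
      simp only
      rw [LZE_eq _ (LZq_ne_zero _) (LZq_ne_one lam hl0 hl) alp n s
        (LZ_summable_series _ (LZq_norm lam).le alp h0 s hs), LZ_lerchSeries_eq]
    · intro B
      exact (LZE_PG _ (LZq_norm lam).le alp h0 h1 n B).sub_one_mul

lemma LZ_F_eq (lam alp : ℝ) (F : ℂ → ℂ) (hF : IsLerch lam alp F) (n : ℕ) (H : ℂ → ℂ)
    (h1 : ∀ s : ℂ, 1 - n < s.re → DifferentiableAt ℂ H s)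
    (h2 : ∀ s : ℂ, 1 < s.re → H s = (s-1) * lerchSeries lam alp s) (s : ℂ) (hs : 1 - n < s.re) (hs' : 0 < s.im) :
    H s = (s-1) * F s := by
  refine LZ_identity n H (fun s => (s-1) * F s) (fun z a _ => h1 z a) ?_ ?_ s hs hs'
  · intro z _ hz
    have : z ≠ 1 := by rintro rfl; simp at hz
    exact (by fun_prop : DifferentiableAt ℂ (fun s : ℂ => s - 1) z).mul (hF.1 z this)
  · intro z hz _
    show H z = (z-1) * F z
    rw [h2 z hz, hF.2 z hz]

lemma LZ_F_eq_E (lam alp : ℝ) (hl0 : 0 < lam) (hl1 : lam < 1) (h0 : 0 < alp) (h1 : alp ≤ 1)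
    (F : ℂ → ℂ) (hF : IsLerch lam alp F) (n : ℕ) (s : ℂ) (hs : 1 - n < s.re) (hs' : 0 < s.im) :
    LZE (LZq lam) alp n s = F s := by
  refine LZ_identity n (LZE (LZq lam) alp n) F (fun z a _ => LZE_diff _ (LZq_norm lam).le alp h0 h1 n z a) ?_ ?_ s hs hs'
  · intro z _ hz
    have : z ≠ 1 := by rintro rfl; simp at hz
    exact (hF.1 z this)
  · intro z hz _
    rw [hF.2 z hz, LZE_eq _ (LZq_ne_zero _) (LZq_ne_one lam hl0 hl1) alp n z
        (LZ_summable_series _ (LZq_norm lam).le alp h0 z hz), LZ_lerchSeries_eq]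

lemma LZ_gamma_diff (a : ℂ) (ha : 0 < a.re) (r : ℂ) (hr : 0 < r.re) :
    DifferentiableAt ℂ (fun r : ℂ => ∫ t : ℝ in Ioi 0, (t:ℂ)^(a-1) * cexp (-(r*t))) r := by
  have hmeas : ∀ (b : ℂ) (z : ℂ), MeasureTheory.AEStronglyMeasurable
      (fun t : ℝ => (t:ℂ)^b * cexp (-(z*t))) (MeasureTheory.volume.restrict (Ioi 0)) := by
    intro b z
    refine ContinuousOn.aestronglyMeasurable ?_ measurableSet_Ioi
    intro t ht
    have : ContinuousAt (fun t : ℝ => (t:ℂ)^b) t :=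
      Complex.continuousAt_ofReal_cpow_const t b (Or.inr (ne_of_gt ht))
    exact (this.mul (by fun_prop)).continuousWithinAt
  have hnorm : ∀ (b : ℂ) (z : ℂ) (t : ℝ), 0 < t →
      ‖(t:ℂ)^b * cexp (-(z*t))‖ = t^b.re * Real.exp (-(z.re*t)) := by
    intro b z t ht
    rw [norm_mul, Complex.norm_cpow_eq_rpow_re_of_pos ht, Complex.norm_exp]
    simp
  have hIntg : ∀ (b c : ℝ), -1 < b → 0 < c →
      MeasureTheory.IntegrableOn (fun t : ℝ => t^b * Real.exp (-(c*t))) (Ioi 0) := by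
    intro b c hb hc
    have := integrableOn_rpow_mul_exp_neg_mul_rpow hb one_pos hc
    simpa using this
  have key := hasDerivAt_integral_of_dominated_loc_of_deriv_le
    (μ := MeasureTheory.volume.restrict (Ioi (0:ℝ)))
    (F := fun (r : ℂ) (t : ℝ) => (t:ℂ)^(a-1) * cexp (-(r*t)))
    (F' := fun (r : ℂ) (t : ℝ) => -((t:ℂ)^a * cexp (-(r*t))))
    (x₀ := r) (s := {z : ℂ | r.re/2 < z.re})
    (bound := fun t : ℝ => t^a.re * Real.exp (-(r.re/2*t))) ?_ ?_ ?_ ?_ ?_ ?_ ?_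
  · exact key.2.differentiableAt
  · exact (isOpen_lt continuous_const Complex.continuous_re).mem_nhds (by show r.re/2 < r.re; linarith)
  · exact Eventually.of_forall (fun z => hmeas _ _)
  · refine MeasureTheory.Integrable.mono' (hIntg (a.re - 1) r.re (by linarith) hr) (hmeas _ _) ?_
    refine (MeasureTheory.ae_restrict_iff' measurableSet_Ioi).2 (Eventually.of_forall ?_)
    intro t ht
    rw [hnorm _ _ _ ht]; simp
  · exact (hmeas _ _).neg
  · refine (MeasureTheory.ae_restrict_iff' measurableSet_Ioi).2 (Eventually.of_forall ?_)
    intro t ht z hz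
    have hz' : r.re/2 < z.re := hz
    have ht' : 0 < t := ht
    rw [norm_neg, hnorm _ _ _ ht]
    have : 0 ≤ t^a.re := Real.rpow_nonneg ht'.le _
    gcongr
  · exact hIntg _ _ (by linarith) (by linarith)
  · refine (MeasureTheory.ae_restrict_iff' measurableSet_Ioi).2 (Eventually.of_forall ?_)
    intro t ht z hz
    have ht' : (t:ℂ) ≠ 0 := by exact_mod_cast (ne_of_gt ht)
    have h1 : HasDerivAt (fun z : ℂ => -(z*t)) (-(1*(t:ℂ))) z := ((hasDerivAt_id z).mul_const (t:ℂ)).neg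
    have h2 := (h1.cexp).const_mul ((t:ℂ)^(a-1))
    have h3 : (t:ℂ)^(a-1) * (cexp (-(z*t)) * (-(1*(t:ℂ)))) = -((t:ℂ)^a * cexp (-(z*t))) := by
      rw [Complex.cpow_sub _ _ ht', Complex.cpow_one]; field_simp
    rw [h3] at h2
    exact h2

lemma LZ_gamma_int (a : ℂ) (ha : 0 < a.re) (r : ℂ) (hr : 0 < r.re) :
    ∫ t : ℝ in Ioi 0, (t:ℂ)^(a-1) * cexp (-(r*t)) = (1/r)^a * Gamma a := by
  have hU : IsOpen {z : ℂ | 0 < z.re} := isOpen_lt continuous_const Complex.continuous_re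
  have hc : IsPreconnected {z : ℂ | 0 < z.re} := (convex_halfSpace_re_gt 0).isPreconnected
  have h1 : AnalyticOnNhd ℂ (fun r : ℂ => ∫ t : ℝ in Ioi 0, (t:ℂ)^(a-1) * cexp (-(r*t))) {z : ℂ | 0 < z.re} :=
    DifferentiableOn.analyticOnNhd (fun z hz => (LZ_gamma_diff a ha z hz).differentiableWithinAt) hU
  have h2 : AnalyticOnNhd ℂ (fun r : ℂ => (1/r)^a * Gamma a) {z : ℂ | 0 < z.re} := by
    refine DifferentiableOn.analyticOnNhd (fun z hz => ?_) hU
    have hz' : 0 < z.re := hz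
    have hz0 : z ≠ 0 := by rintro rfl; simp at hz'
    have hs : (1/z) ∈ slitPlane := by
      left; rw [one_div, Complex.inv_re]; exact div_pos hz' (Complex.normSq_pos.2 hz0)
    have : DifferentiableAt ℂ (fun r : ℂ => (1/r)^a) z :=
      DifferentiableAt.cpow_const (by fun_prop (disch := assumption)) hs
    exact (this.mul_const _).differentiableWithinAt
  refine h1.eqOn_of_preconnected_of_frequently_eq h2 hc (z₀ := 1) (by show (0:ℝ) < (1:ℂ).re; simp) ?_ hr
  have ht : Tendsto (fun n : ℕ => (((1 + 1/((n:ℝ)+1) : ℝ)) : ℂ)) atTop (𝓝[≠] 1) := by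
    refine tendsto_nhdsWithin_iff.2 ⟨?_, Eventually.of_forall ?_⟩
    · have : Tendsto (fun n : ℕ => 1 + 1/((n:ℝ)+1)) atTop (𝓝 (1+0)) :=
        tendsto_const_nhds.add tendsto_one_div_add_atTop_nhds_zero_nat
      rw [add_zero] at this
      exact (Complex.continuous_ofReal.tendsto' _ _ (by simp)).comp this
    · intro n hn
      have hn' : (((1 + 1/((n:ℝ)+1) : ℝ)) : ℂ) = 1 := hn
      have : (1 + 1/((n:ℝ)+1) : ℝ) = 1 := Complex.ofReal_injective (hn'.trans Complex.ofReal_one.symm)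
      have h4 : 0 < 1/((n:ℝ)+1) := by positivity
      linarith
  refine ht.frequently (Eventually.of_forall ?_).frequently
  intro n
  exact integral_cpow_mul_exp_neg_mul_Ioi ha (by positivity)

noncomputable def LZf (a : ℂ) (c : ℂ) (x : ℝ) : ℂ :=
  ((max x 0 : ℝ) : ℂ)^(a-1) * cexp (-(c * ((max x 0 : ℝ) : ℂ)))

lemma LZf_cont (a c : ℂ) (ha : a.re = 2) : Continuous (LZf a c) := by
  have h1 : Continuous (fun x : ℝ => (x:ℂ)^(a-1)) :=
    Complex.continuous_ofReal_cpow_const (by simp [ha])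
  have h2 : Continuous (fun x : ℝ => (x:ℂ)^(a-1) * cexp (-(c * (x:ℂ)))) :=
    h1.mul (by fun_prop)
  exact h2.comp (continuous_id.max continuous_const)

lemma LZf_pos (a c : ℂ) (x : ℝ) (hx : 0 < x) :
    LZf a c x = (x:ℂ)^(a-1) * cexp (-(c * (x:ℂ))) := by
  unfold LZf; rw [max_eq_left hx.le]

lemma LZf_neg (a c : ℂ) (ha : a.re = 2) (x : ℝ) (hx : x ≤ 0) : LZf a c x = 0 := by
  have : a - 1 ≠ 0 := by
    intro h
    have := congrArg Complex.re h
    simp [ha] at this; norm_num at this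
  unfold LZf; rw [max_eq_right hx]; simp [Complex.zero_cpow this]

lemma LZf_decay (a c : ℂ) (ha : a.re = 2) (hc : 0 < c.re) :
    LZf a c =O[cocompact ℝ] fun x : ℝ => |x| ^ (-(2:ℝ)) := by
  rw [cocompact_eq_atBot_atTop]
  refine Asymptotics.IsBigO.sup ?_ ?_
  · have : LZf a c =ᶠ[atBot] fun _ => (0:ℂ) := by
      filter_upwards [eventually_le_atBot (0:ℝ)] with x hx using LZf_neg a c ha x hx
    exact this.trans_isBigO (Asymptotics.isBigO_zero _ _)
  · have h1 := (isLittleO_exp_neg_mul_rpow_atTop hc (-3)).isBigO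
    have h2 : (fun x : ℝ => x * Real.exp (-c.re * x)) =O[atTop] fun x => x * x^(-3:ℝ) :=
      (Asymptotics.isBigO_refl (fun x : ℝ => x) atTop).mul h1
    refine Asymptotics.IsBigO.trans ?_ (h2.trans ?_)
    · refine Asymptotics.IsBigO.of_bound 1 ?_
      filter_upwards [eventually_gt_atTop (0:ℝ)] with x hx
      rw [LZf_pos a c x hx, norm_mul, Complex.norm_cpow_eq_rpow_re_of_pos hx, Complex.norm_exp,
        Real.norm_of_nonneg (by positivity)]
      have : (a-1).re = 1 := by simp [ha]; norm_num
      rw [this, Real.rpow_one, one_mul]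
      simp
    · refine Asymptotics.IsBigO.of_bound 1 ?_
      filter_upwards [eventually_gt_atTop (0:ℝ)] with x hx
      have : x * x^(-3:ℝ) = x^(-2:ℝ) := by
        nth_rewrite 1 [← Real.rpow_one x]
        rw [← Real.rpow_add hx]; norm_num
      rw [this, abs_of_pos hx, one_mul]

lemma LZf_fourier (a c : ℂ) (ha : a.re = 2) (hc : 0 < c.re) (w : ℝ) :
    FourierTransform.fourier (LZf a c) w = (1/(c + 2*Real.pi*I*w))^a * Gamma a := by
  rw [Real.fourier_real_eq_integral_exp_smul]
  rw [← LZ_gamma_int a (by linarith) _ (by simpa using hc)]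
  rw [← MeasureTheory.integral_indicator measurableSet_Ioi]
  congr 1
  ext x
  by_cases hx : 0 < x
  · rw [Set.indicator_of_mem (by exact hx), LZf_pos a c x hx, smul_eq_mul, mul_left_comm, ← Complex.exp_add]
    congr 2
    push_cast; ring
  · rw [Set.indicator_of_notMem (by exact hx), LZf_neg a c ha x (not_lt.1 hx), smul_zero]

/-- bound for the Fourier side -/
lemma LZ_four_bound (a : ℂ) (ha : a.re = 2) (lam ε : ℝ) (n : ℤ) (hn : (n:ℝ) - lam ≠ 0) :
    ‖(1/((ε:ℂ) + 2*Real.pi*I*((n:ℂ)-lam)))^a‖ ≤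
      Real.exp (Real.pi * |a.im|) * (1 / |(n:ℝ) + (-lam)| ^ (2:ℝ)) := by
  set z : ℂ := (ε:ℂ) + 2*Real.pi*I*((n:ℂ)-lam) with hz
  have him : z.im = 2*Real.pi*((n:ℝ)-lam) := by simp [hz]
  have habs : |(n:ℝ) - lam| ≤ ‖z‖ := by
    refine le_trans ?_ (Complex.abs_im_le_norm z)
    rw [him, abs_mul]
    have h3 : 1 ≤ |2*Real.pi| := by rw [abs_of_pos (by positivity)]; nlinarith [Real.pi_gt_three]
    nlinarith [abs_nonneg ((n:ℝ) - lam)]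
  have hp : 0 < |(n:ℝ) - lam| := abs_pos.2 hn
  have := Complex.norm_cpow_le (1/z) a
  rw [ha, div_eq_mul_inv (_ ^ _), ← Real.exp_neg] at this
  refine this.trans ?_
  rw [mul_comm]
  have h5 : ‖1/z‖^(2:ℝ) ≤ 1 / |(n:ℝ) + (-lam)| ^ (2:ℝ) := by
    rw [norm_div, norm_one, Real.div_rpow zero_le_one (norm_nonneg _), Real.one_rpow, ← sub_eq_add_neg]
    gcongr
  have h6 : Real.exp (-((1/z).arg * a.im)) ≤ Real.exp (Real.pi * |a.im|) := by
    apply Real.exp_le_exp.2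
    calc -((1/z).arg * a.im) ≤ |(1/z).arg * a.im| := neg_le_abs _
      _ = |(1/z).arg| * |a.im| := abs_mul _ _
      _ ≤ Real.pi * |a.im| := by gcongr; exact Complex.abs_arg_le_pi _
  gcongr

lemma LZ_int_ne (lam : ℝ) (hl0 : 0 < lam) (hl1 : lam < 1) (n : ℤ) : (n:ℝ) - lam ≠ 0 := by
  intro h
  have h1 : (0:ℝ) < n := by linarith
  have h2 : (n:ℝ) < 1 := by linarith
  have h3 : (0:ℤ) < n := by exact_mod_cast h1
  have h4 : n < (1:ℤ) := by exact_mod_cast h2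
  omega

lemma LZ_four_summable (lam C : ℝ) :
    Summable (fun n : ℤ => C * (1 / |(n:ℝ) + (-lam)| ^ (2:ℝ))) :=
  ((Real.summable_one_div_int_add_rpow (-lam) 2).2 (by norm_num)).mul_left _

lemma LZ_poisson (a : ℂ) (ha : a.re = 2) (lam alp ε : ℝ) (hl0 : 0 < lam) (hl1 : lam < 1)
    (h0 : 0 < alp) (h1 : alp ≤ 1) (hε : 0 < ε) :
    ∑' m : ℕ, ((m + alp : ℝ) : ℂ)^(a-1) * cexp (-(((ε:ℂ) - 2*Real.pi*I*lam) * ((m + alp : ℝ) : ℂ))) =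
    ∑' n : ℤ, (1/((ε:ℂ) + 2*Real.pi*I*((n:ℂ)-lam)))^a * Gamma a * cexp (2*Real.pi*I*n*alp) := by
  set c : ℂ := (ε:ℂ) - 2*Real.pi*I*lam with hcdef
  have hc : 0 < c.re := by simp [hcdef]; exact hε
  have hF : ∀ n : ℤ, FourierTransform.fourier (LZf a c) (n:ℝ) =
      (1/((ε:ℂ) + 2*Real.pi*I*((n:ℂ)-lam)))^a * Gamma a := by
    intro n
    rw [LZf_fourier a c ha hc, hcdef]
    congr 3
    push_cast; ring
  have hsum : Summable (fun n : ℤ => FourierTransform.fourier (LZf a c) (n:ℝ)) := by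
    simp_rw [hF]
    refine Summable.mul_right _ (Summable.of_norm_bounded (LZ_four_summable lam _) (fun n => LZ_four_bound a ha lam ε n (LZ_int_ne lam hl0 hl1 n)))
  have key := Real.tsum_eq_tsum_fourier_of_rpow_decay_of_summable (LZf_cont a c ha) (by norm_num : (1:ℝ) < 2)
    (LZf_decay a c ha hc) hsum alp
  have hR : ∀ n : ℤ, FourierTransform.fourier (LZf a c) (n:ℝ) * fourier n (alp : UnitAddCircle) =
     (1/((ε:ℂ) + 2*Real.pi*I*((n:ℂ)-lam)))^a * Gamma a * cexp (2*Real.pi*I*n*alp) := by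
    intro n
    rw [hF, fourier_coe_apply]; simp
  simp_rw [hR] at key
  rw [← key]
  rw [← Function.Injective.tsum_eq (g := fun m : ℕ => (m:ℤ)) Nat.cast_injective]
  · apply tsum_congr
    intro m
    have : (0:ℝ) < m + alp := by positivity
    rw [add_comm alp, Int.cast_natCast, LZf_pos a c _ this]
  · intro n hn
    by_contra hcon
    apply hn
    have hneg : n < 0 := by
      by_contra hh
      exact hcon ⟨n.toNat, Int.toNat_of_nonneg (not_lt.1 hh)⟩
    have : (n:ℝ) ≤ -1 := by exact_mod_cast (by omega : n ≤ -1)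
    exact LZf_neg a c ha _ (by linarith)

lemma LZE_tendsto (l : Filter ℝ) (q : ℝ → ℂ) (q0 : ℂ) (hq : Tendsto q l (𝓝 q0))
    (hq1 : ∀ᶠ x in l, ‖q x‖ ≤ 1) (h1 : q0 ≠ 1) (alp : ℝ) (h0 : 0 < alp) (n : ℕ) (s : ℂ)
    (hs : 1 < s.re + n) :
    Tendsto (fun x => LZE (q x) alp n s) l (𝓝 (LZE q0 alp n s)) := by
  have hne : 1 - q0 ≠ 0 := sub_ne_zero.2 h1.symm
  unfold LZE
  refine Tendsto.add (tendsto_finsetSum _ (fun j _ => ?_)) (Tendsto.mul ?_ ?_)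
  · exact ((hq.pow j).div ((tendsto_const_nhds.sub hq).pow (j+1)) (pow_ne_zero _ hne)).mul tendsto_const_nhds
  · exact (hq.div (tendsto_const_nhds.sub hq) hne).pow n
  · refine tendsto_tsum_of_dominated_convergence
      (bound := fun m : ℕ => ((n:ℝ)+1)^n * (‖s‖ + 1)^n * ((m:ℝ)+alp) ^ (-(s.re+n)))
      ((LZ_summable_rpow alp _ h0 hs).mul_left _) (fun m => (hq.pow m).mul tendsto_const_nhds) ?_
    filter_upwards [hq1] with x hx m
    rw [norm_mul, norm_pow]
    have := LZ_fd_norm (m+alp) (by positivity) n s (by linarith)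
    calc _ ≤ 1 * ‖(fwdDiff (1:ℝ))^[n] (LZP (-s) 0) (m+alp)‖ :=
          mul_le_mul_of_nonneg_right (pow_le_one₀ (norm_nonneg _) hx) (norm_nonneg _)
      _ ≤ _ := by rw [one_mul]; exact this

lemma LZ_FE (a : ℂ) (ha : a.re = 2) (lam alp : ℝ) (hl0 : 0 < lam) (hl1 : lam < 1)
    (h0 : 0 < alp) (h1 : alp ≤ 1) :
    cexp (2*Real.pi*I*lam*alp) * LZE (LZq lam) alp 4 (1-a) =
    ∑' n : ℤ, (1/(2*Real.pi*I*((n:ℂ)-lam)))^a * Gamma a * cexp (2*Real.pi*I*n*alp) := by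
  set q : ℝ → ℂ := fun ε => cexp (-((ε:ℂ) - 2*Real.pi*I*lam)) with hqdef
  have hqn : ∀ ε : ℝ, ‖q ε‖ = Real.exp (-ε) := by
    intro ε; simp [hqdef, Complex.norm_exp]
  have hq0 : q 0 = LZq lam := by simp [hqdef, LZq]
  have hqc : Continuous q := by fun_prop
  have hl : Tendsto (fun ε : ℝ => ε) (𝓝[>] 0) (𝓝 0) := tendsto_nhdsWithin_of_tendsto_nhds tendsto_id
  have hL : Tendsto (fun ε : ℝ => cexp (-(((ε:ℂ) - 2*Real.pi*I*lam) * alp)) * LZE (q ε) alp 4 (1-a)) (𝓝[>] 0)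
      (𝓝 (cexp (2*Real.pi*I*lam*alp) * LZE (LZq lam) alp 4 (1-a))) := by
    refine Tendsto.mul ?_ ?_
    · have : Continuous (fun ε : ℝ => cexp (-(((ε:ℂ) - 2*Real.pi*I*lam) * alp))) := by fun_prop
      have := (this.tendsto 0).comp hl
      simpa [Function.comp_def] using this
    · refine LZE_tendsto _ q _ ?_ ?_ (LZq_ne_one lam hl0 hl1) alp h0 4 _ (by simp [ha]; norm_num)
      · rw [← hq0]; exact (hqc.tendsto 0).comp hl
      · filter_upwards [self_mem_nhdsWithin] with ε hε
        rw [hqn]; exact Real.exp_le_one_iff.2 (by have : 0 < ε := hε; linarith)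
  have hR : Tendsto (fun ε : ℝ => ∑' n : ℤ, (1/((ε:ℂ) + 2*Real.pi*I*((n:ℂ)-lam)))^a * Gamma a * cexp (2*Real.pi*I*n*alp))
      (𝓝[>] 0) (𝓝 (∑' n : ℤ, (1/(2*Real.pi*I*((n:ℂ)-lam)))^a * Gamma a * cexp (2*Real.pi*I*n*alp))) := by
    refine tendsto_tsum_of_dominated_convergence
      (bound := fun n : ℤ => Real.exp (Real.pi * |a.im|) * (1 / |(n:ℝ) + (-lam)| ^ (2:ℝ)) * ‖Gamma a‖)
      ((LZ_four_summable lam _).mul_right _) ?_ (Eventually.of_forall ?_)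
    · intro n
      refine Tendsto.mul (Tendsto.mul ?_ tendsto_const_nhds) tendsto_const_nhds
      have hn := LZ_int_ne lam hl0 hl1 n
      have hn' : ((n:ℂ) - lam) ≠ 0 := by
        intro h; apply hn; exact_mod_cast h
      have hz : 2*Real.pi*I*((n:ℂ)-lam) ≠ 0 :=
        mul_ne_zero (by simp [Real.pi_ne_zero]) hn'
      have h2 : Tendsto (fun ε : ℝ => 1/((ε:ℂ) + 2*Real.pi*I*((n:ℂ)-lam))) (𝓝[>] 0) (𝓝 (1/(2*Real.pi*I*((n:ℂ)-lam)))) := by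
        refine Tendsto.div tendsto_const_nhds ?_ hz
        have : Continuous (fun ε : ℝ => (ε:ℂ) + 2*Real.pi*I*((n:ℂ)-lam)) := by fun_prop
        have := (this.tendsto 0).comp hl
        simpa [Function.comp_def] using this
      refine h2.cpow tendsto_const_nhds ?_
      right
      have e : 1/(2*Real.pi*I*((n:ℂ)-lam)) = ((-(1/(2*Real.pi*((n:ℝ)-lam))) : ℝ) : ℂ) * I := by
        push_cast
        have : (Real.pi : ℂ) ≠ 0 := by exact_mod_cast Real.pi_ne_zero
        field_simp
        simp
      rw [e]
      simp only [mul_im, ofReal_re, I_im, mul_one, ofReal_im, I_re, mul_zero, add_zero]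
      exact neg_ne_zero.2 (one_div_ne_zero (mul_ne_zero (by positivity) hn))
    · intro ε n
      rw [norm_mul, norm_mul]
      have e : ‖cexp (2*Real.pi*I*n*alp)‖ = 1 := by
        rw [Complex.norm_exp]; simp
      rw [e, mul_one]
      gcongr
      exact LZ_four_bound a ha lam ε n (LZ_int_ne lam hl0 hl1 n)
  refine tendsto_nhds_unique hL (hR.congr' ?_)
  filter_upwards [self_mem_nhdsWithin] with ε hε
  have hε : 0 < ε := hε
  rw [← LZ_poisson a ha lam alp ε hl0 hl1 h0 h1 hε]
  have hlt : ‖q ε‖ < 1 := by rw [hqn]; exact Real.exp_lt_one_iff.2 (by linarith)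
  have hterm : ∀ m : ℕ, ((m + alp : ℝ) : ℂ)^(a-1) * cexp (-(((ε:ℂ) - 2*Real.pi*I*lam) * ((m + alp : ℝ) : ℂ))) =
      cexp (-(((ε:ℂ) - 2*Real.pi*I*lam) * alp)) * (q ε ^ m * ((m + alp : ℝ) : ℂ)^(-(1-a))) := by
    intro m
    rw [neg_sub, hqdef]
    simp only
    rw [← Complex.exp_nat_mul, mul_comm, ← mul_assoc, ← Complex.exp_add]
    congr 2
    push_cast; ring
  simp_rw [hterm]
  rw [tsum_mul_left, ← LZE_eq]
  · exact Complex.exp_ne_zero _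
  · intro h; rw [h] at hlt; simp at hlt
  · have hsm : Summable (fun m : ℕ => 2 * (((m:ℝ)^1 * ‖q ε‖^m))) := by
      have hlt' : ‖(‖q ε‖ : ℝ)‖ < 1 := by rw [norm_norm]; exact hlt
      exact (summable_pow_mul_geometric_of_norm_lt_one 1 hlt').mul_left 2
    refine Summable.of_norm_bounded_eventually_nat hsm ?_
    filter_upwards [eventually_ge_atTop 1] with m hm
    have hm' : (1:ℝ) ≤ m := by exact_mod_cast hm
    rw [norm_mul, norm_pow, Complex.norm_cpow_eq_rpow_re_of_pos (by positivity)]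
    have : (-(1-a)).re = 1 := by simp [ha]; norm_num
    rw [this, Real.rpow_one, pow_one]
    have h5 : 0 ≤ ‖q ε‖^m := by positivity
    nlinarith

noncomputable def LZW (lam t : ℝ) : ℂ :=
  cexp ((2 - t*I) * (-(Real.log (2*Real.pi*lam) : ℂ) + Real.pi/2*I))

lemma LZ_tel (lam : ℝ) (h0 : 0 < lam) (h1 : lam ≤ 1) :
    ∃ B, B ≤ 2/3 ∧ HasSum (fun m : ℕ => (lam/((m:ℝ)+1+lam))^2) B := by
  have hs : Summable (fun m : ℕ => (lam/((m:ℝ)+1+lam))^2) := by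
    refine ((LZ_summable_rpow (1+lam) 2 (by linarith) (by norm_num)).mul_left (lam^2)).congr (fun m => ?_)
    have : (0:ℝ) < m + 1 + lam := by positivity
    rw [div_pow, Real.rpow_neg (by positivity), ← add_assoc]
    norm_cast
  refine ⟨_, ?_, hs.hasSum⟩
  refine Real.tsum_le_of_sum_range_le (fun m => by positivity) (fun N => ?_)
  have key : ∑ m ∈ Finset.range N, (lam/((m:ℝ)+1+lam))^2 ≤ lam^2 * (1/(1/2+lam) - 1/(N+1/2+lam)) := by
    induction N with
    | zero => simp
    | succ N ih =>
      rw [Finset.sum_range_succ]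
      have hN : (0:ℝ) ≤ N := Nat.cast_nonneg N
      have h3 : (lam/((N:ℝ)+1+lam))^2 ≤ lam^2 * (1/((N:ℝ)+1/2+lam) - 1/((N:ℝ)+1+1/2+lam)) := by
        rw [div_pow, div_eq_mul_one_div]
        gcongr
        have e : 1/((N:ℝ)+1/2+lam) - 1/((N:ℝ)+1+1/2+lam) = 1/(((N:ℝ)+1/2+lam)*((N:ℝ)+1+1/2+lam)) := by
          field_simp; ring
        rw [e]
        gcongr
        nlinarith
      push_cast
      nlinarith [ih, h3]
  refine key.trans ?_
  have h4 : 0 ≤ 1/((N:ℝ)+1/2+lam) := by positivity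
  have h5 : lam^2 * (1/(1/2+lam)) ≤ 2/3 := by
    rw [mul_one_div, div_le_iff₀ (by positivity)]
    nlinarith
  nlinarith [sq_nonneg lam]

lemma LZW_norm (lam t : ℝ) (h0 : 0 < lam) :
    ‖LZW lam t‖ = (2*Real.pi*lam)^(-2:ℝ) * Real.exp (Real.pi*t/2) := by
  unfold LZW
  rw [Complex.norm_exp, Real.rpow_def_of_pos (by positivity), ← Real.exp_add]
  congr 1
  simp
  ring

lemma LZ_cp_neg (y t : ℝ) (hy : y < 0) :
    (1/(2*Real.pi*I*(y:ℂ)))^(2 - t*I : ℂ) = LZW (-y) t := by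
  have hp : 0 < 2*Real.pi*(-y) := mul_pos (by positivity) (by linarith)
  have e : 1/(2*Real.pi*I*(y:ℂ)) = (((2*Real.pi*(-y))⁻¹ : ℝ) : ℂ) * I := by
    have : (Real.pi : ℂ) ≠ 0 := by exact_mod_cast Real.pi_ne_zero
    have : (y:ℂ) ≠ 0 := by exact_mod_cast hy.ne
    push_cast
    field_simp
    simp
  have hne : (((2*Real.pi*(-y))⁻¹ : ℝ) : ℂ) * I ≠ 0 :=
    mul_ne_zero (by exact_mod_cast (inv_pos.2 hp).ne') I_ne_zero
  rw [e, Complex.cpow_def_of_ne_zero hne, Complex.log_ofReal_mul (inv_pos.2 hp) I_ne_zero, Complex.log_I,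
    Real.log_inv, LZW, mul_comm]
  push_cast
  rfl

lemma LZ_cp_pos_norm (y t : ℝ) (hy : 0 < y) :
    ‖(1/(2*Real.pi*I*(y:ℂ)))^(2 - t*I : ℂ)‖ = (2*Real.pi*y)^(-2:ℝ) * Real.exp (-(Real.pi*t/2)) := by
  have hp : 0 < 2*Real.pi*y := by positivity
  have e : 1/(2*Real.pi*I*(y:ℂ)) = (((2*Real.pi*y)⁻¹ : ℝ) : ℂ) * (-I) := by
    have : (Real.pi : ℂ) ≠ 0 := by exact_mod_cast Real.pi_ne_zero
    have : (y:ℂ) ≠ 0 := by exact_mod_cast hy.ne'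
    push_cast
    field_simp
    simp
  have hne : (((2*Real.pi*y)⁻¹ : ℝ) : ℂ) * (-I) ≠ 0 :=
    mul_ne_zero (by exact_mod_cast (inv_pos.2 hp).ne') (neg_ne_zero.2 I_ne_zero)
  rw [e, Complex.cpow_def_of_ne_zero hne, Complex.log_ofReal_mul (inv_pos.2 hp) (neg_ne_zero.2 I_ne_zero), Complex.log_neg_I,
    Real.log_inv, Complex.norm_exp, Real.rpow_def_of_pos hp, ← Real.exp_add]
  congr 1
  simp
  ring

lemma LZW_ne (lam t : ℝ) : LZW lam t ≠ 0 := Complex.exp_ne_zero _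

lemma LZ_left1 (lam alp : ℝ) (hl0 : 0 < lam) (hl1 : lam < 1) (h0 : 0 < alp) (h1 : alp ≤ 1)
    (F : ℂ → ℂ) (hF : IsLerch lam alp F) :
    ∃ K : ℝ, ∀ t : ℝ, 0 < t → ∃ X Y : ℂ, ‖X‖ ≤ 2/3 ∧ ‖Y‖ ≤ K * Real.exp (-(Real.pi*t)) ∧
      F (-1 + t*I) = cexp (-(2*Real.pi*I*lam*alp)) * Gamma (2 - t*I) * LZW lam t * (1 + X + Y) := by
  obtain ⟨B, hB, hBs⟩ := LZ_tel lam hl0 hl1.le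
  have hKs : Summable (fun m : ℕ => (lam/((m:ℝ)+(1-lam)))^2) := by
    refine ((LZ_summable_rpow (1-lam) 2 (by linarith) (by norm_num)).mul_left (lam^2)).congr (fun m => ?_)
    have : (0:ℝ) < m + (1 - lam) := by
      have : 0 < 1 - lam := by linarith
      positivity
    rw [div_pow, Real.rpow_neg (by positivity)]
    norm_cast
  refine ⟨∑' m : ℕ, (lam/((m:ℝ)+(1-lam)))^2, fun t ht => ?_⟩
  set a : ℂ := 2 - t*I with ha
  have hare : a.re = 2 := by simp [ha]
  have hFE := LZ_FE a hare lam alp hl0 hl1 h0 h1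
  have h1a : 1 - a = -1 + t*I := by rw [ha]; ring
  rw [h1a, LZ_F_eq_E lam alp hl0 hl1 h0 h1 F hF 4 _ (by simp; norm_num) (by simpa using ht)] at hFE
  set W := LZW lam t with hW
  have hWne : W ≠ 0 := LZW_ne _ _
  set r : ℤ → ℂ := fun n => (1/(2*Real.pi*I*((n:ℂ)-lam)))^a * cexp (2*Real.pi*I*n*alp) / W with hr
  have hexp : ∀ n : ℤ, ‖cexp (2*Real.pi*I*n*alp)‖ = 1 := by
    intro n; rw [Complex.norm_exp]; simp
  have hdiv : ∀ y : ℝ, 0 < y → (2*Real.pi*y)^(-2:ℝ) / (2*Real.pi*lam)^(-2:ℝ) = (lam/y)^2 := by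
    intro y hy
    rw [Real.rpow_neg (by positivity), Real.rpow_neg (by positivity)]
    have e1 : (2*Real.pi*y)^(2:ℝ) = (2*Real.pi*y)^2 := by norm_cast
    have e2 : (2*Real.pi*lam)^(2:ℝ) = (2*Real.pi*lam)^2 := by norm_cast
    rw [e1, e2]
    field_simp
  have hrneg : ∀ m : ℕ, ‖r (-((m:ℤ)+1))‖ ≤ (lam/((m:ℝ)+1+lam))^2 := by
    intro m
    simp only [hr]
    rw [norm_div, norm_mul, hexp, mul_one]
    have hy : (-((m:ℝ)+1+lam)) < 0 := by
      have : (0:ℝ) < m + 1 + lam := by positivity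
      linarith
    have e : (((-((m:ℤ)+1) : ℤ) : ℂ) - lam) = ((-((m:ℝ)+1+lam) : ℝ) : ℂ) := by push_cast; ring
    rw [e, ha, LZ_cp_neg _ t hy, hW, LZW_norm _ _ (by linarith), LZW_norm _ _ hl0, neg_neg,
      mul_div_mul_right _ _ (Real.exp_pos _).ne', hdiv _ (by linarith)]
  have hrpos : ∀ m : ℕ, ‖r ((m:ℤ)+1)‖ ≤ (lam/((m:ℝ)+(1-lam)))^2 * Real.exp (-(Real.pi*t)) := by
    intro m
    simp only [hr]
    rw [norm_div, norm_mul, hexp, mul_one]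
    have hy : 0 < (m:ℝ)+(1-lam) := by
      have : 0 < 1 - lam := by linarith
      positivity
    have e : ((((m:ℤ)+1 : ℤ) : ℂ) - lam) = (((m:ℝ)+(1-lam) : ℝ) : ℂ) := by push_cast; ring
    rw [e, ha, LZ_cp_pos_norm _ t hy, hW, LZW_norm _ _ hl0, mul_div_mul_comm, hdiv _ hy, ← Real.exp_sub]
    gcongr
    linarith
  have hr0 : r 0 = 1 := by
    simp only [hr]
    have e : (((0:ℤ):ℂ) - lam) = ((-lam : ℝ) : ℂ) := by push_cast; ring
    rw [e, ha, LZ_cp_neg _ t (by linarith), neg_neg, ← hW]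
    simp [hWne]
  have hsneg : Summable (fun m : ℕ => r (-((m:ℤ)+1))) := Summable.of_norm_bounded hBs.summable hrneg
  have hspos : Summable (fun m : ℕ => r ((m:ℤ)+1)) := Summable.of_norm_bounded (hKs.mul_right _) hrpos
  have hsnat : Summable (fun m : ℕ => r (m:ℤ)) := by
    rw [← summable_nat_add_iff 1]
    simpa using hspos
  refine ⟨∑' m : ℕ, r (-((m:ℤ)+1)), ∑' m : ℕ, r ((m:ℤ)+1), (tsum_of_norm_bounded hBs hrneg).trans hB,
    tsum_of_norm_bounded (hKs.hasSum.mul_right _) hrpos, ?_⟩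
  have htot : ∑' n : ℤ, r n = 1 + ∑' m : ℕ, r (-((m:ℤ)+1)) + ∑' m : ℕ, r ((m:ℤ)+1) := by
    rw [tsum_of_nat_of_neg_add_one hsnat hsneg, hsnat.tsum_eq_zero_add]
    simp only [Nat.cast_zero, hr0, Nat.cast_add, Nat.cast_one]
    ring
  have hterm : ∀ n : ℤ, (1/(2*Real.pi*I*((n:ℂ)-lam)))^a * Gamma a * cexp (2*Real.pi*I*n*alp) =
      (Gamma a * W) * r n := by
    intro n; simp only [hr]; field_simp
  simp_rw [hterm] at hFE
  rw [tsum_mul_left, htot] at hFE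
  rw [mul_assoc, mul_assoc, ← mul_assoc (Gamma a), ← hFE, ← mul_assoc, ← Complex.exp_add]
  simp

lemma LZ_left2 (alp : ℝ) (h0 : 0 < alp) (h1 : alp ≤ 1)
    (F : ℂ → ℂ) (hF : IsLerch 1 alp F) :
    ∃ K : ℝ, ∀ t : ℝ, 0 < t → ∃ X Y : ℂ, ‖X‖ ≤ 2/3 ∧ ‖Y‖ ≤ K * Real.exp (-(Real.pi*t)) ∧
      F (-1 + t*I) = cexp (-(2*Real.pi*I*(1:ℝ)*alp)) * Gamma (2 - t*I) * LZW 1 t * (1 + X + Y) := by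
  obtain ⟨B, hB, hBs⟩ := LZ_tel 1 one_pos le_rfl
  have hKs : Summable (fun m : ℕ => 1/(m:ℝ)^2) := Real.summable_one_div_nat_pow.2 (by norm_num)
  refine ⟨∑' m : ℕ, 1/(m:ℝ)^2, fun t ht => ?_⟩
  set a : ℂ := 2 - t*I with ha
  have hare : a.re = 2 := by simp [ha]
  have h1a : 1 - a = -1 + t*I := by rw [ha]; ring
  have hFz : F (-1 + t*I) = HurwitzZeta.hurwitzZeta (alp : UnitAddCircle) (1 - a) := by
    rw [h1a]
    refine LZ_identity 4 F (HurwitzZeta.hurwitzZeta (alp : UnitAddCircle)) ?_ ?_ ?_ _ (by simp; norm_num) (by simpa using ht)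
    · intro z _ hz
      exact hF.1 z (by rintro rfl; simp at hz)
    · intro z _ hz
      exact HurwitzZeta.differentiableAt_hurwitzZeta _ (by rintro rfl; simp at hz)
    · intro z hz _
      rw [hF.2 z hz, ← (HurwitzZeta.hasSum_hurwitzZeta_of_one_lt_re ⟨h0.le, h1⟩ hz).tsum_eq, lerchSeries]
      apply tsum_congr
      intro m
      congr 1
      rw [Complex.ofReal_one, mul_one, mul_comm]
      exact Complex.exp_nat_mul_two_pi_mul_I m
  have han : ∀ n : ℕ, a ≠ -n := by
    intro n h
    have := congrArg Complex.re h
    rw [hare] at this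
    simp at this
    linarith [Nat.cast_nonneg (α := ℝ) n]
  have ha1 : a ≠ 1 := by
    intro h
    have := congrArg Complex.re h
    rw [hare] at this
    simp at this
  rw [hFz, HurwitzZeta.hurwitzZeta_one_sub _ han (Or.inr ha1)]
  have hz1 := HurwitzZeta.hasSum_expZeta_of_one_lt_re alp (s := a) (by rw [hare]; norm_num)
  have hz2 := HurwitzZeta.hasSum_expZeta_of_one_lt_re (-alp) (s := a) (by rw [hare]; norm_num)
  have hneg : ((-alp : ℝ) : UnitAddCircle) = -(alp : UnitAddCircle) := by simp
  rw [hneg] at hz2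
  have hexp : ∀ (x : ℝ) (n : ℕ), ‖cexp (2*Real.pi*I*x*n)‖ = 1 := by
    intro x n; rw [Complex.norm_exp]; simp
  have hpow : ∀ (n : ℕ), ‖(n:ℂ)^a‖ = (n:ℝ)^2 := by
    intro n
    rcases Nat.eq_zero_or_pos n with h | h
    · subst h
      rw [Nat.cast_zero, Complex.zero_cpow (by intro h; rw [h] at hare; simp at hare)]; simp
    · rw [Complex.norm_natCast_cpow_of_pos h, hare]; norm_cast
  have hE1 : ‖HurwitzZeta.expZeta (alp : UnitAddCircle) a‖ ≤ ∑' m : ℕ, 1/(m:ℝ)^2 := by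
    rw [← hz1.tsum_eq]
    refine tsum_of_norm_bounded hKs.hasSum (fun n => ?_)
    rw [norm_div, hexp, hpow]
  set e0 : ℂ := cexp (-(2*Real.pi*I*(1:ℝ)*alp)) with he0
  have he0n : ‖e0‖ = 1 := by rw [he0, Complex.norm_exp]; simp
  have he0ne : e0 ≠ 0 := Complex.exp_ne_zero _
  set X : ℂ := ∑' m : ℕ, cexp (2*Real.pi*I*((-alp : ℝ):ℂ)*((m+2 : ℕ):ℂ)) / ((m+2 : ℕ):ℂ)^a / e0 with hX
  have hXb : ‖X‖ ≤ B := by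
    refine tsum_of_norm_bounded hBs (fun m => ?_)
    rw [norm_div, norm_div, hexp, hpow, he0n, div_one, div_pow, one_pow]
    push_cast
    rw [add_assoc]; norm_num
  have hE2 : HurwitzZeta.expZeta (-(alp : UnitAddCircle)) a = e0 * (1 + X) := by
    rw [← hz2.tsum_eq, hz2.summable.tsum_eq_zero_add, ((summable_nat_add_iff 1).2 hz2.summable).tsum_eq_zero_add]
    have ha0 : a ≠ 0 := by intro h; rw [h] at hare; simp at hare
    rw [hX, tsum_div_const, mul_add, mul_div_cancel₀ _ he0ne]
    simp only [Nat.cast_zero, Complex.zero_cpow ha0, div_zero, zero_add, Nat.cast_one, Complex.one_cpow, div_one, mul_one]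
    congr 1
    · rw [he0]; congr 1; push_cast; ring
  set p1 := cexp (-↑Real.pi * I * a / 2) with hp1
  set p2 := cexp (↑Real.pi * I * a / 2) with hp2
  have hW : (2 * (Real.pi:ℂ))^(-a) * p2 = LZW 1 t := by
    have hne : (2 * (Real.pi:ℂ)) ≠ 0 := by exact_mod_cast Real.two_pi_pos.ne'
    rw [Complex.cpow_def_of_ne_zero hne, hp2, ← Complex.exp_add, LZW, ← ha]
    have : Complex.log (2 * (Real.pi:ℂ)) = (Real.log (2*Real.pi*1) : ℂ) := by
      rw [mul_one, Complex.ofReal_log (by positivity)]; push_cast; rfl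
    rw [this]
    congr 1
    ring
  have hp : ‖p1 / p2‖ = Real.exp (-(Real.pi * t)) := by
    rw [hp1, hp2, ← Complex.exp_sub, Complex.norm_exp]
    congr 1
    rw [ha]
    simp
    ring
  have hp2ne : p2 ≠ 0 := Complex.exp_ne_zero _
  refine ⟨X, p1 / p2 * HurwitzZeta.expZeta (alp : UnitAddCircle) a / e0, hXb.trans hB, ?_, ?_⟩
  · rw [norm_div, norm_mul, hp, he0n, div_one, mul_comm]
    gcongr
  · rw [hE2, ← hW]
    field_simp
    ring

lemma LZ_left (lam alp : ℝ) (hl0 : 0 < lam) (hl1 : lam ≤ 1) (h0 : 0 < alp) (h1 : alp ≤ 1)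
    (F : ℂ → ℂ) (hF : IsLerch lam alp F) :
    ∃ (c0 : ℂ) (T0 : ℝ), 1 ≤ T0 ∧ ∀ t : ℝ, T0 ≤ t → ∃ h : ℂ, ‖h‖ ≤ 5/6 ∧
      F (-1 + t*I) = cexp (c0 + LZLam (2 - t*I) +
        (2 - t*I) * (-(Real.log (2*Real.pi*lam) : ℂ) + Real.pi/2*I)) * (1 + h) := by
  have : ∃ K : ℝ, ∀ t : ℝ, 0 < t → ∃ X Y : ℂ, ‖X‖ ≤ 2/3 ∧ ‖Y‖ ≤ K * Real.exp (-(Real.pi*t)) ∧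
      F (-1 + t*I) = cexp (-(2*Real.pi*I*lam*alp)) * Gamma (2 - t*I) * LZW lam t * (1 + X + Y) := by
    rcases lt_or_eq_of_le hl1 with h | h
    · exact LZ_left1 lam alp hl0 h h0 h1 F hF
    · subst h; exact LZ_left2 alp h0 h1 F hF
  obtain ⟨K, hK⟩ := this
  have hlim : Tendsto (fun t : ℝ => K * Real.exp (-(Real.pi*t))) atTop (𝓝 (K * 0)) := by
    refine Tendsto.const_mul _ (Real.tendsto_exp_neg_atTop_nhds_zero.comp ?_)
    exact tendsto_id.const_mul_atTop Real.pi_pos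
  rw [mul_zero] at hlim
  obtain ⟨T1, hT1⟩ := eventually_atTop.1 (hlim.eventually (gt_mem_nhds (by norm_num : (0:ℝ) < 1/6)))
  refine ⟨-(2*Real.pi*I*lam*alp), max T1 1, le_max_right _ _, fun t ht => ?_⟩
  have ht1 : T1 ≤ t := (le_max_left _ _).trans ht
  have ht2 : 1 ≤ t := (le_max_right _ _).trans ht
  obtain ⟨X, Y, hX, hY, he⟩ := hK t (by linarith)
  refine ⟨X + Y, ?_, ?_⟩
  · have := hT1 t ht1
    calc ‖X+Y‖ ≤ ‖X‖ + ‖Y‖ := norm_add_le _ _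
      _ ≤ 5/6 := by linarith
  · rw [he, Complex.exp_add, Complex.exp_add, LZLam_exp _ (by simp), LZW]
    ring

lemma LZ_right_q (alp : ℝ) (h0 : 0 < alp) :
    Summable (fun m : ℕ => (alp/((m:ℝ)+1+alp))^(1+alp)) ∧
      ∑' m : ℕ, (alp/((m:ℝ)+1+alp))^(1+alp) < 1 := by
  set d : ℕ → ℝ := fun m => alp^alp * ((m:ℝ)+alp)^(-alp) with hd
  have hterm : ∀ m : ℕ, (alp/((m:ℝ)+1+alp))^(1+alp) < d m - d (m+1) := by
    intro m
    set y : ℝ := (m:ℝ)+1+alp with hy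
    have hm : (0:ℝ) ≤ m := Nat.cast_nonneg m
    have hyp : 0 < y := by positivity
    have hy1 : 0 < y - 1 := by rw [hy]; linarith
    set v : ℝ := (y-1)/y with hv
    have hvp : 0 < v := div_pos hy1 hyp
    have hv1 : v < 1 := by rw [hv, div_lt_one hyp]; linarith
    have hvy : 1 - v = 1/y := by rw [hv]; field_simp; ring
    have hkey : 1 + alp / y < v^(-alp) := by
      rw [Real.rpow_def_of_pos hvp]
      have hl := Real.log_lt_sub_one_of_pos hvp hv1.ne
      have := Real.add_one_le_exp (Real.log v * -alp)
      have h3 : alp / y = alp * (1 - v) := by rw [hvy]; ring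
      rw [h3]
      nlinarith
    have e1 : (y-1)^(-alp) = y^(-alp) * v^(-alp) := by
      rw [← Real.mul_rpow hyp.le hvp.le, hv]; congr 1; field_simp
    have e2 : d m - d (m+1) = alp^alp * y^(-alp) * (v^(-alp) - 1) := by
      simp only [hd]
      have a1 : (m:ℝ) + alp = y - 1 := by rw [hy]; ring
      have a2 : ((m+1 : ℕ):ℝ) + alp = y := by rw [hy]; push_cast; ring
      rw [a1, a2, e1]; ring
    have e3 : (alp/y)^(1+alp) = alp^alp * y^(-alp) * (alp/y) := by
      rw [Real.rpow_add (div_pos h0 hyp), Real.rpow_one, Real.div_rpow h0.le hyp.le, Real.rpow_neg hyp.le]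
      ring
    rw [e2, e3]
    have : 0 < alp^alp * y^(-alp) := by positivity
    exact mul_lt_mul_of_pos_left (by linarith) this
  have hnn : ∀ m : ℕ, 0 ≤ (alp/((m:ℝ)+1+alp))^(1+alp) := fun m => by positivity
  have hsum : HasSum (fun m => d m - d (m+1)) 1 := by
    rw [hasSum_iff_tendsto_nat_of_nonneg (fun m => (hnn m).trans (hterm m).le)]
    simp_rw [Finset.sum_range_sub']
    have hd0 : d 0 = 1 := by
      simp only [hd]
      rw [Nat.cast_zero, zero_add, ← Real.rpow_add h0]; simp
    have : Tendsto d atTop (𝓝 0) := by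
      have h2 : Tendsto (fun m : ℕ => ((m:ℝ)+alp)^(-alp)) atTop (𝓝 0) :=
        (tendsto_rpow_neg_atTop h0).comp (tendsto_atTop_add_const_right _ _ tendsto_natCast_atTop_atTop)
      have := h2.const_mul (alp^alp)
      rwa [mul_zero] at this
    have h3 := (tendsto_const_nhds (x := d 0)).sub this
    rw [hd0, sub_zero] at h3
    rw [hd0]
    exact h3
  have hs : Summable (fun m : ℕ => (alp/((m:ℝ)+1+alp))^(1+alp)) :=
    Summable.of_nonneg_of_le hnn (fun m => (hterm m).le) hsum.summable
  refine ⟨hs, ?_⟩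
  calc _ < ∑' m, (d m - d (m+1)) := hs.tsum_lt_tsum (fun m => (hterm m).le) (hterm 0) hsum.summable
    _ = 1 := hsum.tsum_eq

lemma LZ_right (lam alp : ℝ) (h0 : 0 < alp) (F : ℂ → ℂ) (hF : IsLerch lam alp F) :
    ∃ q : ℝ, 0 ≤ q ∧ q < 1 ∧ ∀ t : ℝ, ∃ h : ℂ, ‖h‖ ≤ q ∧
      F (((1 + alp : ℝ):ℂ) + t*I) = cexp (-(((1 + alp : ℝ):ℂ) + t*I) * Real.log alp) * (1 + h) := by
  obtain ⟨hs, hlt⟩ := LZ_right_q alp h0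
  refine ⟨_, tsum_nonneg (fun m => by positivity), hlt, fun t => ?_⟩
  set s : ℂ := ((1 + alp : ℝ):ℂ) + t*I with hsdef
  have hsre : s.re = 1 + alp := by simp [hsdef]
  have hsum := LZ_summable_series (LZq lam) (LZq_norm lam).le alp h0 s (by rw [hsre]; linarith)
  rw [hF.2 s (by rw [hsre]; linarith), LZ_lerchSeries_eq, hsum.tsum_eq_zero_add]
  have hA : ((((0:ℕ) + alp : ℝ)):ℂ)^(-s) = cexp (-s * Real.log alp) := by
    rw [Nat.cast_zero, zero_add, Complex.cpow_def_of_ne_zero (by exact_mod_cast h0.ne'),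
      Complex.ofReal_log h0.le, mul_comm]
  set A := cexp (-s * Real.log alp) with hAdef
  have hAne : A ≠ 0 := Complex.exp_ne_zero _
  have hAn : ‖A‖ = alp^(-(1+alp)) := by
    rw [← hA, Nat.cast_zero, zero_add, Complex.norm_cpow_eq_rpow_re_of_pos h0, neg_re, hsre]
  refine ⟨∑' m : ℕ, LZq lam^(m+1) * ((((m+1 : ℕ) + alp : ℝ)):ℂ)^(-s) / A, ?_, ?_⟩
  · refine tsum_of_norm_bounded hs.hasSum (fun m => ?_)
    have hp : 0 < (((m+1 : ℕ):ℝ) + alp) := by positivity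
    rw [norm_div, norm_mul, norm_pow, LZq_norm, one_pow, one_mul, Complex.norm_cpow_eq_rpow_re_of_pos hp, hAn,
      neg_re, hsre, Real.div_rpow h0.le (by positivity), Real.rpow_neg hp.le, Real.rpow_neg h0.le]
    push_cast
    rw [div_inv_eq_mul, mul_comm, div_eq_mul_inv]
  · rw [tsum_div_const, mul_add, mul_div_cancel₀ _ hAne, hA]
    simp

lemma LZ_edge (f A : ℂ → ℂ) (x c d q : ℝ) (hcd : c ≤ d) (hq : q < 1)
    (hf : ∀ y ∈ Icc c d, AnalyticAt ℂ f ((x:ℂ) + y*I))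
    (hA : ∀ y ∈ Icc c d, DifferentiableAt ℂ A ((x:ℂ) + y*I))
    (hrep : ∀ y ∈ Icc c d, ∃ h : ℂ, ‖h‖ ≤ q ∧ f ((x:ℂ) + y*I) = cexp (A ((x:ℂ) + y*I)) * (1 + h)) :
    |(I * ∫ y in c..d, logDeriv f ((x:ℂ) + y*I)).im - ((A ((x:ℂ) + d*I)).im - (A ((x:ℂ) + c*I)).im)| ≤ 2*Real.pi := by
  have hsl : ∀ y ∈ Icc c d, f ((x:ℂ) + y*I) * cexp (-A ((x:ℂ) + y*I)) ∈ slitPlane := by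
    intro y hy
    obtain ⟨h, hh, he⟩ := hrep y hy
    have e : f ((x:ℂ) + y*I) * cexp (-A ((x:ℂ) + y*I)) = 1 + h := by
      rw [he, mul_right_comm, ← Complex.exp_add]; simp
    rw [e]
    left
    have := (Complex.abs_re_le_norm h).trans hh
    have := (abs_le.1 this).1
    rw [add_re, one_re]; linarith
  have hfne : ∀ y ∈ Icc c d, f ((x:ℂ) + y*I) ≠ 0 := by
    intro y hy h0
    have := hsl y hy
    rw [h0, zero_mul] at this
    exact Complex.slitPlane_ne_zero this rfl
  set G : ℂ → ℂ := fun s => A s + Complex.log (f s * cexp (-A s)) with hG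
  have key := LZ_ftc_v G (logDeriv f) c d x ?_ ?_
  · rw [key, hG]
    simp only [sub_im, add_im]
    have h1 := Complex.abs_arg_le_pi (f ((x:ℂ) + d*I) * cexp (-A ((x:ℂ) + d*I)))
    have h2 := Complex.abs_arg_le_pi (f ((x:ℂ) + c*I) * cexp (-A ((x:ℂ) + c*I)))
    rw [Complex.log_im, Complex.log_im]
    rw [abs_le] at *
    constructor <;> linarith [h1.1, h1.2, h2.1, h2.2]
  · intro y hy
    rw [uIcc_of_le hcd] at hy
    have d1 := (hf y hy).differentiableAt.hasDerivAt
    have d2 := (hA y hy).hasDerivAt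
    have d3 := (d1.mul (d2.neg.cexp)).clog (hsl y hy)
    have d4 := d2.add d3
    have hne := hfne y hy
    have hexp : cexp (-A ((x:ℂ) + y*I)) ≠ 0 := Complex.exp_ne_zero _
    have e : deriv A ((x:ℂ) + y*I) + (deriv f ((x:ℂ) + y*I) * cexp (-A ((x:ℂ) + y*I)) +
        f ((x:ℂ) + y*I) * (cexp (-A ((x:ℂ) + y*I)) * -deriv A ((x:ℂ) + y*I))) /
        (f ((x:ℂ) + y*I) * cexp (-A ((x:ℂ) + y*I))) = logDeriv f ((x:ℂ) + y*I) := by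
      rw [logDeriv_apply]
      field_simp
      ring
    exact e ▸ d4
  · intro y hy
    rw [uIcc_of_le hcd] at hy
    have h1 : ContinuousAt (logDeriv f) ((x:ℂ) + y*I) :=
      ((hf y hy).deriv.continuousAt).div (hf y hy).continuousAt (hfne y hy)
    have h2 : ContinuousAt (fun y : ℝ => (x:ℂ) + y*I) y := by fun_prop
    exact (ContinuousAt.comp (f := fun y : ℝ => (x:ℂ) + y*I) (g := logDeriv f) h1 h2).continuousWithinAt

lemma LZ_F_diffOn (lam alp : ℝ) (F : ℂ → ℂ) (hF : IsLerch lam alp F) :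
    DifferentiableOn ℂ F {z : ℂ | 0 < z.im} := fun z hz =>
  (hF.1 z (by rintro rfl; simp at hz)).differentiableWithinAt

lemma LZ_uhp_open : IsOpen {z : ℂ | 0 < z.im} := isOpen_lt continuous_const Complex.continuous_im

lemma LZ_right_lower (lam alp : ℝ) (h0 : 0 < alp) (h1 : alp ≤ 1) (F : ℂ → ℂ) (hF : IsLerch lam alp F) :
    ∃ e : ℝ, 0 < e ∧ ∀ t : ℝ, e ≤ ‖F (((1 + alp : ℝ):ℂ) + t*I)‖ := by
  obtain ⟨q, hq0, hq1, hq⟩ := LZ_right lam alp h0 F hF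
  refine ⟨1 - q, by linarith, fun t => ?_⟩
  obtain ⟨h, hh, he⟩ := hq t
  rw [he, norm_mul, Complex.norm_exp]
  have h2 : 1 - q ≤ ‖1 + h‖ := by
    have := norm_sub_norm_le (1:ℂ) (-h)
    rw [norm_neg, norm_one, sub_neg_eq_add] at this
    linarith
  have h3 : (-(((1 + alp : ℝ):ℂ) + t*I) * (Real.log alp : ℂ)).re = -(1+alp) * Real.log alp := by simp
  rw [h3]
  have h4 : 0 ≤ -(1+alp) * Real.log alp := by
    have := Real.log_nonpos h0.le h1
    nlinarith
  have h5 := Real.one_le_exp h4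
  nlinarith [norm_nonneg (1+h)]

lemma LZ_top (lam alp : ℝ) (hl0 : 0 < lam) (hl1 : lam ≤ 1) (h0 : 0 < alp) (h1 : alp ≤ 1)
    (F : ℂ → ℂ) (hF : IsLerch lam alp F) :
    ∃ K : ℝ, 0 ≤ K ∧ ∀ T : ℝ, 27 ≤ T →
      (∀ x ∈ Icc (-1:ℝ) (1+alp), F ((x:ℂ) + T*I) ≠ 0) →
      |(∫ x in (-1:ℝ)..(1+alp), logDeriv F ((x:ℂ) + T*I)).im| ≤ K * Real.log T := by
  obtain ⟨H, hH1, hH2, hH3⟩ := LZ_cont lam alp hl0 hl1 h0 h1 30 (by norm_num)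
  obtain ⟨C, hC0, hC⟩ := hH3 26
  obtain ⟨e, he0, he⟩ := LZ_right_lower lam alp h0 h1 F hF
  set D : ℝ := 3 + C * 2^31 / e with hD
  have hD3 : 3 ≤ D := by rw [hD]; have : 0 ≤ C * 2^31 / e := by positivity
                         linarith
  have hlogD : 0 ≤ Real.log D := Real.log_nonneg (by linarith)
  refine ⟨8 * (Real.log D + 31), by positivity, fun T hT hnz => ?_⟩
  have hT1 : 1 ≤ Real.log T := by
    rw [Real.le_log_iff_exp_le (by linarith)]
    linarith [Real.exp_one_lt_d9]
  set s₀ : ℂ := ((1 + alp : ℝ):ℂ) + T*I with hs₀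
  have hs0re : s₀.re = 1 + alp := by simp [hs₀]
  have hs0im : s₀.im = T := by simp [hs₀]
  have hs0n : ‖s₀‖ ≤ 2 + T := by
    rw [hs₀]
    refine (norm_add_le _ _).trans ?_
    rw [norm_mul, Complex.norm_I, Complex.norm_real, Complex.norm_real, Real.norm_of_nonneg (by linarith),
      Real.norm_of_nonneg (by linarith)]
    linarith
  have hTp : (1:ℝ) ≤ T^31 := one_le_pow₀ (by linarith)
  have hball : ∀ z ∈ Metric.closedBall s₀ 24, |z.re - (1+alp)| ≤ 24 ∧ |z.im - T| ≤ 24 ∧ ‖z‖ ≤ T + 26 := by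
    intro z hz
    rw [Metric.mem_closedBall, dist_eq_norm] at hz
    refine ⟨?_, ?_, ?_⟩
    · have := (Complex.abs_re_le_norm (z - s₀)).trans hz
      rwa [sub_re, hs0re] at this
    · have := (Complex.abs_im_le_norm (z - s₀)).trans hz
      rwa [sub_im, hs0im] at this
    · have : ‖z‖ ≤ ‖z - s₀‖ + ‖s₀‖ := by
        have := norm_add_le (z - s₀) s₀
        rwa [sub_add_cancel] at this
      linarith
  have hFs0 : e ≤ ‖F s₀‖ := he T
  have hM3 : 3 ≤ D * T^31 := by nlinarith
  have key := LZ_horizontal {z : ℂ | 0 < z.im} LZ_uhp_open F (LZ_F_diffOn lam alp F hF) s₀ 24 (by norm_num) ?_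
    (D * T^31) hM3 ?_ ?_ (-1) (1+alp) T ?_ ?_
  · refine key.trans ?_
    rw [Real.log_mul (by positivity) (by positivity), Real.log_pow]
    push_cast
    nlinarith
  · intro z hz
    have := (abs_le.1 (hball z hz).2.1).1
    show 0 < z.im
    linarith
  · intro h; rw [h, norm_zero] at hFs0; linarith
  · intro z hz
    obtain ⟨b1, b2, b3⟩ := hball z hz
    rw [abs_le] at b1 b2
    have hre : 1 - ((30:ℕ):ℝ) < z.re := by push_cast; linarith [b1.1]
    have him : 1 ≤ z.im := by linarith [b2.1]
    have hFH := LZ_F_eq lam alp F hF 30 H hH1 hH2 z hre (by linarith)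
    have hz1 : 1 ≤ ‖z - 1‖ := by
      refine le_trans ?_ (Complex.abs_im_le_norm (z-1))
      simp; exact him.trans (le_abs_self _)
    have hle : ‖F z‖ ≤ ‖H z‖ := by
      rw [hFH, norm_mul]; nlinarith [norm_nonneg (F z)]
    have hHb := hC z (by push_cast; linarith [b1.1]) (by linarith [b1.2])
    calc ‖F z‖ ≤ C * (‖z‖+1)^31 := hle.trans hHb
      _ ≤ C * (2*T)^31 := by gcongr; linarith
      _ = (C * 2^31 / e) * T^31 * e := by field_simp
      _ ≤ D * T^31 * ‖F s₀‖ := by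
        gcongr
        rw [hD]; linarith
  · intro x hx
    rw [uIcc_of_le (by linarith)] at hx
    rw [Metric.mem_closedBall, dist_eq_norm]
    have : (x:ℂ) + T*I - s₀ = ((x - (1+alp) : ℝ) : ℂ) := by rw [hs₀]; push_cast; ring
    rw [this, Complex.norm_real, Real.norm_eq_abs, abs_le]
    constructor <;> linarith [hx.1, hx.2]
  · intro x hx
    rw [uIcc_of_le (by linarith)] at hx
    exact hnz x hx

lemma LZ_right_ne (lam alp : ℝ) (h0 : 0 < alp) (h1 : alp ≤ 1) (F : ℂ → ℂ) (hF : IsLerch lam alp F)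
    (z : ℂ) (hz : z.re = 1 + alp) : F z ≠ 0 := by
  obtain ⟨e, he0, he⟩ := LZ_right_lower lam alp h0 h1 F hF
  have := he z.im
  rw [← hz, Complex.re_add_im] at this
  intro h
  rw [h, norm_zero] at this
  linarith

lemma LZ_order_ne_top (lam alp : ℝ) (h0 : 0 < alp) (h1 : alp ≤ 1) (F : ℂ → ℂ) (hF : IsLerch lam alp F)
    (z : ℂ) (hz : 0 < z.im) : analyticOrderAt F z ≠ ⊤ := by
  intro h
  rw [analyticOrderAt_eq_top] at h
  have hA : AnalyticOnNhd ℂ F {z : ℂ | 0 < z.im} := (LZ_F_diffOn lam alp F hF).analyticOnNhd LZ_uhp_open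
  have := hA.eqOn_zero_of_preconnected_of_eventuallyEq_zero (convex_halfSpace_im_gt 0).isPreconnected hz h
  have h2 := this (x := ((1 + alp : ℝ):ℂ) + (1:ℝ)*I) (by show 0 < (((1 + alp : ℝ):ℂ) + (1:ℝ)*I).im; simp)
  exact LZ_right_ne lam alp h0 h1 F hF _ (by simp) h2

lemma LZ_zeros_finite (lam alp : ℝ) (hl0 : 0 < lam) (hl1 : lam ≤ 1) (h0 : 0 < alp) (h1 : alp ≤ 1)
    (F : ℂ → ℂ) (hF : IsLerch lam alp F) (T : ℝ) :
    {z : ℂ | F z = 0 ∧ -1 ≤ z.re ∧ z.re ≤ 1 + alp ∧ 0 < z.im ∧ z.im ≤ T}.Finite := by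
  obtain ⟨H, hH1, hH2, hH3⟩ := LZ_cont lam alp hl0 hl1 h0 h1 30 (by norm_num)
  set K : Set ℂ := Icc (-1) (1+alp) ×ℂ Icc 0 T with hK
  have hKc : IsCompact K := isCompact_Icc.reProdIm isCompact_Icc
  have hU : IsOpen {z : ℂ | 1 - ((30:ℕ):ℝ) < z.re} := isOpen_lt continuous_const Complex.continuous_re
  have hA : AnalyticOnNhd ℂ H {z : ℂ | 1 - ((30:ℕ):ℝ) < z.re} :=
    DifferentiableOn.analyticOnNhd (fun z hz => (hH1 z hz).differentiableWithinAt) hU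
  have hKU : ∀ z ∈ K, z ∈ {z : ℂ | 1 - ((30:ℕ):ℝ) < z.re} := by
    intro z hz
    show 1 - ((30:ℕ):ℝ) < z.re
    have := hz.1.1
    push_cast; linarith
  have hord : ∀ z ∈ K, analyticOrderAt H z ≠ ⊤ := by
    intro z hz h
    rw [analyticOrderAt_eq_top] at h
    have := hA.eqOn_zero_of_preconnected_of_eventuallyEq_zero (convex_halfSpace_re_gt _).isPreconnected (hKU z hz) h
    set w : ℂ := ((1 + alp : ℝ):ℂ) + (1:ℝ)*I with hw
    have hwre : w.re = 1 + alp := by simp [hw]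
    have hwim : w.im = 1 := by simp [hw]
    have hwU : 1 - ((30:ℕ):ℝ) < w.re := by rw [hwre]; push_cast; linarith
    have h2 : H w = 0 := this hwU
    rw [LZ_F_eq lam alp F hF 30 H hH1 hH2 w hwU (by rw [hwim]; norm_num), mul_eq_zero] at h2
    rcases h2 with h2 | h2
    · have := congrArg Complex.im h2
      rw [sub_im, hwim] at this; simp at this
    · exact LZ_right_ne lam alp h0 h1 F hF _ hwre h2
  refine (LZ_finite_zeros K hKc H (fun z hz => hA z (hKU z hz)) hord).subset ?_
  rintro z ⟨hz, a1, a2, a3, a4⟩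
  have hzK : z ∈ K := ⟨⟨a1, a2⟩, ⟨a3.le, a4⟩⟩
  refine ⟨hzK, ?_⟩
  rw [LZ_F_eq lam alp F hF 30 H hH1 hH2 z (hKU z hzK) a3, hz, mul_zero]

lemma LZ_nonord (lam alp : ℝ) (hl0 : 0 < lam) (hl1 : lam ≤ 1) (h0 : 0 < alp) (h1 : alp ≤ 1)
    (F : ℂ → ℂ) (hF : IsLerch lam alp F) (a b : ℝ) (ha : 0 ≤ a) (hab : a < b) :
    ∃ T, a < T ∧ T < b ∧ ∀ z : ℂ, z.im = T → -1 ≤ z.re → z.re ≤ 1 + alp → F z ≠ 0 := by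
  have hfin := (LZ_zeros_finite lam alp hl0 hl1 h0 h1 F hF b).image Complex.im
  obtain ⟨T, hT, hT2⟩ := ((Ioo_infinite hab).sdiff hfin).nonempty
  refine ⟨T, hT.1, hT.2, fun z hz r1 r2 hF0 => hT2 ⟨z, ⟨hF0, r1, r2, ?_, ?_⟩, hz⟩⟩
  · rw [hz]; linarith [hT.1]
  · rw [hz]; exact hT.2.le

def LZZ (F : ℂ → ℂ) (alp T : ℝ) : Set ℂ :=
  {ρ : ℂ | F ρ = 0 ∧ -1 ≤ ρ.re ∧ ρ.re < 1 + alp ∧ 0 < ρ.im ∧ ρ.im < T}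

noncomputable def LZN (F : ℂ → ℂ) (alp T : ℝ) : ℝ := ∑ᶠ ρ ∈ LZZ F alp T, (zeroOrder F ρ : ℝ)

lemma LZ_zeroOrder (F : ℂ → ℂ) (z : ℂ) (h : AnalyticAt ℂ F z) : zeroOrder F z = analyticOrderNatAt F z := by
  unfold zeroOrder analyticOrderNatAt
  rw [dif_pos h]

lemma LZZ_finite (lam alp : ℝ) (hl0 : 0 < lam) (hl1 : lam ≤ 1) (h0 : 0 < alp) (h1 : alp ≤ 1)
    (F : ℂ → ℂ) (hF : IsLerch lam alp F) (T : ℝ) : (LZZ F alp T).Finite :=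
  (LZ_zeros_finite lam alp hl0 hl1 h0 h1 F hF T).subset
    (fun _ hz => ⟨hz.1, hz.2.1, hz.2.2.1.le, hz.2.2.2.1, hz.2.2.2.2.le⟩)

lemma LZN_eq (F : ℂ → ℂ) (alp T : ℝ) (h : (LZZ F alp T).Finite) :
    LZN F alp T = ∑ ρ ∈ h.toFinset, (zeroOrder F ρ : ℝ) :=
  finsum_mem_eq_finite_toFinset_sum _ h

lemma LZN_mono (lam alp : ℝ) (hl0 : 0 < lam) (hl1 : lam ≤ 1) (h0 : 0 < alp) (h1 : alp ≤ 1)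
    (F : ℂ → ℂ) (hF : IsLerch lam alp F) (T T' : ℝ) (hT : T ≤ T') : LZN F alp T ≤ LZN F alp T' := by
  rw [LZN_eq F alp T (LZZ_finite lam alp hl0 hl1 h0 h1 F hF T), LZN_eq F alp T' (LZZ_finite lam alp hl0 hl1 h0 h1 F hF T')]
  refine Finset.sum_le_sum_of_subset_of_nonneg ?_ (fun _ _ _ => Nat.cast_nonneg _)
  intro z hz
  rw [Set.Finite.mem_toFinset] at hz ⊢
  exact ⟨hz.1, hz.2.1, hz.2.2.1, hz.2.2.2.1, hz.2.2.2.2.trans_le hT⟩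

lemma LZ_core (lam alp : ℝ) (hl0 : 0 < lam) (hl1 : lam ≤ 1) (h0 : 0 < alp) (h1 : alp ≤ 1)
    (F : ℂ → ℂ) (hF : IsLerch lam alp F) :
    ∃ T1 C1 K : ℝ, 0 ≤ K ∧ 27 ≤ T1 ∧ ∀ T : ℝ, T1 ≤ T →
      (∀ z : ℂ, z.im = T → -1 ≤ z.re → z.re ≤ 1 + alp → F z ≠ 0) →
      |2*Real.pi*LZN F alp T - (T * Real.log T - T - T * Real.log (2*Real.pi*lam) - T * Real.log alp)|
        ≤ C1 + K * Real.log T := by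
  obtain ⟨K, hK0, hK⟩ := LZ_top lam alp hl0 hl1 h0 h1 F hF
  obtain ⟨c0, T2, hT2, hleft⟩ := LZ_left lam alp hl0 hl1 h0 h1 F hF
  obtain ⟨q, hq0, hq1, hright⟩ := LZ_right lam alp h0 F hF
  obtain ⟨T0, hT0, -, hT0n⟩ := LZ_nonord lam alp hl0 hl1 h0 h1 F hF (T2 + 27) (T2 + 28) (by linarith) (by linarith)
  have hT0p : 28 < T0 := by linarith
  set ell : ℝ := Real.log (2*Real.pi*lam) with hell
  set la : ℝ := Real.log alp with hla
  set Al : ℂ → ℂ := fun s => c0 + LZLam (1 - s) + (1 - s) * (-(ell:ℂ) + Real.pi/2*I) with hAl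
  set Ar : ℂ → ℂ := fun s => -s * (la:ℂ) with hAr
  set Bt : ℝ := (∫ x in (-1:ℝ)..(1+alp), logDeriv F ((x:ℂ) + T0*I)).im with hBt
  set L0 : ℝ := (Al (((-1:ℝ):ℂ) + T0*I)).im with hL0
  refine ⟨T0, |Bt| + 4*Real.pi + |T0 * la| + |L0| + |c0.im| + 8 + Real.pi + |2*Real.pi*LZN F alp T0|, K, hK0, by linarith, fun T hT hTn => ?_⟩
  have han : ∀ z : ℂ, 0 < z.im → AnalyticAt ℂ F z := fun z hz =>
    (LZ_F_diffOn lam alp F hF).analyticAt (LZ_uhp_open.mem_nhds hz)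
  -- left edge
  have hL := LZ_edge F Al (-1) T0 T (5/6) hT (by norm_num)
    (fun y hy => han _ (by simp; linarith [hy.1])) ?_ ?_
  rotate_left
  · intro y hy
    have e : (1:ℂ) - (((-1:ℝ):ℂ) + y*I) = 2 - y*I := by push_cast; ring
    have h3 : DifferentiableAt ℂ (fun s : ℂ => LZLam (1 - s)) (((-1:ℝ):ℂ) + y*I) := by
      refine DifferentiableAt.comp (g := LZLam) (f := fun s : ℂ => 1 - s) _ ?_ (by fun_prop)
      exact LZLam_diff _ (by rw [e]; simp)
    simp only [hAl]
    exact (h3.const_add c0).add (by fun_prop)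
  · intro y hy
    obtain ⟨h, hh, he⟩ := hleft y (by linarith [hy.1])
    refine ⟨h, hh, ?_⟩
    have e : (1:ℂ) - (((-1:ℝ):ℂ) + y*I) = 2 - y*I := by push_cast; ring
    simp only [hAl]
    rw [e, ← he]
    push_cast; rfl
  -- right edge
  have hR := LZ_edge F Ar (1+alp) T0 T q hT hq1
    (fun y hy => han _ (by simp; linarith [hy.1])) (fun y _ => by simp only [hAr]; fun_prop) (fun y _ => hright y)
  have hAlT : (Al (((-1:ℝ):ℂ) + T*I)).im = c0.im + (LZLam (2 - T*I)).im + (Real.pi + T * ell) := by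
    have e : (1:ℂ) - (((-1:ℝ):ℂ) + T*I) = 2 - T*I := by push_cast; ring
    simp only [hAl]
    rw [e]
    simp
    ring
  have hArT : ∀ y : ℝ, (Ar (((1+alp : ℝ):ℂ) + y*I)).im = -(y * la) := by
    intro y; simp [hAr]
  rw [hArT, hArT] at hR
  rw [hAlT, ← hL0] at hL
  have hGam := LZLam_im T (by linarith)
  have hTop := hK T (by linarith) (fun x hx => hTn _ (by simp) (by simpa using hx.1) (by simpa using hx.2))
  -- argument principle
  have hfin := LZZ_finite lam alp hl0 hl1 h0 h1 F hF T
  have hfin0 := LZZ_finite lam alp hl0 hl1 h0 h1 F hF T0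
  have hsub : hfin0.toFinset ⊆ hfin.toFinset := by
    intro z hz
    rw [Set.Finite.mem_toFinset] at hz ⊢
    exact ⟨hz.1, hz.2.1, hz.2.2.1, hz.2.2.2.1, hz.2.2.2.2.trans_le hT⟩
  set S := hfin.toFinset \ hfin0.toFinset with hS
  have hSm : ∀ z, z ∈ S → z ∈ LZZ F alp T ∧ T0 < z.im := by
    intro z hz
    rw [hS, Finset.mem_sdiff, Set.Finite.mem_toFinset, Set.Finite.mem_toFinset] at hz
    refine ⟨hz.1, ?_⟩
    by_contra hcon
    rcases lt_or_eq_of_le (not_lt.1 hcon) with hlt | heq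
    · exact hz.2 ⟨hz.1.1, hz.1.2.1, hz.1.2.2.1, hz.1.2.2.2.1, hlt⟩
    · exact hT0n z heq hz.1.2.1 hz.1.2.2.1.le hz.1.1
  have hleftne : ∀ z : ℂ, z.re = -1 → T0 ≤ z.im → F z ≠ 0 := by
    intro z hz hzi hF0
    obtain ⟨h, hh, he⟩ := hleft z.im (by linarith)
    have e : (-1 + z.im * I : ℂ) = z := by
      apply Complex.ext <;> simp [hz]
    rw [e, hF0] at he
    have h3 := (mul_eq_zero.1 he.symm).resolve_left (Complex.exp_ne_zero _)
    have h4 : h = -1 := by linear_combination h3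
    rw [h4, norm_neg, norm_one] at hh
    norm_num at hh
  have hap := LZ_argument_principle {z : ℂ | 0 < z.im} LZ_uhp_open F (LZ_F_diffOn lam alp F hF)
    (a := -1) (b := 1+alp) (c := T0) (d := T) (by linarith) hT
    (fun z hz => by show 0 < z.im; have := hz.2.1; linarith) S ?_ ?_ ?_
  rotate_left
  · intro z hz
    obtain ⟨hz1, hz2⟩ := hSm z hz
    refine ⟨lt_of_le_of_ne hz1.2.1 (fun h => hleftne z h.symm hz2.le hz1.1), hz1.2.2.1, hz2, hz1.2.2.2.2⟩
  · intro z hz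
    exact LZ_order_ne_top lam alp h0 h1 F hF z (hSm z hz).1.2.2.2.1
  · intro z hz hzS hF0
    obtain ⟨⟨r1, r2⟩, ⟨i1, i2⟩⟩ := hz
    have r1 : -1 ≤ z.re := r1
    have r2 : z.re ≤ 1 + alp := r2
    have i1 : T0 ≤ z.im := i1
    have i2 : z.im ≤ T := i2
    apply hzS
    rw [hS, Finset.mem_sdiff, Set.Finite.mem_toFinset, Set.Finite.mem_toFinset]
    refine ⟨⟨hF0, r1, lt_of_le_of_ne r2 (fun h => LZ_right_ne lam alp h0 h1 F hF z h hF0), by linarith,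
      lt_of_le_of_ne i2 (fun h => hTn z h r1 r2 hF0)⟩, fun h => ?_⟩
    linarith [h.2.2.2.2]
  have hsum : (2 * Real.pi * I * (∑ ρ ∈ S, (analyticOrderNatAt F ρ : ℂ))).im =
      2*Real.pi*LZN F alp T - 2*Real.pi*LZN F alp T0 := by
    have e1 : (∑ ρ ∈ S, (analyticOrderNatAt F ρ : ℂ)) = ((∑ ρ ∈ S, (zeroOrder F ρ : ℝ) : ℝ) : ℂ) := by
      push_cast
      refine Finset.sum_congr rfl (fun z hz => ?_)
      rw [LZ_zeroOrder F z (han z (hSm z hz).1.2.2.2.1)]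
    have e2 : ∑ ρ ∈ S, (zeroOrder F ρ : ℝ) = LZN F alp T - LZN F alp T0 := by
      rw [LZN_eq F alp T hfin, LZN_eq F alp T0 hfin0, hS, ← Finset.sum_sdiff hsub]
      ring
    rw [e1, e2]
    simp [-ofReal_sub]
    ring
  rw [← hap] at hsum
  unfold LZrect at hsum
  rw [sub_im, add_im, sub_im, ← hBt] at hsum
  set tp := (∫ x in (-1:ℝ)..(1+alp), logDeriv F ((x:ℂ) + T*I)).im with htp
  set ri := (I * ∫ y in T0..T, logDeriv F (((1+alp : ℝ):ℂ) + y*I)).im with hri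
  set le := (I * ∫ y in T0..T, logDeriv F (((-1 : ℝ):ℂ) + y*I)).im with hle
  have hmain : 2*Real.pi*LZN F alp T = Bt - tp + ri - le + 2*Real.pi*LZN F alp T0 := by linarith
  rw [hmain]
  have b1 := abs_le.1 hL
  have b2 := abs_le.1 hR
  have b3 := abs_le.1 hGam
  have b4 := abs_le.1 hTop
  have a1 := le_abs_self Bt
  have a1' := neg_abs_le Bt
  have a2 := le_abs_self (T0*la)
  have a2' := neg_abs_le (T0*la)
  have a3 := le_abs_self L0
  have a3' := neg_abs_le L0
  have a4 := le_abs_self c0.im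
  have a4' := neg_abs_le c0.im
  have a5 := le_abs_self (2*Real.pi*LZN F alp T0)
  have a5' := neg_abs_le (2*Real.pi*LZN F alp T0)
  rw [abs_le]
  constructor <;> linarith [Real.pi_pos, b1.1, b1.2, b2.1, b2.2, b3.1, b3.2, b4.1, b4.2]

lemma LZ_gdiff (c x y : ℝ) (hx : 1 ≤ x) (hxy : x ≤ y) (hy : y ≤ x + 1) :
    |(y * Real.log y - y - y * c) - (x * Real.log x - x - x * c)| ≤ Real.log y + 1 + (1 + |c|) := by
  have h1 : 0 ≤ x * (Real.log y - Real.log x) := 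
    mul_nonneg (by linarith) (by linarith [Real.log_le_log (by linarith) hxy])
  have h2 : x * (Real.log y - Real.log x) ≤ 1 := by
    rw [← Real.log_div (by linarith) (by linarith)]
    have := Real.log_le_sub_one_of_pos (show 0 < y / x by apply div_pos <;> linarith)
    calc x * Real.log (y/x) ≤ x * (y/x - 1) := by gcongr
      _ = y - x := by field_simp
      _ ≤ 1 := by linarith
  have hl : 0 ≤ Real.log y := Real.log_nonneg (by linarith)
  have h3 : (y - x) * Real.log y ≤ Real.log y := by nlinarith
  have h4 : 0 ≤ (y - x) * Real.log y := mul_nonneg (by linarith) hl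
  have h5 : |(y - x) * (1 + c)| ≤ 1 + |c| := by
    rw [abs_mul]
    have a1 : |y - x| ≤ 1 := by rw [abs_le]; constructor <;> linarith
    have a2 : |1 + c| ≤ 1 + |c| := by simpa using abs_add_le 1 c
    nlinarith [abs_nonneg (1+c), abs_nonneg (y-x)]
  have e : (y * Real.log y - y - y * c) - (x * Real.log x - x - x * c) =
      ((y - x) * Real.log y + x * (Real.log y - Real.log x)) - (y - x) * (1 + c) := by ring
  rw [e]
  rw [abs_le] at h5 ⊢
  constructor <;> linarith [h5.1, h5.2]

lemma LZ_final (lam alp : ℝ) (hl0 : 0 < lam) (hl1 : lam ≤ 1) (h0 : 0 < alp) (h1 : alp ≤ 1)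
    (F : ℂ → ℂ) (hF : IsLerch lam alp F) :
    (fun T : ℝ => LZN F alp T
        - T / (2 * Real.pi) * Real.log (T / (2 * Real.pi * Real.exp 1 * alp * lam)))
      =O[Filter.atTop] Real.log := by
  obtain ⟨T1, C1, K, hK, hT1, hcore⟩ := LZ_core lam alp hl0 hl1 h0 h1 F hF
  set c := Real.log (2 * Real.pi * lam) + Real.log alp with hc
  have hpi := Real.pi_pos
  refine Asymptotics.IsBigO.of_bound ((|C1| + 2 * K + 3 + (1 + |c|) + K) / (2 * Real.pi)) ?_
  filter_upwards [eventually_ge_atTop (T1 + 1)] with T hT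
  have hTp : 0 < T := by linarith
  have hlog1 : 1 ≤ Real.log T := by
    rw [Real.le_log_iff_exp_le hTp]
    linarith [Real.exp_one_lt_d9]
  have hg : T * Real.log (T / (2 * Real.pi * Real.exp 1 * alp * lam)) =
      T * Real.log T - T - T * c := by
    have e : 2 * Real.pi * Real.exp 1 * alp * lam = (2 * Real.pi * lam) * alp * Real.exp 1 := by ring
    rw [e, Real.log_div hTp.ne' (by positivity), Real.log_mul (by positivity) (by positivity),
      Real.log_mul (by positivity) (by positivity), Real.log_exp, hc]
    ring
  obtain ⟨a, ha1, ha2, ha⟩ := LZ_nonord lam alp hl0 hl1 h0 h1 F hF (T-1) T (by linarith) (by linarith)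
  obtain ⟨b, hb1, hb2, hb⟩ := LZ_nonord lam alp hl0 hl1 h0 h1 F hF T (T+1) (by linarith) (by linarith)
  have ca := hcore a (by linarith) ha
  have cb := hcore b (by linarith) hb
  have ma := LZN_mono lam alp hl0 hl1 h0 h1 F hF a T ha2.le
  have mb := LZN_mono lam alp hl0 hl1 h0 h1 F hF T b hb1.le
  have ga := LZ_gdiff c a T (by linarith) ha2.le (by linarith)
  have gb := LZ_gdiff c T b (by linarith) hb1.le (by linarith)
  have la : Real.log a ≤ Real.log T := Real.log_le_log (by linarith) ha2.le
  have lb : Real.log b ≤ Real.log T + 1 := by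
    have := Real.log_le_sub_one_of_pos (show 0 < b / T by apply div_pos <;> linarith)
    rw [Real.log_div (by linarith) (by linarith)] at this
    have h : b / T ≤ 2 := by rw [div_le_iff₀ hTp]; linarith
    linarith
  have ea : a * Real.log a - a - a * Real.log (2 * Real.pi * lam) - a * Real.log alp =
    a * Real.log a - a - a * c := by rw [hc]; ring
  have eb : b * Real.log b - b - b * Real.log (2 * Real.pi * lam) - b * Real.log alp =
    b * Real.log b - b - b * c := by rw [hc]; ring
  rw [ea] at ca
  rw [eb] at cb
  have ka : K * Real.log a ≤ K * Real.log T := by gcongr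
  have kb : K * Real.log b ≤ K * (Real.log T + 1) := by gcongr
  have ma' : 2 * Real.pi * LZN F alp a ≤ 2 * Real.pi * LZN F alp T := by gcongr
  have mb' : 2 * Real.pi * LZN F alp T ≤ 2 * Real.pi * LZN F alp b := by gcongr
  have hC := le_abs_self C1
  have hC0 := abs_nonneg C1
  have hc0 := abs_nonneg c
  have p1 : |C1| ≤ |C1| * Real.log T := le_mul_of_one_le_right hC0 hlog1
  have p2 : |c| ≤ |c| * Real.log T := le_mul_of_one_le_right hc0 hlog1
  have p3 : K ≤ K * Real.log T := le_mul_of_one_le_right hK hlog1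
  rw [abs_le] at ca cb ga gb
  have main : |2 * Real.pi * LZN F alp T - (T * Real.log T - T - T * c)| ≤
      (|C1| + 2 * K + 3 + (1 + |c|) + K) * Real.log T := by
    have ex : (|C1| + 2 * K + 3 + (1 + |c|) + K) * Real.log T =
      |C1| * Real.log T + 3 * (K * Real.log T) + 4 * Real.log T + |c| * Real.log T := by ring
    rw [ex, abs_le]
    rw [mul_add, mul_one] at kb
    constructor <;> linarith [ca.1, ca.2, cb.1, cb.2, ga.1, ga.2, gb.1, gb.2]
  have e : LZN F alp T - T / (2 * Real.pi) * Real.log (T / (2 * Real.pi * Real.exp 1 * alp * lam)) =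
     (2 * Real.pi * LZN F alp T - (T * Real.log T - T - T * c)) / (2 * Real.pi) := by
    rw [← hg]; field_simp
  rw [e, Real.norm_eq_abs, Real.norm_eq_abs, abs_div, abs_of_pos (show 0 < 2 * Real.pi by positivity),
    abs_of_nonneg (show 0 ≤ Real.log T by linarith), div_mul_eq_mul_div]
  gcongr

end LZ

/-- the Riemann–von Mangoldt type formula for the number of nontrivial
zeros of the Lerch zeta-function. -/
theorem lerch_zero_counting (lam alp : ℝ) (hlam0 : 0 < lam) (hlam1 : lam ≤ 1)
    (halp0 : 0 < alp) (halp1 : alp ≤ 1) (F : ℂ → ℂ) (hF : IsLerch lam alp F) :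
    (fun T : ℝ =>
        (∑ᶠ ρ ∈ {ρ : ℂ | F ρ = 0 ∧ -1 ≤ ρ.re ∧ ρ.re < 1 + alp ∧ 0 < ρ.im ∧ ρ.im < T},
          (zeroOrder F ρ : ℝ))
        - T / (2 * Real.pi) * Real.log (T / (2 * Real.pi * Real.exp 1 * alp * lam)))
      =O[Filter.atTop] Real.log := by
  exact LZ_final lam alp hlam0 hlam1 halp0 halp1 F hF
end

section
/- Let 0 < λ ≤ 1 and 0 < α ≤ 1. Then L(λ,α,s) ≠ 0 for every s ∈ ℂ with Re s ≥ 1 + α. -/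
open scoped Classical

/-- Comparison of one term with the integral of the power function. -/
theorem aux_term {a p : ℝ} (ha : 0 < a) (hp : 0 < p) :
    (a + 1) ^ (-(p + 1)) < (a ^ (-p) - (a + 1) ^ (-p)) / p := by
  have hb : 0 < a + 1 := by linarith
  have hlog : Real.log (a / (a + 1)) ≤ a / (a + 1) - 1 :=
    Real.log_le_sub_one_of_pos (by positivity)
  have h1 : a / (a + 1) - 1 = -(1 / (a + 1)) := by field_simp; ring
  have h2 : p / (a + 1) + 1 < Real.exp (p / (a + 1)) :=
    Real.add_one_lt_exp (by positivity)
  have h3 : Real.exp (p / (a + 1)) ≤ (a / (a + 1)) ^ (-p) := by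
    rw [Real.rpow_def_of_pos (by positivity)]
    apply Real.exp_le_exp.mpr
    have : p * Real.log (a / (a + 1)) ≤ p * (-(1 / (a + 1))) :=
      mul_le_mul_of_nonneg_left (by linarith) hp.le
    have h4 : p / (a + 1) = p * (1 / (a + 1)) := by ring
    rw [h4]; linarith
  have hB : 0 < (a + 1) ^ (-p) := Real.rpow_pos_of_pos hb _
  rw [Real.div_rpow ha.le hb.le] at h3
  have h5 : p / (a + 1) + 1 < a ^ (-p) / (a + 1) ^ (-p) := lt_of_lt_of_le h2 h3
  rw [lt_div_iff₀ hB] at h5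
  have h6 : (a + 1) ^ (-(p + 1)) = (a + 1) ^ (-p) / (a + 1) := by
    rw [show -(p + 1) = -p - 1 by ring, Real.rpow_sub_one hb.ne']
  rw [h6, lt_div_iff₀ hp]
  have h7 : (p / (a + 1) + 1) * (a + 1) ^ (-p)
      = (a + 1) ^ (-p) / (a + 1) * p + (a + 1) ^ (-p) := by ring
  linarith

theorem aux_hasSum {a p : ℝ} (ha : 0 < a) (hp : 0 < p) :
    HasSum (fun m : ℕ => (((m : ℝ) + a) ^ (-p) - ((m : ℝ) + a + 1) ^ (-p)) / p)
      (a ^ (-p) / p) := by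
  rw [hasSum_iff_tendsto_nat_of_nonneg]
  · have h : ∀ n : ℕ, ∑ m ∈ Finset.range n,
        (((m : ℝ) + a) ^ (-p) - ((m : ℝ) + a + 1) ^ (-p)) / p
        = (a ^ (-p) - ((n : ℝ) + a) ^ (-p)) / p := by
      intro n
      induction n with
      | zero => simp
      | succ k ih =>
        rw [Finset.sum_range_succ, ih, Nat.cast_succ, add_right_comm (k : ℝ) 1 a]
        ring
    simp only [h]
    have ht : Filter.Tendsto (fun n : ℕ => ((n : ℝ) + a) ^ (-p)) Filter.atTop (nhds 0) :=
      (tendsto_rpow_neg_atTop hp).comp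
        (Filter.tendsto_atTop_add_const_right _ a tendsto_natCast_atTop_atTop)
    simpa using (ht.const_sub (a ^ (-p))).div_const p
  · intro m
    have hm : 0 < (m : ℝ) + a := by positivity
    exact ((Real.rpow_pos_of_pos (by linarith) _).trans (aux_term hm hp)).le

/-- the Lerch zeta-function has no zeros in the half-plane `re s ≥ 1 + α`. -/
theorem lerch_nonzero_right_halfplane (lam alp : ℝ) (hlam0 : 0 < lam) (hlam1 : lam ≤ 1)
    (halp0 : 0 < alp) (halp1 : alp ≤ 1) (F : ℂ → ℂ) (hF : IsLerch lam alp F) :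
    ∀ s : ℂ, 1 + alp ≤ s.re → F s ≠ 0 := by
  intro s hs
  have hp : 0 < s.re - 1 := by linarith
  rw [hF.2 s (by linarith), lerchSeries]
  set f : ℕ → ℂ := fun m =>
    Complex.exp (2 * Real.pi * Complex.I * lam * m) / ((m : ℂ) + alp) ^ s with hf
  have hnorm : ∀ m : ℕ, ‖f m‖ = ((m : ℝ) + alp) ^ (-s.re) := by
    intro m
    have hm : 0 < (m : ℝ) + alp := by positivity
    have h1 : (m : ℂ) + alp = (((m : ℝ) + alp : ℝ) : ℂ) := by push_cast; rfl
    have h2 : (2 * Real.pi * Complex.I * lam * m : ℂ)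
        = ((2 * Real.pi * lam * m : ℝ) : ℂ) * Complex.I := by push_cast; ring
    simp only [hf]
    rw [norm_div, h2, Complex.norm_exp_ofReal_mul_I, h1,
      Complex.norm_cpow_eq_rpow_re_of_pos hm, Real.rpow_neg hm.le, one_div]
  have hlt : ∀ m : ℕ, ‖f (m + 1)‖ <
      (((m : ℝ) + alp) ^ (-(s.re - 1)) - ((m : ℝ) + alp + 1) ^ (-(s.re - 1))) / (s.re - 1) := by
    intro m
    have hm : 0 < (m : ℝ) + alp := by positivity
    have := aux_term hm hp
    rw [hnorm, Nat.cast_succ, add_right_comm]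
    rwa [sub_add_cancel] at this
  have hG := aux_hasSum halp0 hp
  have hsn : Summable (fun m => ‖f (m + 1)‖) :=
    Summable.of_nonneg_of_le (fun _ => norm_nonneg _) (fun m => (hlt m).le) hG.summable
  have htail : ∑' m, ‖f (m + 1)‖ < alp ^ (-(s.re - 1)) / (s.re - 1) := by
    rw [← hG.tsum_eq]
    exact Summable.tsum_lt_tsum (fun m => (hlt m).le) (hlt 0) hsn hG.summable
  have hle : alp ^ (-(s.re - 1)) / (s.re - 1) ≤ alp ^ (-s.re) := by
    rw [show -(s.re - 1) = -s.re + 1 by ring, Real.rpow_add_one halp0.ne', div_le_iff₀ hp]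
    exact mul_le_mul_of_nonneg_left (by linarith) (Real.rpow_nonneg halp0.le _)
  have hsum : Summable f := (summable_nat_add_iff 1).mp hsn.of_norm
  intro h0
  rw [hsum.tsum_eq_zero_add] at h0
  have h1 : ‖f 0‖ = ‖∑' m, f (m + 1)‖ := by
    rw [eq_neg_of_add_eq_zero_left h0, norm_neg]
  have h2 := norm_tsum_le_tsum_norm hsn
  have h3 := hnorm 0
  rw [Nat.cast_zero, zero_add] at h3
  linarith
end

section
/- Let λ ∈ {1/2, 1} and 0 < α ≤ 1. Then L(λ,α,s) ≠ 0 for every s = σ + it with σ < −1 and |t| ≥ 1. -/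
open scoped Classical

open Complex HurwitzZeta in
lemma lerchAux_bounds {C : ℝ} {a : ℕ → ℂ} {w A : ℂ} (hw : 2 ≤ w.re)
    (hA : HasSum (fun n : ℕ => a n / (n : ℂ) ^ w) A) (ha : ∀ n, ‖a n‖ ≤ C) (ha1 : ‖a 1‖ = C) :
    ‖A‖ ≤ C * (Real.pi ^ 2 / 6) ∧ C * (2 - Real.pi ^ 2 / 6) ≤ ‖A‖ := by
  have hC : 0 ≤ C := ha1 ▸ norm_nonneg _
  have hw0 : w ≠ 0 := by
    rintro rfl
    norm_num at hw
  have hterm : ∀ n : ℕ, ‖a n / (n : ℂ) ^ w‖ ≤ C * (1 / (n : ℝ) ^ 2) := by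
    intro n
    rcases Nat.eq_zero_or_pos n with rfl | hn
    · simp [hw0]
    · rw [norm_div, Complex.norm_natCast_cpow_of_pos hn, div_eq_mul_one_div]
      have h1 : (1 : ℝ) ≤ n := by exact_mod_cast hn
      have h2 : (n : ℝ) ^ 2 ≤ (n : ℝ) ^ w.re := by
        have := Real.rpow_le_rpow_of_exponent_le h1 hw
        simpa using this
      exact mul_le_mul (ha n) (one_div_le_one_div_of_le (by positivity) h2) (by positivity) hC
  have hz : HasSum (fun n : ℕ => C * (1 / (n : ℝ) ^ 2)) (C * (Real.pi ^ 2 / 6)) :=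
    hasSum_zeta_two.mul_left C
  refine ⟨by rw [← hA.tsum_eq]; exact tsum_of_norm_bounded hz hterm, ?_⟩
  have hA' := hA.update 1 0
  have hz' := hz.update 1 0
  have hb := tsum_of_norm_bounded hz' (f := Function.update (fun n : ℕ => a n / (n : ℂ) ^ w) 1 0)
    (by
      intro n
      by_cases h : n = 1
      · subst h; simp
      · simpa [Function.update_of_ne h] using hterm n)
  rw [hA'.tsum_eq] at hb
  simp at hb
  have := norm_sub_norm_le (a 1) (a 1 - A)
  rw [show a 1 - (a 1 - A) = A by ring, ha1, ← norm_neg (a 1 - A),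
    show -(a 1 - A) = -a 1 + A by ring] at this
  linarith

lemma lerchAux_ne {C : ℝ} (hC : 0 < C) {x y A B : ℂ} (hx : x ≠ 0) (hxy : 7 * ‖y‖ ≤ ‖x‖)
    (hA : C * (2 - Real.pi ^ 2 / 6) ≤ ‖A‖) (hB : ‖B‖ ≤ C * (Real.pi ^ 2 / 6)) :
    x * A + y * B ≠ 0 := by
  intro h
  have h1 : ‖x‖ * ‖A‖ = ‖y‖ * ‖B‖ := by
    rw [← norm_mul, ← norm_mul, eq_neg_of_add_eq_zero_left h, norm_neg]
  have hx' : 0 < ‖x‖ := norm_pos_iff.mpr hx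
  have hpi : Real.pi ^ 2 / 6 < 1.65 := by
    nlinarith [Real.pi_lt_d4, Real.pi_pos]
  have hA' : C * 0.35 ≤ ‖A‖ := by nlinarith
  have hB' : ‖B‖ ≤ C * 1.65 := by nlinarith
  have h2 : ‖x‖ * (C * 0.35) ≤ ‖x‖ * ‖A‖ := by gcongr
  have h3 : ‖y‖ * ‖B‖ ≤ (‖x‖ / 7) * (C * 1.65) := by
    gcongr
    linarith
  have : 0 < ‖x‖ * C := by positivity
  linarith

lemma lerchAux_exp {v : ℝ} (hv : 1 ≤ v) :
    7 * Real.exp (-(Real.pi * v / 2)) ≤ Real.exp (Real.pi * v / 2) := by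
  have h7 : (7 : ℝ) ≤ Real.exp (Real.pi * v) := by
    have h1 := Real.exp_one_gt_d9
    have h2 : Real.exp 2 ≤ Real.exp (Real.pi * v) := by
      apply Real.exp_le_exp.mpr
      nlinarith [Real.pi_gt_three]
    have h3 : Real.exp 2 = Real.exp 1 * Real.exp 1 := by rw [← Real.exp_add]; norm_num
    nlinarith
  calc _ ≤ Real.exp (Real.pi * v) * Real.exp (-(Real.pi * v / 2)) := by gcongr
    _ = _ := by rw [← Real.exp_add]; congr 1; ring

open Complex in
lemma lerchAux_core {C : ℝ} (hC : 0 < C) {a b : ℕ → ℂ} {w A B : ℂ} (hw : 2 ≤ w.re)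
    (him : 1 ≤ |w.im|)
    (hA : HasSum (fun n : ℕ => a n / (n : ℂ) ^ w) A) (ha : ∀ n, ‖a n‖ ≤ C) (ha1 : ‖a 1‖ = C)
    (hB : HasSum (fun n : ℕ => b n / (n : ℂ) ^ w) B) (hb : ∀ n, ‖b n‖ ≤ C) (hb1 : ‖b 1‖ = C) :
    exp (-Real.pi * I * w / 2) * A + exp (Real.pi * I * w / 2) * B ≠ 0 := by
  obtain ⟨hA1, hA2⟩ := lerchAux_bounds hw hA ha ha1
  obtain ⟨hB1, hB2⟩ := lerchAux_bounds hw hB hb hb1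
  have e1 : ‖exp (-Real.pi * I * w / 2)‖ = Real.exp (Real.pi * w.im / 2) := by
    rw [norm_exp]; simp
  have e2 : ‖exp (Real.pi * I * w / 2)‖ = Real.exp (-(Real.pi * w.im / 2)) := by
    rw [norm_exp]; simp [neg_div]
  rcases le_abs.mp him with h | h
  · refine lerchAux_ne hC (exp_ne_zero _) ?_ hA2 hB1
    rw [e1, e2]
    exact lerchAux_exp h
  · rw [add_comm]
    refine lerchAux_ne hC (exp_ne_zero _) ?_ hB2 hA1
    rw [e1, e2]
    have := lerchAux_exp h
    simpa [neg_div] using this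

lemma lerchAux_unique {F G : ℂ → ℂ} (hF : ∀ s : ℂ, s ≠ 1 → DifferentiableAt ℂ F s)
    (hG : ∀ s : ℂ, s ≠ 1 → DifferentiableAt ℂ G s) (h : ∀ s : ℂ, 1 < s.re → F s = G s)
    {s : ℂ} (hs : s ≠ 1) : F s = G s := by
  have hF' : AnalyticOnNhd ℂ F {1}ᶜ :=
    DifferentiableOn.analyticOnNhd (fun s hs => (hF s hs).differentiableWithinAt)
      isOpen_compl_singleton
  have hG' : AnalyticOnNhd ℂ G {1}ᶜ :=
    DifferentiableOn.analyticOnNhd (fun s hs => (hG s hs).differentiableWithinAt)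
      isOpen_compl_singleton
  exact hF'.eqOn_of_preconnected_of_eventuallyEq hG'
        (isConnected_compl_singleton_of_one_lt_rank (by simp) 1).isPreconnected
        (by norm_num : (2 : ℂ) ∈ _)
        (Filter.eventuallyEq_of_mem
          ((isOpen_lt continuous_const Complex.continuous_re).mem_nhds (by norm_num)) h) hs

lemma lerchAux_norm_exp (x : ℝ) (n : ℕ) :
    ‖Complex.exp (2 * Real.pi * Complex.I * x * n)‖ = 1 := by
  rw [Complex.norm_exp]; simp

lemma lerchAux_half {alp : ℝ} (halp0 : 0 < alp) (halp1 : alp ≤ 1) {s : ℂ} (hs : 1 < s.re) :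
    lerchSeries (1 / 2) alp s = (2 : ℂ) ^ (-s) *
      (HurwitzZeta.hurwitzZeta ((alp / 2 : ℝ) : UnitAddCircle) s -
        HurwitzZeta.hurwitzZeta ((alp / 2 + 1 / 2 : ℝ) : UnitAddCircle) s) := by
  have h1 := (HurwitzZeta.hasSum_hurwitzZeta_of_one_lt_re (a := alp / 2)
    ⟨by linarith, by linarith⟩ hs).mul_left ((2 : ℂ) ^ (-s))
  have h2 := (HurwitzZeta.hasSum_hurwitzZeta_of_one_lt_re (a := alp / 2 + 1 / 2)
    ⟨by linarith, by linarith⟩ hs).mul_left (-(2 : ℂ) ^ (-s))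
  have key : ∀ x : ℝ, 0 ≤ x →
      (2 : ℂ) ^ (-s) * (1 / (x : ℂ) ^ s) = 1 / ((2 * x : ℝ) : ℂ) ^ s := by
    intro x hx
    have := Complex.mul_cpow_ofReal_nonneg (a := 2) (b := x) (by norm_num) hx s
    push_cast at this ⊢
    rw [this, Complex.cpow_neg, one_div, one_div, mul_inv]
  have hE : ∀ k : ℕ, Complex.exp (2 * Real.pi * Complex.I * ((1 / 2 : ℝ) : ℂ) * k) = (-1) ^ k := by
    intro k
    rw [← Complex.exp_pi_mul_I, ← Complex.exp_nat_mul]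
    congr 1
    push_cast
    ring
  have h3 := HasSum.even_add_odd (f := fun m : ℕ =>
    Complex.exp (2 * Real.pi * Complex.I * ((1 / 2 : ℝ) : ℂ) * m) / ((m : ℂ) + alp) ^ s)
    (by
      refine h1.congr_fun fun k => ?_
      have := key (k + alp / 2) (by positivity)
      rw [hE]
      push_cast at this ⊢
      rw [this, pow_mul]
      ring_nf)
    (by
      refine h2.congr_fun fun k => ?_
      have := key (k + (alp / 2 + 1 / 2)) (by positivity)
      rw [hE]
      push_cast at this ⊢
      rw [neg_mul, this, pow_succ, pow_mul]
      ring_nf)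
  rw [lerchSeries, h3.tsum_eq]
  ring

open Complex HurwitzZeta in
/-- for `λ ∈ {1/2, 1}` the Lerch zeta-function has no zeros with
`σ < -1` and `|t| ≥ 1`. -/
theorem lerch_nonzero_left_halfplane (lam alp : ℝ) (hlam : lam = 1 / 2 ∨ lam = 1)
    (halp0 : 0 < alp) (halp1 : alp ≤ 1) (F : ℂ → ℂ) (hF : IsLerch lam alp F) :
    ∀ s : ℂ, s.re < -1 → 1 ≤ |s.im| → F s ≠ 0 := by
  intro s hs him
  obtain ⟨hd, hser⟩ := hF
  have hs1 : s ≠ 1 := by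
    rintro rfl
    norm_num at hs
  obtain ⟨w, rfl⟩ : ∃ w : ℂ, s = 1 - w := ⟨1 - s, by ring⟩
  have hw : 2 ≤ w.re := by
    simp at hs
    linarith
  have hw1 : 1 < w.re := by linarith
  have hwi : 1 ≤ |w.im| := by simpa using him
  have hwn : ∀ n : ℕ, w ≠ -n := by
    rintro n rfl
    simp at hw
    linarith [(Nat.cast_nonneg n : (0 : ℝ) ≤ n)]
  have hwne : w ≠ 1 := by
    rintro rfl
    norm_num at hw
  have hpre : (2 * (Real.pi : ℂ)) ^ (-w) * Gamma w ≠ 0 := by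
    refine mul_ne_zero ?_ (Gamma_ne_zero hwn)
    rw [Ne, cpow_eq_zero_iff]
    simp [Real.pi_ne_zero]
  have hexp : ∀ x : ℝ, HasSum (fun n : ℕ => exp (2 * Real.pi * I * ((-x : ℝ) : ℂ) * n) / n ^ w)
      (expZeta (-(x : UnitAddCircle)) w) := by
    intro x
    have := hasSum_expZeta_of_one_lt_re (-x) hw1
    simpa using this
  rcases hlam with rfl | rfl
  · have hFG := lerchAux_unique (G := fun s => (2 : ℂ) ^ (-s) *
      (hurwitzZeta ((alp / 2 : ℝ) : UnitAddCircle) s -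
        hurwitzZeta ((alp / 2 + 1 / 2 : ℝ) : UnitAddCircle) s)) hd
      (fun s hs => by
        refine DifferentiableAt.mul ?_ ?_
        · exact (differentiableAt_id.neg).const_cpow (Or.inl (by norm_num))
        · exact differentiable_hurwitzZeta_sub_hurwitzZeta _ _ s)
      (fun s hs => by rw [hser s hs, lerchAux_half halp0 halp1 hs]) hs1
    rw [hFG]
    refine mul_ne_zero (by rw [Ne, cpow_eq_zero_iff]; simp) ?_
    rw [hurwitzZeta_one_sub _ hwn (Or.inr hwne), hurwitzZeta_one_sub _ hwn (Or.inr hwne), ← mul_sub]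
    refine mul_ne_zero hpre ?_
    have hA := (hasSum_expZeta_of_one_lt_re (alp / 2) hw1).sub
      (hasSum_expZeta_of_one_lt_re (alp / 2 + 1 / 2) hw1)
    have hB := (hexp (alp / 2)).sub (hexp (alp / 2 + 1 / 2))
    simp only [← sub_div] at hA hB
    have hbd : ∀ (x y : ℝ) (n : ℕ), ‖exp (2 * Real.pi * I * x * n) - exp (2 * Real.pi * I * y * n)‖
        ≤ 2 := by
      intro x y n
      refine (norm_sub_le _ _).trans ?_
      rw [lerchAux_norm_exp, lerchAux_norm_exp]
      norm_num
    have h1 : ∀ x y : ℝ, exp (2 * Real.pi * I * y * (1 : ℕ)) = - exp (2 * Real.pi * I * x * (1 : ℕ)) →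
        ‖exp (2 * Real.pi * I * x * (1 : ℕ)) - exp (2 * Real.pi * I * y * (1 : ℕ))‖ = 2 := by
      intro x y h
      rw [h, sub_neg_eq_add, ← two_mul, norm_mul, lerchAux_norm_exp]
      norm_num
    have := lerchAux_core (C := 2) (by norm_num) hw hwi hA (hbd _ _)
      (h1 _ _ (by
        rw [← neg_one_mul, ← exp_pi_mul_I, ← exp_add]
        congr 1
        push_cast
        ring))
      hB (hbd _ _)
      (h1 _ _ (by
        rw [← mul_neg_one (exp _), ← exp_neg_pi_mul_I, ← exp_add]
        congr 1
        push_cast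
        ring))
    convert this using 1
    ring
  · have hFG := lerchAux_unique (G := hurwitzZeta (alp : UnitAddCircle)) hd
      (fun s hs => differentiableAt_hurwitzZeta _ hs)
      (fun s hs => by
        rw [hser s hs, lerchSeries,
          ← (hasSum_hurwitzZeta_of_one_lt_re ⟨halp0.le, halp1⟩ hs).tsum_eq]
        refine tsum_congr fun m => ?_
        congr 1
        rw [exp_eq_one_iff]
        exact ⟨m, by push_cast; ring⟩) hs1
    rw [hFG, hurwitzZeta_one_sub _ hwn (Or.inr hwne)]
    exact mul_ne_zero hpre (lerchAux_core (C := 1) one_pos hw hwi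
      (hasSum_expZeta_of_one_lt_re alp hw1) (fun n => (lerchAux_norm_exp _ n).le)
      (lerchAux_norm_exp _ 1) (hexp alp) (fun n => (lerchAux_norm_exp _ n).le)
      (lerchAux_norm_exp _ 1))
end
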